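/- arXiv:2307.05859 — 4 statements merged into one kernel-verified Lean document; each statement's English description precedes it below -/
import Mathlib

section
/- Let B be a k-domain with an effective Z^n-grading for some integer n ≥ 1. Then there exist nonzero homogeneous elements f_1,…,f_n ∈ B and elements w_1,…,w_n in the localization S^{−1}B, where S ⊆ B is the multiplicatively closed set generated by f_1,…,f_n, such that S^{−1}B = (S^{−1}B)_0[w_1, w_1^{−1},…, w_n, w_n^{−1}] is isomorphic to the Laurent polynomial ring in n variables over the degree-zero part (S^{−1}B)_0. -/
open AddMonoidAlgebra in
/-- The coaction of a graded algebra, with coefficients pushed to `L`. -/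
noncomputable def coactLL {k B L ι : Type*} [Field k] [CommRing B] [Algebra k B] [CommRing L]
    [Algebra k L] [AddCommGroup ι] [DecidableEq ι]
    (𝒜 : ι → Submodule k B) [GradedAlgebra 𝒜] (j : B →ₐ[k] L) :
    B →ₐ[k] AddMonoidAlgebra L ι :=
  (DirectSum.toAlgebra k (fun i => 𝒜 i)
    (fun g => ((AddMonoidAlgebra.lsingle (R := k) g).comp j.toLinearMap).comp (𝒜 g).subtype)
    (by simp [AddMonoidAlgebra.one_def])
    (by intro i l a b; simp [AddMonoidAlgebra.single_mul_single])).comp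
  (DirectSum.decomposeAlgEquiv 𝒜).toAlgHom

lemma coactLL_of_mem {k B L ι : Type*} [Field k] [CommRing B] [Algebra k B] [CommRing L]
    [Algebra k L] [AddCommGroup ι] [DecidableEq ι]
    (𝒜 : ι → Submodule k B) [GradedAlgebra 𝒜] (j : B →ₐ[k] L) {g : ι} {b : B} (hb : b ∈ 𝒜 g) :
    coactLL 𝒜 j b = AddMonoidAlgebra.single g (j b) := by
  simp only [coactLL, AlgHom.comp_apply]
  change DirectSum.toAlgebra k (fun i => 𝒜 i) _ _ _ (DirectSum.decompose 𝒜 b) = _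
  rw [DirectSum.decompose_of_mem 𝒜 hb]
  rw [DirectSum.toAlgebra_apply]
  exact DirectSum.toSemiring_of _ _ _ _ _

lemma coactLL_apply {k B L ι : Type*} [Field k] [CommRing B] [Algebra k B] [CommRing L]
    [Algebra k L] [AddCommGroup ι] [DecidableEq ι]
    (𝒜 : ι → Submodule k B) [GradedAlgebra 𝒜] (j : B →ₐ[k] L) (g : ι) (b : B) :
    (coactLL 𝒜 j b).coeff g = j (DirectSum.decompose 𝒜 b g) := by
  induction b using DirectSum.Decomposition.inductionOn 𝒜 with
  | zero => simp
  | @homogeneous i m =>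
    rw [coactLL_of_mem 𝒜 j m.2]
    by_cases h : i = g
    · subst h; simp
    · rw [DirectSum.decompose_coe, DirectSum.of_eq_of_ne _ _ _ (Ne.symm h)]
      simp [Finsupp.single_apply, h]
  | add a b ha hb => simp [ha, hb]

lemma exists_diff_LL {k B ι : Type*} [Field k] [CommRing B] [IsDomain B] [Algebra k B]
    [AddCommGroup ι] [DecidableEq ι]
    (𝒜 : ι → Submodule k B) [GradedAlgebra 𝒜]
    (heff : AddSubgroup.closure {g : ι | 𝒜 g ≠ ⊥} = ⊤) (g : ι) :
    ∃ (a b : ι) (x y : B), x ∈ 𝒜 a ∧ y ∈ 𝒜 b ∧ x ≠ 0 ∧ y ≠ 0 ∧ g = a - b := by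
  have hg : g ∈ AddSubgroup.closure {g : ι | 𝒜 g ≠ ⊥} := by rw [heff]; trivial
  induction hg using AddSubgroup.closure_induction with
  | mem g hg =>
    obtain ⟨x, hx, hx0⟩ := (Submodule.ne_bot_iff _).1 hg
    exact ⟨g, 0, x, 1, hx, SetLike.GradedOne.one_mem, hx0, one_ne_zero, by simp⟩
  | zero => exact ⟨0, 0, 1, 1, SetLike.GradedOne.one_mem, SetLike.GradedOne.one_mem,
      one_ne_zero, one_ne_zero, by simp⟩
  | add g h _ _ ih1 ih2 =>
    obtain ⟨a, b, x, y, hx, hy, hx0, hy0, rfl⟩ := ih1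
    obtain ⟨a', b', x', y', hx', hy', hx0', hy0', rfl⟩ := ih2
    exact ⟨a + a', b + b', x * x', y * y', SetLike.GradedMul.mul_mem hx hx',
      SetLike.GradedMul.mul_mem hy hy', mul_ne_zero hx0 hx0', mul_ne_zero hy0 hy0', by abel⟩
  | neg g _ ih =>
    obtain ⟨a, b, x, y, hx, hy, hx0, hy0, rfl⟩ := ih
    exact ⟨b, a, y, x, hy, hx, hy0, hx0, by abel⟩

lemma main_LL {k B : Type*} [Field k] [CommRing B] [IsDomain B] [Algebra k B] {n : ℕ}
    (𝒜 : (Fin n → ℤ) → Submodule k B) [GradedAlgebra 𝒜] (S : Submonoid B)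
    (hS0 : (0 : B) ∉ S) (hS : ∀ v ∈ S, ∃ d, v ∈ 𝒜 d)
    (w : Fin n → (Localization S)ˣ)
    (hw : ∀ i, ∃ (g : Fin n → ℤ) (u v : B) (hv : v ∈ S), u ∈ 𝒜 (g + Pi.single i 1) ∧ v ∈ 𝒜 g ∧
      (w i : Localization S) = Localization.mk u ⟨v, hv⟩) :
    ∃ (R₀ : Subalgebra k (Localization S))
        (e : Localization S ≃ₐ[k] AddMonoidAlgebra R₀ (Fin n → ℤ)),
        (R₀ : Set (Localization S)) =
          {x | ∃ (g : Fin n → ℤ) (u v : B) (hv : v ∈ S),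
            u ∈ 𝒜 g ∧ v ∈ 𝒜 g ∧ x = Localization.mk u ⟨v, hv⟩} ∧
        (∀ x : R₀, e (x : Localization S) = AddMonoidAlgebra.single 0 x) ∧
        (∀ i : Fin n, e ((w i : Localization S)) =
          AddMonoidAlgebra.single (Pi.single i 1) 1) := by
  let L := Localization S
  let j : B →ₐ[k] L := IsScalarTower.toAlgHom k B L
  have hj : Function.Injective j := IsLocalization.injective L (M := S)
    (fun x hx => mem_nonZeroDivisors_of_ne_zero (fun h => hS0 (h ▸ hx)))
  have hunit : ∀ v ∈ S, IsUnit (j v) := fun v hv => IsLocalization.map_units L (⟨v, hv⟩ : S)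
  have hmk : ∀ (u v : B) (hv : v ∈ S), (Localization.mk u ⟨v, hv⟩ : L) * j v = j u := by
    intro u v hv
    rw [Localization.mk_eq_mk']
    exact IsLocalization.mk'_spec L u ⟨v, hv⟩
  have hsu : ∀ (g : Fin n → ℤ) (x : L), IsUnit x →
      IsUnit (AddMonoidAlgebra.single g x : AddMonoidAlgebra L (Fin n → ℤ)) := by
    rintro g _ ⟨x, rfl⟩
    refine IsUnit.of_mul_eq_one (AddMonoidAlgebra.single (-g) (↑x⁻¹ : L)) ?_
    simp [AddMonoidAlgebra.single_mul_single, AddMonoidAlgebra.one_def]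
  let Φ : L →ₐ[k] AddMonoidAlgebra L (Fin n → ℤ) :=
    IsLocalization.liftAlgHom (M := S) (f := coactLL 𝒜 j) (by
      rintro ⟨v, hv⟩
      obtain ⟨d, hd⟩ := hS v hv
      rw [coactLL_of_mem 𝒜 j hd]
      exact hsu d _ (hunit v hv))
  have hΦj : ∀ b, Φ (j b) = coactLL 𝒜 j b := fun b => IsLocalization.lift_eq _ b
  -- homogeneous fractions
  have hΦmk : ∀ (g d : Fin n → ℤ) (u v : B) (hv : v ∈ S), u ∈ 𝒜 (d + g) → v ∈ 𝒜 d →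
      Φ (Localization.mk u ⟨v, hv⟩) = AddMonoidAlgebra.single g (Localization.mk u ⟨v, hv⟩) := by
    intro g d u v hv hu hvd
    have h1 := congrArg Φ (hmk u v hv)
    rw [map_mul, hΦj, hΦj, coactLL_of_mem 𝒜 j hvd, coactLL_of_mem 𝒜 j hu] at h1
    apply (hsu d _ (hunit v hv)).mul_right_cancel
    rw [h1, AddMonoidAlgebra.single_mul_single, hmk, add_comm]
  let R₀ : Subalgebra k L := AlgHom.equalizer Φ (AddMonoidAlgebra.singleZeroAlgHom (R := k) (A := L) (M := Fin n → ℤ))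
  have hR : ∀ x, x ∈ R₀ ↔ Φ x = AddMonoidAlgebra.single 0 x := fun x => Iff.rfl
  let W : Multiplicative (Fin n → ℤ) →* Lˣ :=
    { toFun := fun g => ∏ i, w i ^ (g.toAdd i)
      map_one' := by simp
      map_mul' := by intro a b; simp [zpow_add, Finset.prod_mul_distrib] }
  have hW1 : ∀ i, W (Multiplicative.ofAdd (Pi.single i 1)) = w i := by
    intro i
    change ∏ l, w l ^ ((Pi.single i 1 : Fin n → ℤ) l) = w i
    rw [Finset.prod_eq_single i] <;> simp +contextual [Pi.single_apply]
  have hΦw : ∀ i, Φ (w i : L) = AddMonoidAlgebra.single (Pi.single i 1) (w i : L) := by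
    intro i
    obtain ⟨g, u, v, hv, hu, hvg, h⟩ := hw i
    rw [h]
    exact hΦmk _ g u v hv hu hvg
  have hΦW : ∀ g : Fin n → ℤ, Φ (W (Multiplicative.ofAdd g) : L) =
      AddMonoidAlgebra.single g (W (Multiplicative.ofAdd g) : L) := by
    let K : AddSubgroup (Fin n → ℤ) :=
      { carrier := {g | Φ (W (Multiplicative.ofAdd g) : L) =
          AddMonoidAlgebra.single g (W (Multiplicative.ofAdd g) : L)}
        zero_mem' := by simp [AddMonoidAlgebra.one_def]
        add_mem' := by
          intro a b ha hb
          simp only [Set.mem_ofPred_eq] at *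
          rw [ofAdd_add, map_mul, Units.val_mul, map_mul, ha, hb,
            AddMonoidAlgebra.single_mul_single]
        neg_mem' := by
          intro a ha
          simp only [Set.mem_ofPred_eq] at *
          apply (hsu a _ (W (Multiplicative.ofAdd a)).isUnit).mul_right_cancel
          rw [← ha, ← map_mul, ha, AddMonoidAlgebra.single_mul_single, ← Units.val_mul, ← map_mul,
            ← ofAdd_add]
          simp [AddMonoidAlgebra.one_def] }
    intro g
    change g ∈ K
    rw [← Finset.univ_sum_single g]
    refine sum_mem fun i _ => ?_
    have : (Pi.single i (g i) : Fin n → ℤ) = g i • Pi.single i 1 := by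
      rw [← Pi.single_smul]; simp
    rw [this]
    refine K.zsmul_mem ?_ _
    change Φ (W (Multiplicative.ofAdd _) : L) = AddMonoidAlgebra.single _ (W (Multiplicative.ofAdd _) : L)
    rw [hW1, hΦw]
  let θ : AddMonoidAlgebra R₀ (Fin n → ℤ) →ₐ[R₀] L :=
    AddMonoidAlgebra.lift R₀ L (Fin n → ℤ) ((Units.coeHom L).comp W)
  have hθs : ∀ (g : Fin n → ℤ) (r : R₀), θ (AddMonoidAlgebra.single g r) =
      (r : L) * (W (Multiplicative.ofAdd g) : L) := by
    intro g r
    simp [θ, AddMonoidAlgebra.lift_single, Algebra.smul_def]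
  have hΦθ : ∀ p g, (Φ (θ p)).coeff g = (p.coeff g : L) * (W (Multiplicative.ofAdd g) : L) := by
    intro p g
    induction p using AddMonoidAlgebra.induction_linear with
    | zero => simp
    | add p q hp hq => simp [hp, hq, add_mul]
    | single a r =>
      rw [hθs, map_mul, (hR r).1 r.2, hΦW, AddMonoidAlgebra.single_mul_single, zero_add]
      by_cases h : a = g
      · subst h; simp
      · simp [Finsupp.single_apply, h]
  have hinj : Function.Injective θ := by
    rw [injective_iff_map_eq_zero]
    intro p hp
    ext g
    have := hΦθ p g
    rw [hp] at this
    have h0 : (p.coeff g : L) * (W (Multiplicative.ofAdd g) : L) = 0 := by rw [← this]; simp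
    rw [Units.mul_left_eq_zero] at h0
    simpa using h0
  have hsurj : Function.Surjective θ := by
    intro x
    induction x using Localization.induction_on with
    | H y =>
    obtain ⟨b, v, hv⟩ := y
    obtain ⟨d, hd⟩ := hS v hv
    change _ ∈ θ.range
    induction b using DirectSum.Decomposition.inductionOn 𝒜 with
    | zero => rw [Localization.mk_zero]; exact zero_mem _
    | add a b ha hb =>
      have := add_mem ha hb
      change (Localization.mk a ⟨v, hv⟩ + Localization.mk b ⟨v, hv⟩ : L) ∈ _ at this
      rwa [Localization.add_mk_self] at this
    | @homogeneous i m =>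
      have h1 := hΦmk (i - d) d m v hv (by simp) hd
      let r : L := Localization.mk (m : B) ⟨v, hv⟩ * (W (Multiplicative.ofAdd (-(i - d))) : L)
      have hr : r ∈ R₀ := by
        rw [hR]
        simp only [r]
        rw [map_mul, h1, hΦW, AddMonoidAlgebra.single_mul_single, add_neg_cancel]
      refine ⟨AddMonoidAlgebra.single (i - d) ⟨r, hr⟩, ?_⟩
      refine (hθs _ _).trans ?_
      simp only [r]
      rw [mul_assoc, ← Units.val_mul, ← map_mul, ← ofAdd_add]
      simp
  let E : AddMonoidAlgebra R₀ (Fin n → ℤ) ≃ₐ[k] L :=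
    AlgEquiv.ofBijective (θ.restrictScalars k) ⟨hinj, hsurj⟩
  have hE : ∀ p, E p = θ p := fun p => rfl
  refine ⟨R₀, E.symm, ?_, ?_, ?_⟩
  · ext x
    constructor
    · intro hx
      have hx := (hR x).1 hx
      induction x using Localization.induction_on with
      | H y =>
      obtain ⟨b, v, hv⟩ := y
      obtain ⟨d, hd⟩ := hS v hv
      refine ⟨d, b, v, hv, ?_, hd, rfl⟩
      have h1 := congrArg Φ (hmk b v hv)
      rw [map_mul, hΦj, hΦj, coactLL_of_mem 𝒜 j hd, hx, AddMonoidAlgebra.single_mul_single,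
        hmk, zero_add] at h1
      have h2 := congrArg (fun p => p.coeff d) h1
      simp only [coactLL_apply] at h2
      have h3 : b = DirectSum.decompose 𝒜 b d := hj (by simpa using h2)
      rw [h3]
      exact SetLike.coe_mem _
    · rintro ⟨g, u, v, hv, hu, hvg, rfl⟩
      exact hΦmk 0 g u v hv (by simpa using hu) hvg
  · intro x
    rw [AlgEquiv.symm_apply_eq, hE, hθs]
    simp
  · intro i
    rw [AlgEquiv.symm_apply_eq, hE, hθs, hW1]
    simp

/-- If the `k`-domain `B` has an effective `ℤⁿ`-grading (`n ≥ 1`), then there are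
nonzero homogeneous `f_1, …, f_n` such that, with `S` the multiplicative set they generate,
`S⁻¹B` is the Laurent polynomial ring over its degree-zero part `(S⁻¹B)₀` in suitable
homogeneous units `w_1, …, w_n`. -/
theorem localization_laurent_of_effective_grading
    (k B : Type*) [Field k] [CommRing B] [IsDomain B] [Algebra k B]
    (n : ℕ) (hn : 1 ≤ n)
    (𝒜 : (Fin n → ℤ) → Submodule k B) [GradedAlgebra 𝒜]
    (heff : AddSubgroup.closure {g : Fin n → ℤ | 𝒜 g ≠ ⊥} = ⊤) :
    ∃ f : Fin n → B, (∀ i, f i ≠ 0) ∧ (∀ i, ∃ g : Fin n → ℤ, f i ∈ 𝒜 g) ∧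
      ∃ (R₀ : Subalgebra k (Localization (Submonoid.closure (Set.range f))))
        (w : Fin n → (Localization (Submonoid.closure (Set.range f)))ˣ)
        (e : Localization (Submonoid.closure (Set.range f)) ≃ₐ[k]
              AddMonoidAlgebra R₀ (Fin n → ℤ)),
        -- `R₀` is the degree-zero part of `S⁻¹B`
        (R₀ : Set (Localization (Submonoid.closure (Set.range f)))) =
          {x | ∃ (g : Fin n → ℤ) (u v : B) (hv : v ∈ Submonoid.closure (Set.range f)),
            u ∈ 𝒜 g ∧ v ∈ 𝒜 g ∧ x = Localization.mk u ⟨v, hv⟩} ∧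
        -- the isomorphism identifies `S⁻¹B` with `R₀[w_1, w_1⁻¹, …, w_n, w_n⁻¹]`
        (∀ x : R₀, e (x : Localization (Submonoid.closure (Set.range f))) =
          AddMonoidAlgebra.single 0 x) ∧
        (∀ i : Fin n, e ((w i : Localization (Submonoid.closure (Set.range f)))) =
          AddMonoidAlgebra.single (Pi.single i 1) 1) := by
  choose a b x y hx hy hx0 hy0 hab using
    fun i : Fin n => exists_diff_LL 𝒜 heff (Pi.single i 1)
  refine ⟨fun i => x i * y i, fun i => mul_ne_zero (hx0 i) (hy0 i),
    fun i => ⟨a i + b i, SetLike.GradedMul.mul_mem (hx i) (hy i)⟩, ?_⟩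
  set S := Submonoid.closure (Set.range fun i => x i * y i) with hSdef
  have hmem : ∀ i, x i * y i ∈ S := fun i => Submonoid.subset_closure ⟨i, rfl⟩
  have hS0 : (0 : B) ∉ S := by
    have : S ≤ nonZeroDivisors B := by
      rw [hSdef, Submonoid.closure_le]
      rintro _ ⟨i, rfl⟩
      exact mem_nonZeroDivisors_of_ne_zero (mul_ne_zero (hx0 i) (hy0 i))
    exact fun h => nonZeroDivisors.ne_zero (this h) rfl
  have hS : ∀ v ∈ S, ∃ d, v ∈ 𝒜 d := by
    intro v hv
    induction hv using Submonoid.closure_induction with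
    | mem v hv =>
      obtain ⟨i, rfl⟩ := hv
      exact ⟨a i + b i, SetLike.GradedMul.mul_mem (hx i) (hy i)⟩
    | one => exact ⟨0, SetLike.GradedOne.one_mem⟩
    | mul u v _ _ h1 h2 =>
      obtain ⟨d, hd⟩ := h1
      obtain ⟨d', hd'⟩ := h2
      exact ⟨d + d', SetLike.GradedMul.mul_mem hd hd'⟩
  have hmm : ∀ i, (Localization.mk (x i * x i) ⟨_, hmem i⟩ : Localization S) *
      Localization.mk (y i * y i) ⟨_, hmem i⟩ = 1 := by
    intro i
    rw [Localization.mk_mul, ← Localization.mk_self (⟨_, hmem i⟩ * ⟨_, hmem i⟩ : S)]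
    congr 1
    simp only [Submonoid.coe_mul]
    ring
  let w : Fin n → (Localization S)ˣ := fun i =>
    ⟨Localization.mk (x i * x i) ⟨_, hmem i⟩, Localization.mk (y i * y i) ⟨_, hmem i⟩,
      hmm i, by rw [mul_comm]; exact hmm i⟩
  obtain ⟨R₀, e, h1, h2, h3⟩ := main_LL 𝒜 S hS0 hS w (fun i =>
    ⟨a i + b i, x i * x i, x i * y i, hmem i, by
      have : a i + b i + Pi.single i 1 = a i + a i := by rw [hab i]; abel
      rw [this]
      exact SetLike.GradedMul.mul_mem (hx i) (hx i), SetLike.GradedMul.mul_mem (hx i) (hy i), rfl⟩)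
  exact ⟨R₀, w, e, h1, h2, h3⟩
end

section
/- Assume k is algebraically closed. Let B be an affine unique factorization domain of dimension d ≥ 1 over k with an effective Z^{d−1}-grading. Then B is rational over k, i.e., frac(B) ≅_k k(x_1,…,x_d). -/
open MvPolynomial in
open scoped IntermediateField.algebraAdjoinAdjoin in
lemma aux_li {F k ι κ : Type*} [Field F] [Field k] [Algebra F k] {b : ι → k}
    (hb : AlgebraicIndependent F b) (e : κ → algebraicClosure F k) (he : LinearIndependent F e) :
    LinearIndependent (IntermediateField.adjoin F (Set.range b)) (fun i => (e i : k)) := by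
  rw [← LinearIndependent.iff_fractionRing (Algebra.adjoin F (Set.range b))
    (IntermediateField.adjoin F (Set.range b))]
  rw [linearIndependent_iff']
  intro s g hg i hi
  have hE := hb.algebraicClosure
  have h1 : ∀ i, ∃ q : MvPolynomial ι F, aeval b q = (g i : k) := by
    intro i
    have h0 := (Algebra.adjoin_range_eq_range_aeval F b).le (g i).2
    exact h0
  choose q hq using h1
  have h2 : aeval b (∑ i ∈ s, C (e i) * MvPolynomial.map (algebraMap F (algebraicClosure F k)) (q i)) = 0 := by
    rw [map_sum, ← hg]
    refine Finset.sum_congr rfl fun j _ => ?_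
    rw [map_mul, aeval_map_algebraMap, hq, aeval_C, mul_comm]
    rfl
  have h3 : (∑ i ∈ s, C (e i) * MvPolynomial.map (algebraMap F (algebraicClosure F k)) (q i)) = 0 :=
    hE (by rw [h2, map_zero])
  have h4 : q i = 0 := by
    ext m
    have := congrArg (coeff m) h3
    rw [coeff_sum] at this
    simp only [coeff_C_mul, coeff_map, coeff_zero] at this
    refine linearIndependent_iff'.1 he s (fun j => coeff m (q j)) ?_ i hi
    rw [← this]
    refine Finset.sum_congr rfl fun j _ => ?_
    rw [Algebra.smul_def, mul_comm]
  apply Subtype.ext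
  rw [← hq, h4]; simp

lemma aux_aut {F k : Type*} [Field F] [PerfectField F] [Field k] [IsAlgClosed k] [Algebra F k]
    (hinf : ¬ FiniteDimensional F (algebraicClosure F k)) (T : Set k) (hT : T.Finite) :
    ∃ σ : k ≃+* k, (∀ t ∈ T, σ t = t) ∧ ∃ a, σ a ≠ a := by
  by_contra! hcon
  obtain ⟨s, hs⟩ := exists_isTranscendenceBasis' F k
  obtain ⟨b, hs⟩ := hs
  set L := IntermediateField.adjoin F (Set.range b)
  have halg : Algebra.IsAlgebraic L k := hs.isAlgebraic_field
  let M := IntermediateField.adjoin L T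
  have : FiniteDimensional L M := by
    have := hT.to_subtype
    exact IntermediateField.finiteDimensional_adjoin (fun x _ => (halg.isAlgebraic x).isIntegral)
  have hE : ∀ α : algebraicClosure F k, (α : k) ∈ M := by
    intro α
    have hsep : IsSeparable F (α : k) := by
      exact (Algebra.IsSeparable.isSeparable F α).map (f := (algebraicClosure F k).val) (algebraicClosure F k).val.injective
    have hsep' : IsSeparable M (α : k) :=
      IsSeparable.tower_top M (IsSeparable.tower_top L hsep)
    by_contra hα
    have hMalg : Algebra.IsAlgebraic M k := Algebra.IsAlgebraic.tower_top (K := L) M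
    have : Normal M k := by
      rw [normal_iff]
      exact fun x => ⟨(hMalg.isAlgebraic x).isIntegral, IsAlgClosed.splits _⟩
    obtain ⟨β, hne, hβ⟩ := (notMem_iff_exists_ne_and_isConjRoot (K := M) (x := (α : k)) hsep'
      (this.splits _)).1 (by
        rintro hx
        apply hα
        obtain ⟨y, hy⟩ := hx
        rw [← hy]
        exact y.2)
    obtain ⟨σ, hσ⟩ := hβ.exists_algEquiv
    have := hcon σ.toRingEquiv (fun t ht => σ.commutes ⟨t, IntermediateField.subset_adjoin _ _ ht⟩)
    have h1 : ∀ a, σ a = a := this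
    exact hne (by rw [h1] at hσ; simp [hσ])
  apply hinf
  let bE := Module.Basis.ofVectorSpace F (algebraicClosure F k)
  have hli := aux_li hs.1 bE bE.linearIndependent
  let m : _ → M := fun i => ⟨bE i, hE _⟩
  have hli2 : LinearIndependent L m := by
    apply LinearIndependent.of_comp M.val.toLinearMap
    exact hli
  have := hli2.finite
  exact Module.Finite.of_basis bE

lemma aux_ac (F k : Type*) [Field F] [Field k] [IsAlgClosed k] [Algebra F k] :
    IsAlgClosed (algebraicClosure F k) := IsAlgClosure.isAlgClosed F

lemma aux_inf {k : Type*} [Field k] [IsAlgClosed k] (T : Set k) (hT : T.Finite) :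
    ∃ σ : k ≃+* k, (∀ t ∈ T, σ t = t) ∧ ∃ a, σ a ≠ a := by
  obtain ⟨p, hp⟩ := CharP.exists k
  rcases CharP.char_is_prime_or_zero k p with hp' | rfl
  · have := Fact.mk hp'
    let := ZMod.algebra k p
    refine aux_aut (F := ZMod p) ?_ T hT
    intro h
    have : Finite (algebraicClosure (ZMod p) k) := Module.finite_of_finite (ZMod p)
    have : IsAlgClosed (algebraicClosure (ZMod p) k) := aux_ac _ _
    exact not_finite (algebraicClosure (ZMod p) k)
  · have := CharP.charP_to_charZero k
    refine aux_aut (F := ℚ) ?_ T hT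
    intro h
    have : IsAlgClosed (algebraicClosure ℚ k) := aux_ac _ _
    obtain ⟨q, hq, hqp⟩ := Nat.exists_infinite_primes (Module.finrank ℚ (algebraicClosure ℚ k) + 2)
    have hirr := Polynomial.cyclotomic.irreducible_rat hqp.pos
    obtain ⟨z, hz⟩ := IsAlgClosed.exists_aeval_eq_zero (algebraicClosure ℚ k) (Polynomial.cyclotomic q ℚ)
      (Polynomial.degree_cyclotomic_pos q ℚ hqp.pos).ne'
    have h1 := minpoly.eq_of_irreducible_of_monic hirr hz (Polynomial.cyclotomic.monic q ℚ)
    have h2 := minpoly.natDegree_le (A := ℚ) z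
    rw [← h1, Polynomial.natDegree_cyclotomic, Nat.totient_prime hqp] at h2
    omega

lemma aux_infinite {k : Type*} [Field k] [IsAlgClosed k] (T : Set k) (hT : T.Finite) :
    {σ : k ≃+* k | ∀ t ∈ T, σ t = t}.Infinite := by
  intro hfin
  classical
  let pick : (k ≃+* k) → k := fun σ => if h : ∃ a, σ a ≠ a then h.choose else 0
  obtain ⟨σ, h1, h2⟩ := aux_inf (T ∪ pick '' {σ : k ≃+* k | ∀ t ∈ T, σ t = t})
    (hT.union (hfin.image _))
  have h3 : σ (pick σ) = pick σ := h1 _ (Or.inr ⟨σ, fun t ht => h1 t (Or.inl ht), rfl⟩)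
  have h4 : pick σ = h2.choose := dif_pos h2
  rw [h4] at h3
  exact h2.choose_spec h3


section
variable {k K : Type*} [Field k] [Field K] [Algebra k K] {x : K}

/-- valuation subrings over k not containing x -/
structure IsInfPlace (k : Type*) {K : Type*} [Field k] [Field K] [Algebra k K] (x : K)
    (V : ValuationSubring K) : Prop where
  h1 : ∀ c : k, algebraMap k K c ∈ V
  h2 : x ∉ V

lemma sum_ne_of_dom {ι : Type*} (V : ValuationSubring K) (s : Finset ι) (a : ι → K) (m : ι) (hm : m ∈ s)
    (h0 : a m ≠ 0)
    (h : ∀ i ∈ s, i ≠ m → V.valuation (a i) < V.valuation (a m)) : ∑ i ∈ s, a i ≠ 0 := by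
  classical
  intro hs
  rw [← Finset.add_sum_erase _ _ hm] at hs
  have h2 : V.valuation (∑ i ∈ s.erase m, a i) < V.valuation (a m) := by
    apply Valuation.map_sum_lt
    · simpa using h0
    · intro i hi
      rw [Finset.mem_erase] at hi
      exact h i hi.2 hi.1
  rw [eq_neg_of_add_eq_zero_right hs, Valuation.map_neg] at h2
  exact lt_irrefl _ h2

lemma IsInfPlace.one_lt {V : ValuationSubring K} (hV : IsInfPlace k x V) : 1 < V.valuation x := by
  rw [← not_le, V.valuation_le_one_iff]; exact hV.h2

lemma IsInfPlace.const {V : ValuationSubring K} (hV : IsInfPlace k x V) {c : k} (hc : c ≠ 0) :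
    V.valuation (algebraMap k K c) = 1 := by
  apply le_antisymm
  · rw [V.valuation_le_one_iff]; exact hV.h1 c
  · have := (V.valuation_le_one_iff _).2 (hV.h1 c⁻¹)
    rw [map_inv₀, map_inv₀] at this
    have h0 : algebraMap k K c ≠ 0 := by simpa using hc
    have h0' : 0 < V.valuation (algebraMap k K c) := by
      rw [zero_lt_iff]; simpa using h0
    exact (inv_le_one₀ h0').1 this

open Polynomial in
lemma IsInfPlace.poly {V : ValuationSubring K} (hV : IsInfPlace k x V) {q : k[X]} (hq : q ≠ 0) :
    V.valuation (aeval x q) = V.valuation x ^ q.natDegree := by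
  have h1 := hV.one_lt
  rw [aeval_eq_sum_range, Finset.sum_range_succ]
  have hlead : V.valuation (q.coeff q.natDegree • x ^ q.natDegree) = V.valuation x ^ q.natDegree := by
    rw [Algebra.smul_def, map_mul, hV.const (by simpa using hq), one_mul, map_pow]
  rw [Valuation.map_add_eq_of_lt_right, hlead]
  rw [hlead]
  apply Valuation.map_sum_lt
  · exact pow_ne_zero _ (zero_lt_one.trans h1).ne'
  · intro i hi
    rw [Finset.mem_range] at hi
    rw [Algebra.smul_def, map_mul, map_pow]
    have h2 : V.valuation (algebraMap k K (q.coeff i)) ≤ 1 := (V.valuation_le_one_iff _).2 (hV.h1 _)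
    calc _ ≤ 1 * V.valuation x ^ i := by gcongr
      _ < _ := by rw [one_mul]; exact pow_lt_pow_right₀ h1 hi

lemma IsInfPlace.rat {l : K} (hl : l ∈ IntermediateField.adjoin k {x}) (h0 : l ≠ 0) :
    ∃ j : ℤ, ∀ V, IsInfPlace k x V → V.valuation l = V.valuation x ^ j := by
  rw [IntermediateField.mem_adjoin_simple_iff] at hl
  obtain ⟨r, s, rfl⟩ := hl
  have hr : r ≠ 0 := by rintro rfl; simp at h0
  have hs : s ≠ 0 := by rintro rfl; simp at h0
  refine ⟨r.natDegree - s.natDegree, fun V hV => ?_⟩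
  have := hV.one_lt
  rw [map_div₀, hV.poly hr, hV.poly hs, zpow_sub₀ (zero_lt_one.trans this).ne']
  simp

lemma IsInfPlace.arch [Algebra.IsAlgebraic (IntermediateField.adjoin k {x}) K]
    {V : ValuationSubring K} (hV : IsInfPlace k x V) {g : K} (hg : g ≠ 0) :
    ∃ e : ℕ, 0 < e ∧ ∃ j : ℤ, V.valuation g ^ e = V.valuation x ^ j := by
  obtain ⟨q, hq0, hq⟩ := Algebra.IsAlgebraic.isAlgebraic (R := IntermediateField.adjoin k {x}) g
  have hvx := hV.one_lt
  have hvx0 := (zero_lt_one.trans hvx).ne'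
  have hvg : V.valuation g ≠ 0 := by simpa using hg
  by_contra! hcon
  -- all terms have distinct valuations
  have hinj : ∀ i ∈ q.support, ∀ l ∈ q.support, i < l →
      V.valuation (algebraMap _ K (q.coeff i) * g ^ i) ≠ V.valuation (algebraMap _ K (q.coeff l) * g ^ l) := by
    intro i hi l hl hil heq
    obtain ⟨a, ha⟩ := IsInfPlace.rat (k := k) (x := x) (q.coeff i).2 (by simpa using hi)
    obtain ⟨b, hb⟩ := IsInfPlace.rat (k := k) (x := x) (q.coeff l).2 (by simpa using hl)
    rw [map_mul, map_mul, map_pow, map_pow] at heq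
    change V.valuation (q.coeff i : K) * _ = V.valuation (q.coeff l : K) * _ at heq
    rw [ha V hV, hb V hV] at heq
    refine hcon (l - i) (by omega) (a - b) ?_
    rw [zpow_sub₀ hvx0, eq_div_iff (zpow_ne_zero _ hvx0)]
    have : V.valuation g ^ l = V.valuation g ^ (l - i) * V.valuation g ^ i := by
      rw [← pow_add]; congr 1; omega
    rw [this, mul_comm] at heq
    have h5 : V.valuation g ^ i * (V.valuation g ^ (l - i) * V.valuation x ^ b) =
      V.valuation g ^ i * V.valuation x ^ a := by rw [heq]; ac_rfl
    exact mul_left_cancel₀ (pow_ne_zero _ hvg) h5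
  have hne : q.support.Nonempty := by simpa using hq0
  obtain ⟨m, hm, hmax⟩ := q.support.exists_max_image
    (fun i => V.valuation (algebraMap _ K (q.coeff i) * g ^ i)) hne
  rw [Polynomial.aeval_def, Polynomial.eval₂_eq_sum, Polynomial.sum] at hq
  refine sum_ne_of_dom V _ _ m hm ?_ ?_ hq
  · have : q.coeff m ≠ 0 := by simpa using hm
    simp [hg, this]
  · intro i hi him
    refine lt_of_le_of_ne (hmax i hi) ?_
    rcases lt_or_gt_of_ne him with h | h
    · exact hinj i hi m hm h
    · exact (hinj m hm i hi h).symm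

lemma IsInfPlace.arch2 [Algebra.IsAlgebraic (IntermediateField.adjoin k {x}) K]
    {V : ValuationSubring K} (hV : IsInfPlace k x V) {g h : K} (hg : 1 < V.valuation g) (hh : h ≠ 0) :
    ∀ᶠ n : ℕ in Filter.atTop, 1 < V.valuation g ^ n * V.valuation h := by
  have hg0 : g ≠ 0 := by rintro rfl; simp at hg
  obtain ⟨e, he, j, hj⟩ := hV.arch hg0
  obtain ⟨e', he', j', hj'⟩ := hV.arch hh
  have hvx := hV.one_lt
  have hvx0 := (zero_lt_one.trans hvx).ne'
  have hjpos : 0 < j := by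
    have : 1 < V.valuation x ^ j := hj ▸ one_lt_pow₀ hg he.ne'
    rwa [← zpow_zero (V.valuation x), zpow_lt_zpow_iff_right₀ hvx] at this
  filter_upwards [Filter.eventually_ge_atTop (j'.natAbs * e + 1)] with n hn
  have key : 1 < (V.valuation g ^ n * V.valuation h) ^ (e * e') := by
    have : (V.valuation g ^ n * V.valuation h) ^ (e * e') = V.valuation x ^ (j * (n * e') + j' * e) := by
      rw [zpow_add₀ hvx0, zpow_mul, zpow_mul _ j', ← hj, ← hj', mul_pow]
      norm_cast
      simp only [← pow_mul]
      congr 2 <;> ring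
    rw [this, ← zpow_zero (V.valuation x), zpow_lt_zpow_iff_right₀ hvx]
    have h1 : (j'.natAbs * e + 1 : ℤ) ≤ n := by exact_mod_cast hn
    have h2 : -(j'.natAbs : ℤ) ≤ j' := by omega
    have he1 : (1:ℤ) ≤ e' := by exact_mod_cast he'
    have he2 : (1:ℤ) ≤ e := by exact_mod_cast he
    have h3 : (n:ℤ) * 1 ≤ n * e' := by gcongr
    have h4 : (1:ℤ) * (n * e') ≤ j * (n * e') := by gcongr; omega
    have h5 : -(j'.natAbs : ℤ) * e ≤ j' * e := by gcongr
    linarith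
  by_contra! hle
  exact absurd (pow_le_one₀ zero_le hle) (not_le.2 key)

lemma IsInfPlace.incomp [Algebra.IsAlgebraic (IntermediateField.adjoin k {x}) K]
    {V W : ValuationSubring K} (hV : IsInfPlace k x V) (hW : IsInfPlace k x W) (hne : V ≠ W) :
    ∃ g ∈ V, g ∉ W := by
  by_contra! hle
  obtain ⟨g, hgW, hgV⟩ : ∃ g ∈ W, g ∉ V := by
    by_contra! h
    exact hne (SetLike.ext fun z => ⟨hle z, h z⟩)
  have hg : 1 < V.valuation g := by
    rw [← not_le, V.valuation_le_one_iff]; exact hgV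
  have hx0 : x ≠ 0 := by rintro rfl; exact hV.h2 (zero_mem _)
  obtain ⟨n, hn1, hn2⟩ := ((hV.arch2 hg (inv_ne_zero hx0)).and (Filter.eventually_ge_atTop 1)).exists
  have h1 : x / g ^ n ∈ V := by
    rw [← V.valuation_le_one_iff, map_div₀, map_pow]
    rw [map_inv₀, ← div_eq_mul_inv] at hn1
    rw [one_lt_div₀ (zero_lt_one.trans hV.one_lt)] at hn1
    exact div_le_one_of_le₀ hn1.le zero_le
  have hg0 : g ≠ 0 := by rintro rfl; simp at hg
  have h2 : x = x / g ^ n * g ^ n := by field_simp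
  exact hW.h2 (h2 ▸ mul_mem (hle _ h1) (pow_mem hgW n))

lemma IsInfPlace.pair [Algebra.IsAlgebraic (IntermediateField.adjoin k {x}) K]
    {V W : ValuationSubring K} (hV : IsInfPlace k x V) (hW : IsInfPlace k x W) (hne : V ≠ W) :
    ∃ z, V.valuation z < 1 ∧ 1 < W.valuation z := by
  obtain ⟨a, ha, ha'⟩ := hV.incomp hW hne
  obtain ⟨b, hb, hb'⟩ := hW.incomp hV hne.symm
  rw [← ValuationSubring.valuation_le_one_iff] at ha ha' hb hb'
  rw [not_le] at ha' hb'
  have hb0 : b ≠ 0 := by rintro rfl; simp at hb'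
  have hbW : 0 < W.valuation b := by rw [zero_lt_iff]; simpa using hb0
  refine ⟨a / b, ?_, ?_⟩
  · rw [map_div₀, div_lt_one₀ (zero_lt_one.trans hb')]
    exact ha.trans_lt hb'
  · rw [map_div₀, one_lt_div₀ hbW]
    exact hb.trans_lt ha'

lemma IsInfPlace.approx [Algebra.IsAlgebraic (IntermediateField.adjoin k {x}) K]
    {V : ValuationSubring K} (hV : IsInfPlace k x V) (s : Finset (ValuationSubring K))
    (hs : ∀ W ∈ s, IsInfPlace k x W ∧ V ≠ W) :
    ∃ z, V.valuation z < 1 ∧ ∀ W ∈ s, 1 < W.valuation z := by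
  classical
  induction s using Finset.induction_on with
  | empty => exact ⟨0, by simp, by simp⟩
  | insert W s hWs ih =>
    obtain ⟨z', h0, h1⟩ := ih (fun U hU => hs U (Finset.mem_insert_of_mem hU))
    obtain ⟨hW, hne⟩ := hs W (Finset.mem_insert_self _ _)
    obtain ⟨z, hz0, hz1⟩ := hV.pair hW hne
    have hzz : z ≠ 0 := by rintro rfl; simp at hz1
    have hev : ∀ᶠ n : ℕ in Filter.atTop, ∀ U ∈ s, 1 < U.valuation z' ^ n * U.valuation z := by
      rw [Filter.eventually_all_finset]
      intro U hU
      exact (hs U (Finset.mem_insert_of_mem hU)).1.arch2 (h1 U hU) hzz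
    obtain ⟨n, hn, hn1⟩ := (hev.and (Filter.eventually_ge_atTop 1)).exists
    have hn0 : n ≠ 0 := by omega
    rcases lt_trichotomy (W.valuation z') 1 with h | h | h
    · refine ⟨(1 + z' ^ n) * z, ?_, ?_⟩
      · rw [map_mul, Valuation.map_add_eq_of_lt_left, map_one, one_mul]
        · exact hz0
        · rw [map_one, map_pow]; exact pow_lt_one₀ zero_le h0 hn0
      · intro U hU
        rw [Finset.mem_insert] at hU
        rcases hU with rfl | hU
        · rw [map_mul, Valuation.map_add_eq_of_lt_left, map_one, one_mul]
          · exact hz1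
          · rw [map_one, map_pow]; exact pow_lt_one₀ zero_le h hn0
        · rw [map_mul, Valuation.map_add_eq_of_lt_right, map_pow]
          · exact hn U hU
          · rw [map_one, map_pow]; exact one_lt_pow₀ (h1 U hU) hn0
    · refine ⟨z' ^ n * z, ?_, ?_⟩
      · rw [map_mul, map_pow]
        exact mul_lt_one_of_lt_of_le (pow_lt_one₀ zero_le h0 hn0) hz0.le
      · intro U hU
        rw [Finset.mem_insert] at hU
        rcases hU with rfl | hU
        · rw [map_mul, map_pow, h, one_pow, one_mul]
          exact hz1
        · rw [map_mul, map_pow]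
          exact hn U hU
    · refine ⟨z', h0, ?_⟩
      intro U hU
      rw [Finset.mem_insert] at hU
      rcases hU with rfl | hU
      · exact h
      · exact h1 U hU

lemma IsInfPlace.finite [FiniteDimensional (IntermediateField.adjoin k {x}) K] :
    {V : ValuationSubring K | IsInfPlace k x V}.Finite := by
  classical
  by_contra hinf
  obtain ⟨s, hs, hcard⟩ := Set.Infinite.exists_subset_card_eq hinf
    (Module.finrank (IntermediateField.adjoin k {x}) K + 1)
  have hw : ∀ V : s, ∃ w : K, V.1.valuation w = 1 ∧ ∀ W : s, W ≠ V → W.1.valuation w < 1 := by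
    rintro ⟨V, hV⟩
    obtain ⟨z, h0, h1⟩ := (show IsInfPlace k x V from hs hV).approx (s.erase V) (by
      intro W hW
      rw [Finset.mem_erase] at hW
      exact ⟨hs hW.2, hW.1.symm⟩)
    refine ⟨(1 + z)⁻¹, ?_, ?_⟩
    · rw [map_inv₀, Valuation.map_add_eq_of_lt_left, map_one, inv_one]
      rwa [map_one]
    · rintro ⟨W, hW⟩ hne
      have := h1 W (Finset.mem_erase.2 ⟨fun h => hne (by simpa using h), hW⟩)
      rw [map_inv₀, Valuation.map_add_eq_of_lt_right]
      · exact inv_lt_one_of_one_lt₀ this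
      · rwa [map_one]
  choose w hw1 hw2 using hw
  have hli : LinearIndependent (IntermediateField.adjoin k {x}) w := by
    rw [Fintype.linearIndependent_iff]
    intro l hl
    by_contra! hex
    have hj : ∀ V : s, ∃ j : ℤ, l V ≠ 0 → ∀ W, IsInfPlace k x W → W.valuation (l V : K) = W.valuation x ^ j := by
      intro V
      by_cases h : l V = 0
      · exact ⟨0, fun h' => absurd h h'⟩
      · obtain ⟨j, hj⟩ := IsInfPlace.rat (k := k) (x := x) (l V).2 (by simpa using h)
        exact ⟨j, fun _ => hj⟩
    choose j hj using hj
    obtain ⟨V, hV, hmax⟩ := (Finset.univ.filter (fun V => l V ≠ 0)).exists_max_image j (by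
      obtain ⟨V, hV⟩ := hex; exact ⟨V, by simpa using hV⟩)
    simp only [Finset.mem_filter, Finset.mem_univ, true_and] at hV hmax
    have hVS : IsInfPlace k x V.1 := hs V.2
    have hvx := hVS.one_lt
    refine sum_ne_of_dom V.1 _ _ V (Finset.mem_univ _) ?_ ?_ hl
    · intro h
      rcases smul_eq_zero.1 h with h | h
      · exact hV h
      · have := hw1 V; rw [h] at this; simp at this
    · intro W _ hW
      simp only [Algebra.smul_def, map_mul]
      change V.1.valuation (l W : K) * _ < V.1.valuation (l V : K) * _
      rw [hw1, mul_one, hj V hV _ hVS]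
      by_cases h : l W = 0
      · rw [h]; simpa [zero_lt_iff] using zpow_ne_zero _ (zero_lt_one.trans hvx).ne'
      · rw [hj W h _ hVS]
        calc _ < V.1.valuation x ^ j W * 1 := by
              gcongr
              · exact zpow_pos (zero_lt_one.trans hvx) _
              · exact hw2 W V hW.symm
          _ ≤ _ := by rw [mul_one]; exact zpow_le_zpow_right₀ hvx.le (hmax W h)
  have := hli.fintype_card_le_finrank
  simp [hcard] at this

lemma IsInfPlace.invariant [Algebra.IsAlgebraic (IntermediateField.adjoin k {x}) K]
    {V : ValuationSubring K} (hV : IsInfPlace k x V) (ρ : K ≃+* K) (hx : ρ x = x)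
    (hρ : ∀ z, ρ z ∈ V ↔ z ∈ V) {g : K} (hg : g ≠ 0) : V.valuation (ρ g) = V.valuation g := by
  obtain ⟨e, he, j, hj⟩ := hV.arch hg
  have hvx0 := (zero_lt_one.trans hV.one_lt).ne'
  have hx0 : x ≠ 0 := by rintro rfl; exact hV.h2 (zero_mem _)
  have key : ∀ z, V.valuation z = 1 → V.valuation (ρ z) = 1 := by
    intro z hz
    have hz0 : z ≠ 0 := by rintro rfl; simp at hz
    apply le_antisymm
    · rw [V.valuation_le_one_iff, hρ, ← V.valuation_le_one_iff, hz]
    · have : V.valuation (ρ z⁻¹) ≤ 1 := by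
        rw [V.valuation_le_one_iff, hρ, ← V.valuation_le_one_iff, map_inv₀, hz, inv_one]
      rw [map_inv₀, map_inv₀] at this
      exact (inv_le_one₀ (by rw [zero_lt_iff]; simpa using hz0)).1 this
  have h1 := key (g ^ e / x ^ j) (by
    rw [map_div₀, map_zpow₀, map_pow, hj, div_self (zpow_ne_zero _ hvx0)])
  rw [map_div₀, map_zpow₀, hx, map_div₀, map_zpow₀, ← hj, div_eq_one_iff_eq
    (pow_ne_zero _ (by simpa using hg)), map_pow, map_pow] at h1
  exact (pow_left_inj₀ zero_le zero_le he.ne').1 h1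
end


open Polynomial in
/-- rational functions in f regular at 0 -/
def locD (k : Type*) {K : Type*} [Field k] [Field K] [Algebra k K] (f : K) : Subalgebra k K where
  carrier := {z | ∃ g h : k[X], h.eval 0 ≠ 0 ∧ z * aeval f h = aeval f g}
  mul_mem' := by
    rintro a b ⟨g, h, h0, h1⟩ ⟨g', h', h0', h1'⟩
    refine ⟨g * g', h * h', by simp [h0, h0'], ?_⟩
    rw [map_mul, map_mul, ← h1, ← h1']; ring
  add_mem' := by
    rintro a b ⟨g, h, h0, h1⟩ ⟨g', h', h0', h1'⟩
    refine ⟨g * h' + g' * h, h * h', by simp [h0, h0'], ?_⟩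
    rw [map_mul, map_add, map_mul, map_mul, ← h1, ← h1']; ring
  algebraMap_mem' := by
    intro c
    exact ⟨C c, 1, by simp, by simp⟩

section
open Polynomial
variable {k K : Type*} [Field k] [Field K] [Algebra k K] {f : K}

lemma locD_self : f ∈ locD k f := ⟨X, 1, by simp, by simp⟩

lemma locD_inv (hf : Transcendental k f) {h : k[X]} (h0 : h.eval 0 ≠ 0) : (aeval f h)⁻¹ ∈ locD k f := by
  refine ⟨1, h, h0, ?_⟩
  rw [map_one, inv_mul_cancel₀]
  intro h1
  have := transcendental_iff.1 hf _ h1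
  simp [this] at h0

lemma locD_jac (hf : Transcendental k f) :
    (⟨f, locD_self⟩ : locD k f) ∈ (⊥ : Ideal (locD k f)).jacobson := by
  rw [Ideal.mem_jacobson_bot]
  rintro ⟨z, g, h, h0, h1⟩
  have hne : aeval f h ≠ 0 := by
    intro h1
    have := transcendental_iff.1 hf _ h1
    simp [this] at h0
  have h0' : (h + X * g).eval 0 ≠ 0 := by simpa using h0
  have hne' : aeval f (h + X * g) ≠ 0 := by
    intro h1
    have := transcendental_iff.1 hf _ h1
    simp [this] at h0'
  refine IsUnit.of_mul_eq_one ⟨aeval f h * (aeval f (h + X * g))⁻¹, mul_mem ⟨h, 1, by simp, by simp⟩ (locD_inv hf h0')⟩ ?_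
  apply Subtype.ext
  change (f * z + 1) * (aeval f h * (aeval f (h + X * g))⁻¹) = 1
  rw [← mul_assoc, ← div_eq_mul_inv, div_eq_one_iff_eq hne']
  simp only [map_add, map_mul, aeval_X, ← h1]
  ring

lemma locD_le : ∀ z ∈ locD k f, Transcendental k f → z ∈ IntermediateField.adjoin k {f} := by
  rintro z ⟨g, h, h0, h1⟩ hf
  have hne : aeval f h ≠ 0 := by
    intro h1
    have := transcendental_iff.1 hf _ h1
    simp [this] at h0
  rw [IntermediateField.mem_adjoin_simple_iff]
  exact ⟨g, h, by rw [← h1]; field_simp⟩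

lemma adjoin_le_of_locD (hf : Transcendental k f) (V : ValuationSubring K)
    (hV : ∀ z ∈ locD k f, z ∈ V) (hfi : f⁻¹ ∈ V) : ∀ z ∈ IntermediateField.adjoin k {f}, z ∈ V := by
  intro z hz
  rw [IntermediateField.mem_adjoin_simple_iff] at hz
  obtain ⟨r, s, rfl⟩ := hz
  have hpol : ∀ r : k[X], aeval f r ∈ V := fun r => hV _ ⟨r, 1, by simp, by simp⟩
  rw [div_eq_mul_inv]
  refine mul_mem (hpol r) ?_
  by_cases hs : s = 0
  · simp [hs]
  obtain ⟨q, hq, hnd⟩ := Polynomial.exists_eq_pow_rootMultiplicity_mul_and_not_dvd s hs 0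
  rw [hq, map_mul, mul_inv, map_pow, ← inv_pow]
  refine mul_mem (pow_mem ?_ _) (hV _ (locD_inv hf ?_))
  · simpa using hfi
  · rwa [dvd_iff_isRoot] at hnd

lemma integral_mem_V (V : ValuationSubring K) (R : Subring K) (hR : ∀ z ∈ R, z ∈ V) {z : K}
    (hz : IsIntegral R z) : z ∈ V := by
  let i : R →+* V := Subring.inclusion (show R ≤ V.toSubring from hR)
  algebraize [i]
  have : IsScalarTower R V K := IsScalarTower.of_algebraMap_eq (fun _ => rfl)
  have h2 : IsIntegral V z := hz.tower_top
  obtain ⟨y, rfl⟩ := IsIntegrallyClosed.isIntegral_iff.1 h2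
  exact y.2

lemma integral_over_locD {x : K} (hf : Transcendental k f)
    [Algebra.IsAlgebraic (IntermediateField.adjoin k {f}) K]
    (hS : ∀ V : ValuationSubring K, (∀ c : k, algebraMap k K c ∈ V) → x ∉ V → f⁻¹ ∈ V)
    {z : K} (hz : IsIntegral (Algebra.adjoin k {x}) z) : IsIntegral (locD k f) z := by
  have key : ∀ V : ValuationSubring K, (locD k f : Set K) ⊆ V.toSubring → z ∈ V := by
    intro V hV
    have hk : ∀ c : k, algebraMap k K c ∈ V := fun c => hV ((locD k f).algebraMap_mem c)
    have hxV : x ∈ V := by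
      by_contra hx
      have h1 := adjoin_le_of_locD hf V (fun z hz => hV hz) (hS V hk hx)
      have h2 := (Algebra.IsAlgebraic.isAlgebraic (R := IntermediateField.adjoin k {f}) x).isIntegral
      exact hx (integral_mem_V V (IntermediateField.adjoin k {f}).toSubring h1 h2)
    refine integral_mem_V V (Algebra.adjoin k {x}).toSubring ?_ hz
    intro y hy
    replace hy : y ∈ Algebra.adjoin k {x} := hy
    induction hy using Algebra.adjoin_induction with
    | mem y hy => rw [Set.mem_singleton_iff.1 hy]; exact hxV
    | algebraMap r => exact hk r
    | add a b _ _ h1 h2 => exact add_mem h1 h2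
    | mul a b _ _ h1 h2 => exact mul_mem h1 h2
  have h1 : z ∈ (integralClosure (Subring.closure ((locD k f : Set K))) K).toSubring := by
    rw [← iInf_valuationSubring_superset, Subring.mem_iInf]
    rintro ⟨V, hV⟩
    exact key V hV
  have h2 : IsIntegral (Subring.closure ((locD k f : Set K))) z := h1
  have h3 : ∀ R : Subring K, R = (locD k f).toSubring → IsIntegral R z → IsIntegral (locD k f) z := by
    rintro _ rfl h; exact h
  exact h3 _ (Subring.closure_eq (locD k f).toSubring) h2

end

section
variable {k A K : Type*} [Field k] [IsAlgClosed k] [CommRing A] [IsDomain A] [Algebra k A]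
  [Algebra.FiniteType k A] [Field K] [Algebra A K] [IsFractionRing A K] [Algebra k K]
  [IsScalarTower k A K]

lemma k_add_max (Q : Ideal A) [hQ : Q.IsMaximal] (a : A) : ∃ c : k, a - algebraMap k A c ∈ Q := by
  letI := Ideal.Quotient.field Q
  have : Module.Finite k (A ⧸ Q) := finite_of_finite_type_of_isJacobsonRing k (A ⧸ Q)
  obtain ⟨c, hc⟩ := (IsAlgClosed.algebraMap_bijective_of_isIntegral (k := k) (K := A ⧸ Q)).2
    (Ideal.Quotient.mk Q a)
  refine ⟨c, ?_⟩
  rw [← Ideal.Quotient.eq, ← hc]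
  rfl

lemma core2 (p q : A) (hq : (Ideal.span {q}).IsMaximal) (f : K) (hf : Transcendental k f)
    (hfp : f * algebraMap A K p = algebraMap A K q)
    (hint : ∀ a : A, IsIntegral (locD k f) (algebraMap A K a)) :
    IntermediateField.adjoin k {f} = ⊤ := by
  classical
  obtain ⟨s, hs⟩ := (Algebra.FiniteType.out : (⊤ : Subalgebra k A).FG)
  let M : Subalgebra (locD k f) K := Algebra.adjoin (locD k f) ((algebraMap A K) '' s)
  have hMfg : (Subalgebra.toSubmodule M).FG := by
    apply fg_adjoin_of_finite (s.finite_toSet.image _)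
    rintro _ ⟨a, _, rfl⟩
    exact hint a
  have hAM : ∀ a : A, algebraMap A K a ∈ M := by
    intro a
    have ha : a ∈ Algebra.adjoin k (s : Set A) := by rw [hs]; trivial
    induction ha using Algebra.adjoin_induction with
    | mem y hy => exact Algebra.subset_adjoin ⟨y, hy, rfl⟩
    | algebraMap r =>
      rw [← IsScalarTower.algebraMap_apply]
      exact M.algebraMap_mem ⟨algebraMap k K r, (locD k f).algebraMap_mem r⟩
    | add a b _ _ h1 h2 => rw [map_add]; exact add_mem h1 h2
    | mul a b _ _ h1 h2 => rw [map_mul]; exact mul_mem h1 h2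
  have hfM : f ∈ M := M.algebraMap_mem ⟨f, locD_self⟩
  have hdec : ∀ m ∈ M, ∃ d ∈ locD k f, ∃ m' ∈ M, m = d + f * m' := by
    intro m hm
    induction hm using Algebra.adjoin_induction with
    | mem y hy =>
      obtain ⟨a, _, rfl⟩ := hy
      obtain ⟨c, hc⟩ := k_add_max (k := k) (Ideal.span {q}) a
      obtain ⟨b, hb⟩ := Ideal.mem_span_singleton'.1 hc
      refine ⟨algebraMap k K c, (locD k f).algebraMap_mem c, algebraMap A K (p * b), hAM _, ?_⟩
      rw [map_mul, ← mul_assoc, hfp, IsScalarTower.algebraMap_apply k A K, ← map_mul, ← map_add,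
        mul_comm q, hb]
      ring_nf
    | algebraMap r => exact ⟨r, r.2, 0, zero_mem _, by simp⟩
    | add a b _ _ h1 h2 =>
      obtain ⟨d, hd, m, hm, rfl⟩ := h1
      obtain ⟨d', hd', m', hm', rfl⟩ := h2
      exact ⟨d + d', add_mem hd hd', m + m', add_mem hm hm', by ring⟩
    | mul a b _ _ h1 h2 =>
      obtain ⟨d, hd, m, hm, rfl⟩ := h1
      obtain ⟨d', hd', m', hm', rfl⟩ := h2
      have e1 : d ∈ M := M.algebraMap_mem ⟨d, hd⟩
      have e2 : d' ∈ M := M.algebraMap_mem ⟨d', hd'⟩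
      exact ⟨d * d', mul_mem hd hd', d * m' + d' * m + f * (m * m'),
        add_mem (add_mem (mul_mem e1 hm') (mul_mem e2 hm)) (mul_mem hfM (mul_mem hm hm')), by ring⟩
  have hNak : Subalgebra.toSubmodule M ≤ Subalgebra.toSubmodule (⊥ : Subalgebra (locD k f) K) := by
    apply Submodule.le_of_le_smul_of_le_jacobson_bot (I := Ideal.span {⟨f, locD_self⟩}) hMfg
    · rw [Ideal.span_singleton_le_iff_mem]; exact locD_jac hf
    · intro m hm
      obtain ⟨d, hd, m', hm', rfl⟩ := hdec m hm
      refine Submodule.add_mem_sup ?_ ?_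
      · exact Algebra.mem_bot.2 ⟨⟨d, hd⟩, rfl⟩
      · exact Submodule.smul_mem_smul (r := (⟨f, locD_self⟩ : locD k f)) (Ideal.mem_span_singleton_self _) hm'
  have hAD : ∀ a : A, algebraMap A K a ∈ IntermediateField.adjoin k {f} := by
    intro a
    obtain ⟨d, hd⟩ := Algebra.mem_bot.1 (hNak (hAM a))
    rw [← hd]
    exact locD_le _ d.2 hf
  rw [eq_top_iff]
  intro z _
  obtain ⟨a, b, _, rfl⟩ := IsFractionRing.div_surjective A z
  exact div_mem (hAD a) (hAD b)

lemma aux_semi (x : A) : ∃ T : Set k, T.Finite ∧ ∀ σ : k ≃+* k, (∀ t ∈ T, σ t = t) →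
    ∃ σA : A ≃+* A, (∀ c, σA (algebraMap k A c) = algebraMap k A (σ c)) ∧ σA x = x := by
  classical
  obtain ⟨n, φ, hφ⟩ := Algebra.FiniteType.iff_quotient_mvPolynomial''.1
    (inferInstance : Algebra.FiniteType k A)
  obtain ⟨y, rfl⟩ := hφ x
  obtain ⟨G, hG⟩ := (inferInstance : IsNoetherianRing (MvPolynomial (Fin n) k)).noetherian
    (RingHom.ker φ.toRingHom)
  refine ⟨⋃ g ∈ insert y G, (g.coeffs : Set k), ?_, ?_⟩
  · exact Set.Finite.biUnion (Finset.finite_toSet _) (fun g _ => Finset.finite_toSet _)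
  intro σ hσ
  have hfix : ∀ g ∈ insert y G, MvPolynomial.mapEquiv (Fin n) σ g = g := by
    intro g hg
    ext m
    rw [MvPolynomial.mapEquiv_apply, MvPolynomial.coeff_map]
    by_cases h : g.coeff m = 0
    · rw [h, map_zero]
    · exact hσ _ (Set.mem_biUnion hg (MvPolynomial.coeff_mem_coeffs m h))
  have hI : RingHom.ker φ.toRingHom = (RingHom.ker φ.toRingHom).map
      (MvPolynomial.mapEquiv (Fin n) σ : MvPolynomial (Fin n) k →+* MvPolynomial (Fin n) k) := by
    rw [← hG, Ideal.map_span]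
    congr 1
    ext g
    constructor
    · intro hg
      exact ⟨g, hg, hfix g (Finset.mem_insert_of_mem hg)⟩
    · rintro ⟨g, hg, rfl⟩
      have := hfix g (Finset.mem_insert_of_mem hg)
      change MvPolynomial.mapEquiv (Fin n) σ g ∈ _
      rwa [this]
  let e := RingHom.quotientKerEquivOfSurjective (f := φ.toRingHom) hφ
  let E := Ideal.quotientEquiv _ _ (MvPolynomial.mapEquiv (Fin n) σ) hI
  have hE : ∀ p, (e.symm.trans (E.trans e)) (φ p) = φ (MvPolynomial.mapEquiv (Fin n) σ p) := by
    intro p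
    have : e.symm (φ p) = Ideal.Quotient.mk _ p := by
      rw [RingEquiv.symm_apply_eq]; rfl
    simp only [RingEquiv.trans_apply, this]
    rfl
  refine ⟨e.symm.trans (E.trans e), ?_, ?_⟩
  · intro c
    have := hE (MvPolynomial.C c)
    rw [MvPolynomial.mapEquiv_apply, MvPolynomial.map_C] at this
    rw [← MvPolynomial.algebraMap_eq, AlgHom.commutes, AlgHom.commutes] at this
    exact this
  · rw [hE, hfix y (Finset.mem_insert_self _ _)]
end


section
variable {k A K : Type*} [Field k] [IsAlgClosed k] [CommRing A] [IsDomain A] [Algebra k A]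
  [Algebra.FiniteType k A] [Field K] [Algebra A K] [IsFractionRing A K] [Algebra k K]
  [IsScalarTower k A K]

lemma alg_of_int (x : A)
    (hint : ∀ a : A, IsIntegral (Algebra.adjoin k {algebraMap A K x}) (algebraMap A K a)) :
    Algebra.IsAlgebraic (Algebra.adjoin k {algebraMap A K x}) K := by
  constructor
  intro z
  obtain ⟨a, b, _, rfl⟩ := IsFractionRing.div_surjective A z
  rw [div_eq_mul_inv]
  exact (hint a).isAlgebraic.mul (IsAlgebraic.inv_iff.2 (hint b).isAlgebraic)

lemma findim_of_int (x : A)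
    (hint : ∀ a : A, IsIntegral (Algebra.adjoin k {algebraMap A K x}) (algebraMap A K a)) :
    FiniteDimensional (IntermediateField.adjoin k {algebraMap A K x}) K := by
  classical
  set L := IntermediateField.adjoin k {algebraMap A K x} with hL
  have hint' : ∀ a : A, IsIntegral L (algebraMap A K a) := by
    intro a
    let i : Algebra.adjoin k {algebraMap A K x} →+* L :=
      (Subalgebra.inclusion (IntermediateField.algebra_adjoin_le_adjoin k {algebraMap A K x})).toRingHom
    algebraize [i]
    have : IsScalarTower (Algebra.adjoin k {algebraMap A K x}) L K :=
      IsScalarTower.of_algebraMap_eq (fun _ => rfl)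
    exact (hint a).tower_top
  obtain ⟨s, hs⟩ := (Algebra.FiniteType.out : (⊤ : Subalgebra k A).FG)
  have : Finite ((algebraMap A K) '' s) := (s.finite_toSet.image _)
  have h1 : FiniteDimensional L (IntermediateField.adjoin L ((algebraMap A K) '' s)) :=
    IntermediateField.finiteDimensional_adjoin (by rintro _ ⟨a, _, rfl⟩; exact hint' a)
  have h2 : IntermediateField.adjoin L ((algebraMap A K) '' s) = ⊤ := by
    rw [eq_top_iff]
    intro z _
    obtain ⟨a, b, _, rfl⟩ := IsFractionRing.div_surjective A z
    have hA : ∀ a : A, algebraMap A K a ∈ IntermediateField.adjoin L ((algebraMap A K) '' s) := by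
      intro a
      have ha : a ∈ Algebra.adjoin k (s : Set A) := by rw [hs]; trivial
      induction ha using Algebra.adjoin_induction with
      | mem y hy => exact IntermediateField.subset_adjoin _ _ ⟨y, hy, rfl⟩
      | algebraMap r =>
        rw [← IsScalarTower.algebraMap_apply]
        exact (IntermediateField.adjoin L ((algebraMap A K) '' s)).algebraMap_mem (algebraMap k L r)
      | add a b _ _ h1 h2 => rw [map_add]; exact add_mem h1 h2
      | mul a b _ _ h1 h2 => rw [map_mul]; exact mul_mem h1 h2
    exact div_mem (hA a) (hA b)
  rw [h2] at h1
  exact (IntermediateField.topEquiv (F := L) (E := K)).toLinearEquiv.finiteDimensional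

lemma exists_rho (x : A)
    (hint : ∀ a : A, IsIntegral (Algebra.adjoin k {algebraMap A K x}) (algebraMap A K a)) :
    ∃ (ρ0 : k ≃+* k) (ρA : A ≃+* A) (ρ : K ≃+* K), (∃ a, ρ0 a ≠ a) ∧ ρA x = x ∧
      (∀ c, ρA (algebraMap k A c) = algebraMap k A (ρ0 c)) ∧
      (∀ a, ρ (algebraMap A K a) = algebraMap A K (ρA a)) ∧
      ∀ V, IsInfPlace k (algebraMap A K x) V → ∀ z, ρ z ∈ V ↔ z ∈ V := by
  classical
  obtain ⟨T, hT, hσ⟩ := aux_semi (k := k) x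
  have hinf := aux_infinite T hT
  have := hinf.to_subtype
  have := findim_of_int x hint
  have hfin := (IsInfPlace.finite (k := k) (x := algebraMap A K x)).to_subtype
  choose! σA hσ1 hσ2 using hσ
  let σK : (k ≃+* k) → K ≃+* K := fun σ => IsFractionRing.ringEquivOfRingEquiv (σA σ)
  have hσK : ∀ σ a, σK σ (algebraMap A K a) = algebraMap A K (σA σ a) := fun σ a =>
    IsFractionRing.ringEquivOfRingEquiv_algebraMap _ a
  let F : {σ : k ≃+* k | ∀ t ∈ T, σ t = t} → {V | IsInfPlace k (algebraMap A K x) V} →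
      {V | IsInfPlace k (algebraMap A K x) V} := fun σ V => ⟨V.1.comap (σK σ.1).toRingHom, by
    constructor
    · intro c
      change σK σ.1 (algebraMap k K c) ∈ V.1
      rw [IsScalarTower.algebraMap_apply k A K, hσK, hσ1 σ.1 σ.2, ← IsScalarTower.algebraMap_apply]
      exact V.2.h1 _
    · change σK σ.1 (algebraMap A K x) ∉ V.1
      rw [hσK, hσ2 σ.1 σ.2]
      exact V.2.h2⟩
  obtain ⟨σ, τ, hne, heq⟩ := Finite.exists_ne_map_eq_of_infinite F
  refine ⟨τ.1.symm.trans σ.1, (σA τ.1).symm.trans (σA σ.1), (σK τ.1).symm.trans (σK σ.1), ?_, ?_, ?_, ?_, ?_⟩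
  · by_contra! h
    apply hne
    apply Subtype.ext
    ext c
    have := h (τ.1 c)
    simpa using this
  · rw [RingEquiv.trans_apply, (RingEquiv.symm_apply_eq (σA τ.1)).2 (hσ2 τ.1 τ.2).symm, hσ2 _ σ.2]
  · intro c
    have : (σA τ.1).symm (algebraMap k A c) = algebraMap k A (τ.1.symm c) := by
      rw [RingEquiv.symm_apply_eq, hσ1 _ τ.2, RingEquiv.apply_symm_apply]
    rw [RingEquiv.trans_apply, this, hσ1 _ σ.2]; rfl
  · intro a
    have : (σK τ.1).symm (algebraMap A K a) = algebraMap A K ((σA τ.1).symm a) := by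
      rw [RingEquiv.symm_apply_eq, hσK, RingEquiv.apply_symm_apply]
    rw [RingEquiv.trans_apply, this, hσK]; rfl
  · intro V hV z
    have h1 := congrArg (fun G => (G ⟨V, hV⟩).1) heq
    have h2 : ∀ y, σK σ.1 y ∈ V ↔ σK τ.1 y ∈ V := fun y => by
      have := SetLike.ext_iff.1 h1 y
      exact this
    rw [RingEquiv.trans_apply, h2, RingEquiv.apply_symm_apply]

open Polynomial in
lemma nonunit_of_int (x : A) (hx : Transcendental k (algebraMap A K x))
    (hint : ∀ a : A, IsIntegral (Algebra.adjoin k {algebraMap A K x}) (algebraMap A K a)) (a : k) :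
    ¬ IsUnit (x - algebraMap k A a) := by
  intro hu
  obtain ⟨b, hb⟩ := hu.exists_right_inv
  set R := Algebra.adjoin k {algebraMap A K x}
  have hxR : algebraMap A K x ∈ R := Algebra.self_mem_adjoin_singleton _ _
  set y : R := ⟨algebraMap A K x, hxR⟩ - algebraMap k R a with hy
  have hyK : (y : K) = algebraMap A K (x - algebraMap k A a) := by
    rw [hy, map_sub, ← IsScalarTower.algebraMap_apply]; rfl
  have hbK : (y : K) * algebraMap A K b = 1 := by rw [hyK, ← map_mul, hb, map_one]
  -- b integral over R : b^n = -(...) ; multiply by y^(n-1)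
  have hbR : algebraMap A K b ∈ R := by
    obtain ⟨q, hq, hq0⟩ := hint b
    have h1 : ∀ i, i < q.natDegree → (y : K) ^ (q.natDegree - 1) * algebraMap A K b ^ i ∈ R := by
      intro i hi
      have : (y : K) ^ (q.natDegree - 1) * algebraMap A K b ^ i = y ^ (q.natDegree - 1 - i) := by
        have : q.natDegree - 1 = (q.natDegree - 1 - i) + i := by omega
        conv_lhs => rw [this, pow_add, mul_assoc, ← mul_pow, hbK, one_pow, mul_one]
      rw [this]; exact pow_mem y.2 _
    have hn : q.natDegree ≠ 0 := by
      intro h0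
      rw [hq.natDegree_eq_zero.1 h0] at hq0
      simp at hq0
    rw [eval₂_eq_sum_range, Finset.sum_range_succ, hq.coeff_natDegree, map_one, one_mul] at hq0
    have h2 : algebraMap A K b = y ^ (q.natDegree - 1) * algebraMap A K b ^ q.natDegree := by
      obtain ⟨n, hn⟩ := Nat.exists_eq_succ_of_ne_zero hn
      rw [hn, Nat.succ_sub_one, pow_succ, ← mul_assoc, ← mul_pow, hbK, one_pow, one_mul]
    rw [h2, eq_neg_of_add_eq_zero_right hq0, mul_neg, Finset.mul_sum]
    refine neg_mem (sum_mem fun i hi => ?_)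
    rw [mul_left_comm]
    exact mul_mem (q.coeff i).2 (h1 i (Finset.mem_range.1 hi))
  rw [show R = _ from Algebra.adjoin_singleton_eq_range_aeval k (algebraMap A K x)] at hbR
  obtain ⟨q, hq⟩ := hbR
  have h3 : aeval (algebraMap A K x) ((X - C a) * q - 1) = 0 := by
    rw [map_sub, map_mul, map_sub, map_one, aeval_X, aeval_C]
    erw [hq]
    rw [hyK, map_sub, ← IsScalarTower.algebraMap_apply] at hbK
    rw [hbK, sub_self]
  have h4 := transcendental_iff.1 hx _ h3
  have := congrArg (eval a) h4
  simp at this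

open Polynomial in
theorem core (x : A) (hx : Transcendental k (algebraMap A K x))
    (hint : ∀ a : A, IsIntegral (Algebra.adjoin k {algebraMap A K x}) (algebraMap A K a))
    (hprinc : ∀ P : Ideal A, P.IsMaximal → ∃ p, P = Ideal.span {p}) :
    ∃ f : K, IntermediateField.adjoin k {f} = ⊤ := by
  obtain ⟨ρ0, ρA, ρ, ⟨a, ha⟩, hρx, hρk, hρ, hρV⟩ := exists_rho x hint
  have := findim_of_int x hint
  have halg := alg_of_int x hint
  obtain ⟨P, hP, hxP⟩ := exists_max_ideal_of_mem_nonunits (nonunit_of_int x hx hint a)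
  obtain ⟨p, rfl⟩ := hprinc P hP
  have hQ : (Ideal.span {ρA p}).IsMaximal := by
    have h1 := Ideal.map_isMaximal_of_equiv (p := Ideal.span {p}) ρA
    rw [Ideal.map_span, Set.image_singleton] at h1
    exact h1
  have hp0 : p ≠ 0 := by
    rintro rfl
    have h1 : x = algebraMap k A a := by
      have : x - algebraMap k A a = 0 := by simpa using hxP
      exact sub_eq_zero.1 this
    rw [h1, ← IsScalarTower.algebraMap_apply] at hx
    exact hx (isAlgebraic_algebraMap a)
  have hpK : algebraMap A K p ≠ 0 := by
    simpa using hp0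
  have hqK : algebraMap A K (ρA p) ≠ 0 := by
    simpa using hp0
  set f := algebraMap A K (ρA p) / algebraMap A K p with hf
  have hfp : f * algebraMap A K p = algebraMap A K (ρA p) := by rw [hf]; field_simp
  have hfc : ∀ c : k, f ≠ algebraMap k K c := by
    intro c hc
    have h1 : ρA p = algebraMap k A c * p := by
      apply IsFractionRing.injective A K
      rw [← hfp, hc, map_mul, ← IsScalarTower.algebraMap_apply]
    have h2 : Ideal.span {ρA p} ≤ Ideal.span {p} := by
      rw [Ideal.span_singleton_le_span_singleton, h1]; exact Dvd.intro_left _ rfl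
    have h3 : x - algebraMap k A (ρ0 a) ∈ Ideal.span {ρA p} := by
      rw [← hρk]
      obtain ⟨b, hb⟩ := Ideal.mem_span_singleton'.1 hxP
      rw [Ideal.mem_span_singleton']
      refine ⟨ρA b, ?_⟩
      rw [← map_mul, hb, map_sub, hρx]
    have h4 := sub_mem hxP (h2 h3)
    have h5 : x - algebraMap k A a - (x - algebraMap k A (ρ0 a)) = algebraMap k A (ρ0 a - a) := by
      rw [map_sub]; ring
    rw [h5] at h4
    exact hP.ne_top (Ideal.eq_top_of_isUnit_mem _ h4 ((IsUnit.mk0 _ (sub_ne_zero.2 ha)).map _))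
  have hft : Transcendental k f := by
    intro halg
    have : IsIntegral k f := halg.isIntegral
    have h1 := IsAlgClosed.degree_eq_one_of_irreducible k (minpoly.irreducible this)
    rw [minpoly.degree_eq_one_iff] at h1
    obtain ⟨c, hc⟩ := h1
    exact hfc c hc.symm
  have hbas : IsTranscendenceBasis k (fun _ : Unit => f) := by
    apply AlgebraicIndependent.isTranscendenceBasis_of_lift_trdeg_le_of_finite
    · rw [algebraicIndependent_unique_type_iff]; exact hft
    · have := Algebra.IsAlgebraic.trdeg_le_cardinalMk k {algebraMap A K x}
      simpa using this
  have halgf := hbas.isAlgebraic_field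
  rw [Set.range_const] at halgf
  refine ⟨f, core2 p (ρA p) hQ f hft hfp ?_⟩
  intro b
  refine integral_over_locD (x := algebraMap A K x) hft ?_ (hint b)
  intro V hV1 hV2
  have hV : IsInfPlace k (algebraMap A K x) V := ⟨hV1, hV2⟩
  have h1 := hV.invariant ρ (by rw [hρ, hρx]) (hρV V hV) hpK
  rw [hρ] at h1
  rw [← V.valuation_le_one_iff, map_inv₀, hf, map_div₀, h1, div_self, inv_one]
  simpa using hp0
end


lemma krull_int (R S : Type*) [CommRing R] [CommRing S] [IsDomain R] [IsDomain S] [Algebra R S]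
    [Algebra.IsIntegral R S]
    (hinj : Function.Injective (algebraMap R S)) : ringKrullDim S = ringKrullDim R := by
  apply le_antisymm
  · apply Order.krullDim_le_of_strictMono (PrimeSpectrum.comap (algebraMap R S))
    intro P Q hPQ
    exact Ideal.IsIntegral.comap_lt_comap (I := P.asIdeal) hPQ
  · apply iSup_le
    intro l
    have : FaithfulSMul R S := (faithfulSMul_iff_algebraMap_injective R S).2 hinj
    obtain ⟨P, hP, hPl⟩ := Ideal.exists_ideal_over_prime_of_isIntegral_of_isDomain
      (S := S) (RelSeries.head l).asIdeal (by
        rw [(RingHom.injective_iff_ker_eq_bot _).1 hinj]; exact bot_le)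
    have : P.LiesOver (RelSeries.head l).asIdeal := ⟨hPl.symm⟩
    obtain ⟨L, hL, _⟩ := Ideal.exists_ltSeries_of_hasGoingUp l P
    rw [← hL]
    exact le_iSup (fun L : LTSeries (PrimeSpectrum S) => ((L.length : ℕ∞) : WithBot ℕ∞)) L

lemma noether_basis {k R : Type*} [Field k] [CommRing R] [IsDomain R] [Algebra k R] {s : ℕ}
    (g : MvPolynomial (Fin s) k →ₐ[k] R) (hg : Function.Injective g) (hint : g.IsIntegral) :
    IsTranscendenceBasis k (fun i => g (MvPolynomial.X i)) := by
  have h1 : AlgebraicIndependent k (fun i => g (MvPolynomial.X i)) := by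
    have : MvPolynomial.aeval (fun i => g (MvPolynomial.X i)) = g := by
      ext i; simp
    rw [AlgebraicIndependent, this]; exact hg
  have h2 : Algebra.adjoin k (Set.range (fun i => g (MvPolynomial.X i))) = g.range := by
    rw [Algebra.adjoin_range_eq_range_aeval]
    congr 1
    ext i; simp
  rw [h1.isTranscendenceBasis_iff_isAlgebraic, h2]
  constructor
  intro z
  have : IsIntegral g.range z := by
    obtain ⟨q, hq, hq0⟩ := hint z
    refine ⟨q.map g.rangeRestrict.toRingHom, hq.map _, ?_⟩
    rw [Polynomial.eval₂_map]
    exact hq0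
  exact this.isAlgebraic

lemma trdeg_eq_dim {k R : Type*} [Field k] [CommRing R] [IsDomain R] [Algebra k R]
    [Algebra.FiniteType k R] (d : ℕ) (hd : ringKrullDim R = d) : Algebra.trdeg k R = d := by
  obtain ⟨s, g, hg, hint⟩ := exists_integral_inj_algHom_of_fg k R
  have hb := (noether_basis g hg hint).lift_cardinalMk_eq_trdeg
  have hs : s = d := by
    let := g.toRingHom.toAlgebra
    have : Algebra.IsIntegral (MvPolynomial (Fin s) k) R := ⟨hint⟩
    have h1 := krull_int (MvPolynomial (Fin s) k) R hg
    rw [hd, MvPolynomial.ringKrullDim_of_isNoetherianRing] at h1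
    simp at h1
    exact_mod_cast h1.symm
  subst hs
  simpa using hb.symm

section
open DirectSum
variable {k B : Type*} [Field k] [CommRing B] [IsDomain B] [Algebra k B] {r : ℕ}
  (𝒜 : (Fin r → ℤ) → Submodule k B) [GradedAlgebra 𝒜]

open scoped Classical in
lemma mul_uniq (a b : B) (i j : Fin r → ℤ)
    (h : UniqueAdd (decompose 𝒜 a).support (decompose 𝒜 b).support i j) :
    (decompose 𝒜 (a * b) (i + j) : B) = decompose 𝒜 a i * decompose 𝒜 b j := by
  rw [decompose_mul, DirectSum.coe_mul_apply]
  apply Finset.sum_eq_single (i, j)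
  · rintro ⟨i', j'⟩ hm hne
    simp only [Finset.mem_filter, Finset.mem_product] at hm
    exfalso
    obtain ⟨h1, h2⟩ := h hm.1.1 hm.1.2 hm.2
    exact hne (by rw [h1, h2])
  · intro hm
    simp only [Finset.mem_filter, Finset.mem_product, and_true, not_and_or] at hm
    rcases hm with hm | hm
    · rw [DFinsupp.notMem_support_iff] at hm; rw [hm]; simp
    · rw [DFinsupp.notMem_support_iff] at hm; rw [hm]; simp

lemma homog_factor (a b : B) (g : Fin r → ℤ) (hab : a * b ∈ 𝒜 g) (h0 : a * b ≠ 0) :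
    ∃ h, a ∈ 𝒜 h := by
  classical
  have ha0 : a ≠ 0 := left_ne_zero_of_mul h0
  have hb0 : b ≠ 0 := right_ne_zero_of_mul h0
  set s := (decompose 𝒜 a).support with hs
  set t := (decompose 𝒜 b).support with ht
  have hs1 : s.card ≠ 0 := by
    rw [Finset.card_ne_zero, Finset.nonempty_iff_ne_empty]
    intro h
    rw [hs, DFinsupp.support_eq_empty] at h
    exact ha0 ((decompose 𝒜).injective (by rw [h, decompose_zero]))
  have ht1 : t.card ≠ 0 := by
    rw [Finset.card_ne_zero, Finset.nonempty_iff_ne_empty]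
    intro h
    rw [ht, DFinsupp.support_eq_empty] at h
    exact hb0 ((decompose 𝒜).injective (by rw [h, decompose_zero]))
  have hkey : ∀ p ∈ s ×ˢ t, UniqueAdd s t p.1 p.2 → p.1 + p.2 = g := by
    intro p hp hu
    by_contra hne
    have h1 := mul_uniq 𝒜 a b p.1 p.2 hu
    rw [decompose_of_mem_ne 𝒜 hab (Ne.symm hne)] at h1
    rw [Finset.mem_product, hs, ht, DFinsupp.mem_support_iff, DFinsupp.mem_support_iff] at hp
    rcases mul_eq_zero.1 h1.symm with h | h
    · exact hp.1 (by simpa using h)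
    · exact hp.2 (by simpa using h)
  have hcard : ¬ 1 < s.card * t.card := by
    intro hlt
    obtain ⟨p1, hp1, p2, hp2, hne, hu1, hu2⟩ := TwoUniqueSums.uniqueAdd_of_one_lt_card hlt
    have e1 := hkey p1 hp1 hu1
    have e2 := hkey p2 hp2 hu2
    rw [Finset.mem_product] at hp2
    obtain ⟨h1, h2⟩ := hu1 hp2.1 hp2.2 (e2.trans e1.symm)
    exact hne (Prod.ext h1.symm h2.symm)
  have hs2 : s.card = 1 := by
    have : s.card ≤ s.card * t.card := Nat.le_mul_of_pos_right _ (by omega)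
    omega
  obtain ⟨i, hi⟩ := Finset.card_eq_one.1 hs2
  refine ⟨i, ?_⟩
  have := DirectSum.sum_support_decompose 𝒜 a
  rw [← this, ← hs, hi, Finset.sum_singleton]
  exact SetLike.coe_mem _
end


section
open DirectSum
variable {k B : Type*} [Field k] [CommRing B] [IsDomain B] [Algebra k B] {r : ℕ}

/-- finite homogeneous generating set -/
structure GoodGen (𝒜 : (Fin r → ℤ) → Submodule k B) (b : Set B) : Prop where
  fin : b.Finite
  hom : ∀ x ∈ b, ∃ g, x ∈ 𝒜 g
  ne0 : ∀ x ∈ b, x ≠ 0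
  gen : Algebra.adjoin k b = ⊤

variable (𝒜 : (Fin r → ℤ) → Submodule k B)

lemma exists_goodGen [Algebra.FiniteType k B] [GradedAlgebra 𝒜] : ∃ b, GoodGen 𝒜 b := by
  classical
  obtain ⟨s, hs⟩ := (Algebra.FiniteType.out : (⊤ : Subalgebra k B).FG)
  refine ⟨⋃ x ∈ s, (fun i => (decompose 𝒜 x i : B)) '' (decompose 𝒜 x).support, ?_, ?_, ?_, ?_⟩
  · exact Set.Finite.biUnion s.finite_toSet (fun x _ => (Finset.finite_toSet _).image _)
  · intro y hy
    simp only [Set.mem_iUnion] at hy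
    obtain ⟨x, _, i, _, rfl⟩ := hy
    exact ⟨i, SetLike.coe_mem _⟩
  · intro y hy
    simp only [Set.mem_iUnion] at hy
    obtain ⟨x, _, i, hi, rfl⟩ := hy
    simpa using hi
  · rw [eq_top_iff, ← hs, Algebra.adjoin_le_iff]
    intro x hx
    rw [← DirectSum.sum_support_decompose 𝒜 x]
    refine sum_mem fun i hi => Algebra.subset_adjoin ?_
    simp only [Set.mem_iUnion]
    exact ⟨x, hx, i, hi, rfl⟩

variable {𝒜} [GradedAlgebra 𝒜] {b : Set B}

lemma GoodGen.homS (hb : GoodGen 𝒜 b) {s : B} (hs : s ∈ Submonoid.closure b) : s ≠ 0 ∧ ∃ g, s ∈ 𝒜 g := by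
  induction hs using Submonoid.closure_induction with
  | mem x hx => exact ⟨hb.ne0 x hx, hb.hom x hx⟩
  | one => exact ⟨one_ne_zero, 0, SetLike.GradedOne.one_mem⟩
  | mul x y _ _ h1 h2 =>
    obtain ⟨hx, g, hg⟩ := h1
    obtain ⟨hy, h, hh⟩ := h2
    exact ⟨mul_ne_zero hx hy, g + h, SetLike.GradedMul.mul_mem hg hh⟩

lemma GoodGen.span (hb : GoodGen 𝒜 b) {α : B} {g : Fin r → ℤ} (hα : α ∈ 𝒜 g) :
    α ∈ Submodule.span k {s | s ∈ Submonoid.closure b ∧ s ∈ 𝒜 g} := by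
  have h1 : ∀ x : B, (decompose 𝒜 x g : B) ∈ Submodule.span k {s | s ∈ Submonoid.closure b ∧ s ∈ 𝒜 g} := by
    intro x
    have hx : x ∈ Submodule.span k (Submonoid.closure b : Set B) := by
      rw [← Algebra.adjoin_eq_span, hb.gen]; trivial
    induction hx using Submodule.span_induction with
    | mem x hx =>
      obtain ⟨_, h, hh⟩ := hb.homS hx
      by_cases hgh : h = g
      · subst hgh
        rw [decompose_of_mem_same 𝒜 hh]
        exact Submodule.subset_span ⟨hx, hh⟩
      · rw [decompose_of_mem_ne 𝒜 hh hgh]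
        exact zero_mem _
    | zero => simp
    | add x y _ _ h1 h2 =>
      rw [decompose_add]; exact add_mem h1 h2
    | smul c x _ h =>
      rw [decompose_smul]; exact Submodule.smul_mem _ c h
  have := h1 α
  rwa [decompose_of_mem_same 𝒜 hα] at this

variable {K : Type*} [Field K] [Algebra B K] [IsFractionRing B K] [Algebra k K] [IsScalarTower k B K]

variable (𝒜 b K) in
/-- homogeneous fractions of degree g -/
def HK (g : Fin r → ℤ) : Set K := {z | ∃ h, ∃ s ∈ Submonoid.closure b, s ∈ 𝒜 h ∧
  ∃ α ∈ 𝒜 (h + g), z * algebraMap B K s = algebraMap B K α}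

lemma HK_of {α : B} {g : Fin r → ℤ} (hα : α ∈ 𝒜 g) : algebraMap B K α ∈ HK 𝒜 b K g :=
  ⟨0, 1, one_mem _, SetLike.GradedOne.one_mem, α, by rwa [zero_add], by simp⟩

lemma HK_inv (hb : GoodGen 𝒜 b) {s : B} (hs : s ∈ Submonoid.closure b) {g : Fin r → ℤ} (hα : s ∈ 𝒜 g) :
    (algebraMap B K s)⁻¹ ∈ HK 𝒜 b K (-g) := by
  refine ⟨g, s, hs, hα, 1, ?_, ?_⟩
  · rw [add_neg_cancel]; exact SetLike.GradedOne.one_mem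
  · have := (hb.homS hs).1
    rw [map_one, inv_mul_cancel₀]
    simpa using this

lemma HK_mul {g h : Fin r → ℤ} {y z : K} (hy : y ∈ HK 𝒜 b K g) (hz : z ∈ HK 𝒜 b K h) :
    y * z ∈ HK 𝒜 b K (g + h) := by
  obtain ⟨i, s, hs, hsi, α, hα, e⟩ := hy
  obtain ⟨j, t, ht, htj, β, hβ, e'⟩ := hz
  refine ⟨i + j, s * t, mul_mem hs ht, SetLike.GradedMul.mul_mem hsi htj, α * β, ?_, ?_⟩
  · rw [show i + j + (g + h) = (i + g) + (j + h) by abel]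
    exact SetLike.GradedMul.mul_mem hα hβ
  · rw [map_mul, map_mul, ← e, ← e']; ring

lemma HK_add {g : Fin r → ℤ} {y z : K} (hy : y ∈ HK 𝒜 b K g) (hz : z ∈ HK 𝒜 b K g) :
    y + z ∈ HK 𝒜 b K g := by
  obtain ⟨i, s, hs, hsi, α, hα, e⟩ := hy
  obtain ⟨j, t, ht, htj, β, hβ, e'⟩ := hz
  refine ⟨i + j, s * t, mul_mem hs ht, SetLike.GradedMul.mul_mem hsi htj, t * α + s * β, add_mem ?_ ?_, ?_⟩
  · rw [show i + j + g = j + (i + g) by abel]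
    exact SetLike.GradedMul.mul_mem htj hα
  · rw [show i + j + g = i + (j + g) by abel]
    exact SetLike.GradedMul.mul_mem hsi hβ
  · rw [map_add, map_mul, map_mul, map_mul, ← e, ← e']; ring

lemma HK_indep (hb : GoodGen 𝒜 b) (F : Finset (Fin r → ℤ)) (z : (Fin r → ℤ) → K)
    (hz : ∀ m ∈ F, z m ∈ HK 𝒜 b K m) (hsum : ∑ m ∈ F, z m = 0) : ∀ m ∈ F, z m = 0 := by
  classical
  choose! d s hs hsd α hα e using hz
  have hS : ∏ m ∈ F, s m ∈ 𝒜 (∑ m ∈ F, d m) := by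
    exact SetLike.prod_mem_graded 𝒜 d s hsd
  have hS0 : ∏ m ∈ F, s m ≠ 0 := Finset.prod_ne_zero_iff.2 fun m hm => (hb.homS (hs m hm)).1
  have hmem : ∀ m ∈ F, α m * ∏ l ∈ F.erase m, s l ∈ 𝒜 (∑ l ∈ F, d l + m) := by
    intro m hm
    have h1 : ∏ l ∈ F.erase m, s l ∈ 𝒜 (∑ l ∈ F.erase m, d l) :=
      SetLike.prod_mem_graded 𝒜 d s (fun l hl => hsd l (Finset.mem_of_mem_erase hl))
    rw [← Finset.add_sum_erase F d hm, show d m + ∑ l ∈ F.erase m, d l + m = (d m + m) +  ∑ l ∈ F.erase m, d l by abel]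
    exact SetLike.GradedMul.mul_mem (hα m hm) h1
  have heq : ∀ m ∈ F, z m * algebraMap B K (∏ l ∈ F, s l) = algebraMap B K (α m * ∏ l ∈ F.erase m, s l) := by
    intro m hm
    rw [← Finset.mul_prod_erase F s hm, map_mul, map_mul, ← mul_assoc, e m hm]
  have hsumB : ∑ m ∈ F, α m * ∏ l ∈ F.erase m, s l = 0 := by
    apply IsFractionRing.injective B K
    rw [map_sum, map_zero, ← Finset.sum_congr rfl heq, ← Finset.sum_mul, hsum, zero_mul]
  intro m hm
  have h2 : α m * ∏ l ∈ F.erase m, s l = 0 := by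
    have h3 := congrArg (fun x => (decompose 𝒜 x (∑ l ∈ F, d l + m) : B)) hsumB
    simp only [decompose_sum, decompose_zero, DirectSum.zero_apply, DirectSum.sum_apply, AddSubmonoidClass.coe_finsetSum, ZeroMemClass.coe_zero] at h3
    rw [Finset.sum_eq_single m] at h3
    · rwa [decompose_of_mem_same 𝒜 (hmem m hm)] at h3
    · intro l hl hlm
      rw [decompose_of_mem_ne 𝒜 (hmem l hl)]
      simpa using hlm
    · exact fun h => absurd hm h
  have h4 := heq m hm
  rw [h2, map_zero] at h4
  rcases mul_eq_zero.1 h4 with h | h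
  · exact h
  · exact absurd ((map_eq_zero_iff _ (IsFractionRing.injective B K)).1 h) hS0

variable (𝒜 b K) in
/-- degree zero part -/
def HA : Subalgebra k K where
  carrier := HK 𝒜 b K 0
  mul_mem' := fun h1 h2 => by simpa using HK_mul h1 h2
  add_mem' := HK_add
  algebraMap_mem' := fun c => by
    rw [IsScalarTower.algebraMap_apply k B K]
    exact HK_of (SetLike.algebraMap_mem_graded 𝒜 c)

lemma mem_HA {z : K} : z ∈ HA 𝒜 b K ↔ z ∈ HK 𝒜 b K 0 := Iff.rfl

/-- homogeneous units -/
structure IsU (𝒜 : (Fin r → ℤ) → Submodule k B) (b : Set B) (g : Fin r → ℤ) (z : K) : Prop where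
  ne0 : z ≠ 0
  mem : z ∈ HK 𝒜 b K g
  inv : z⁻¹ ∈ HK 𝒜 b K (-g)

lemma IsU.one : IsU 𝒜 b 0 (1 : K) := by
  have : (1 : K) ∈ HK 𝒜 b K 0 := one_mem (HA 𝒜 b K)
  exact ⟨one_ne_zero, this, by simpa using this⟩

lemma IsU.mul {g h : Fin r → ℤ} {y z : K} (hy : IsU 𝒜 b g y) (hz : IsU 𝒜 b h z) :
    IsU 𝒜 b (g + h) (y * z) :=
  ⟨mul_ne_zero hy.ne0 hz.ne0, HK_mul hy.mem hz.mem, by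
    rw [mul_inv, neg_add]; exact HK_mul hy.inv hz.inv⟩

lemma IsU.inv' {g : Fin r → ℤ} {y : K} (hy : IsU 𝒜 b g y) : IsU 𝒜 b (-g) y⁻¹ :=
  ⟨inv_ne_zero hy.ne0, hy.inv, by rw [inv_inv, neg_neg]; exact hy.mem⟩

lemma IsU.pow {g : Fin r → ℤ} {y : K} (hy : IsU 𝒜 b g y) (n : ℕ) : IsU 𝒜 b (n • g) (y ^ n) := by
  induction n with
  | zero => simpa using IsU.one
  | succ n ih => rw [pow_succ, succ_nsmul]; exact ih.mul hy

lemma IsU.zpow {g : Fin r → ℤ} {y : K} (hy : IsU 𝒜 b g y) (n : ℤ) : IsU 𝒜 b (n • g) (y ^ n) := by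
  obtain ⟨n, rfl | rfl⟩ := n.eq_nat_or_neg
  · simpa using hy.pow n
  · simpa using (hy.pow n).inv'

lemma IsU.prod {ι : Type*} (F : Finset ι) (g : ι → Fin r → ℤ) (y : ι → K)
    (h : ∀ i, IsU 𝒜 b (g i) (y i)) : IsU 𝒜 b (∑ i ∈ F, g i) (∏ i ∈ F, y i) := by
  classical
  induction F using Finset.induction_on with
  | empty => simpa using IsU.one
  | insert i F hi ih => rw [Finset.sum_insert hi, Finset.prod_insert hi]; exact (h i).mul ih

lemma exists_U (hb : GoodGen 𝒜 b) (heff : AddSubgroup.closure {g : Fin r → ℤ | 𝒜 g ≠ ⊥} = ⊤)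
    (g : Fin r → ℤ) : ∃ z : K, IsU 𝒜 b g z := by
  have hg : g ∈ AddSubgroup.closure {g : Fin r → ℤ | 𝒜 g ≠ ⊥} := by rw [heff]; trivial
  induction hg using AddSubgroup.closure_induction with
  | mem g hg =>
    obtain ⟨s, hs, hsg⟩ : ∃ s, s ∈ Submonoid.closure b ∧ s ∈ 𝒜 g := by
      by_contra! h
      apply hg
      rw [eq_bot_iff]
      intro α hα
      have := hb.span hα
      have he : {s | s ∈ Submonoid.closure b ∧ s ∈ 𝒜 g} = ∅ := by
        ext s; simpa using h s
      rwa [he, Submodule.span_empty] at this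
    refine ⟨algebraMap B K s, ?_, HK_of hsg, HK_inv hb hs hsg⟩
    simpa using (hb.homS hs).1
  | zero => exact ⟨1, IsU.one⟩
  | add x y _ _ h1 h2 =>
    obtain ⟨y, hy⟩ := h1
    obtain ⟨z, hz⟩ := h2
    exact ⟨y * z, hy.mul hz⟩
  | neg x _ h =>
    obtain ⟨y, hy⟩ := h
    exact ⟨y⁻¹, hy.inv'⟩

/-- monomials -/
def um (t : Fin r → K) (g : Fin r → ℤ) : K := ∏ j, t j ^ g j

lemma um_isU {t : Fin r → K} (ht : ∀ j, IsU 𝒜 b (Pi.single j 1) (t j)) (g : Fin r → ℤ) :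
    IsU 𝒜 b g (um t g) := by
  have := IsU.prod Finset.univ _ _ (fun j => (ht j).zpow (g j))
  have hg : ∑ i, g i • (Pi.single i 1 : Fin r → ℤ) = g := by
    ext i
    simp [Finset.sum_apply, Pi.single_apply]
  rw [hg] at this
  exact this

lemma um_add {t : Fin r → K} (ht : ∀ j, t j ≠ 0) (g h : Fin r → ℤ) : um t (g + h) = um t g * um t h := by
  rw [um, um, um, ← Finset.prod_mul_distrib]
  exact Finset.prod_congr rfl fun j _ => zpow_add₀ (ht j) _ _

lemma um_zero {t : Fin r → K} : um t 0 = 1 := by simp [um]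

lemma um_neg {t : Fin r → K} (g : Fin r → ℤ) : um t (-g) = (um t g)⁻¹ := by
  simp [um]

lemma HA_fg (hb : GoodGen 𝒜 b) {t : Fin r → K} (ht : ∀ j, IsU 𝒜 b (Pi.single j 1) (t j)) :
    Algebra.FiniteType k (HA 𝒜 b K) := by
  classical
  choose! d hd using hb.hom
  let c : B → K := fun x => algebraMap B K x * um t (-d x)
  let C : Subalgebra k K := Algebra.adjoin k (c '' b ∪ (fun x => (c x)⁻¹) '' b)
  have hC : C.FG := by
    rw [Subalgebra.fg_def]
    exact ⟨_, (hb.fin.image _).union (hb.fin.image _), rfl⟩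
  suffices HA 𝒜 b K = C by
    rw [this]
    exact C.fg_iff_finiteType.1 hC
  have ht0 : ∀ j, t j ≠ 0 := fun j => (ht j).ne0
  apply le_antisymm
  · have hS : ∀ s ∈ Submonoid.closure b, ∃ h, s ∈ 𝒜 h ∧ algebraMap B K s * um t (-h) ∈ C ∧
        (algebraMap B K s * um t (-h))⁻¹ ∈ C := by
      intro s hs
      induction hs using Submonoid.closure_induction with
      | mem x hx =>
        exact ⟨d x, hd x hx, Algebra.subset_adjoin (Or.inl ⟨x, hx, rfl⟩),
          Algebra.subset_adjoin (Or.inr ⟨x, hx, rfl⟩)⟩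
      | one => exact ⟨0, SetLike.GradedOne.one_mem, by simp [um_zero, one_mem], by simp [um_zero, one_mem]⟩
      | mul x y _ _ h1 h2 =>
        obtain ⟨g, hg, h1, h1'⟩ := h1
        obtain ⟨h, hh, h2, h2'⟩ := h2
        have : algebraMap B K (x * y) * um t (-(g + h)) =
          (algebraMap B K x * um t (-g)) * (algebraMap B K y * um t (-h)) := by
          rw [neg_add, um_add ht0, map_mul]; ring
        refine ⟨g + h, SetLike.GradedMul.mul_mem hg hh, ?_, ?_⟩
        · rw [this]; exact mul_mem h1 h2
        · rw [this, mul_inv]; exact mul_mem h1' h2'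
    rintro z ⟨h, s, hs, hsh, α, hα, e⟩
    rw [add_zero] at hα
    have hs0 : algebraMap B K s ≠ 0 := by simpa using (hb.homS hs).1
    have hu0 : um t (-h) ≠ 0 := (um_isU ht (-h)).ne0
    have hz : z = (algebraMap B K α * um t (-h)) * (algebraMap B K s * um t (-h))⁻¹ := by
      rw [← e]; field_simp
    have hS' : ∀ s ∈ Submonoid.closure b, s ∈ 𝒜 h → algebraMap B K s * um t (-h) ∈ C ∧
        (algebraMap B K s * um t (-h))⁻¹ ∈ C := by
      intro s hs hsh
      obtain ⟨h', hh', h1, h2⟩ := hS s hs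
      have : h' = h := DirectSum.degree_eq_of_mem_mem 𝒜 hh' hsh (hb.homS hs).1
      subst this
      exact ⟨h1, h2⟩
    rw [hz]
    refine mul_mem ?_ (hS' s hs hsh).2
    have key : ∀ β ∈ Submodule.span k {s | s ∈ Submonoid.closure b ∧ s ∈ 𝒜 h},
        algebraMap B K β * um t (-h) ∈ C := by
      intro β hβ
      induction hβ using Submodule.span_induction with
      | mem x hx => exact (hS' x hx.1 hx.2).1
      | zero => simp
      | add x y _ _ h1 h2 => rw [map_add, add_mul]; exact add_mem h1 h2
      | smul c x _ h =>
        rw [Algebra.smul_def, map_mul, ← IsScalarTower.algebraMap_apply, mul_assoc]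
        exact mul_mem (C.algebraMap_mem c) h
    exact key α (hb.span hα)
  · rw [Algebra.adjoin_le_iff]
    rintro _ (⟨x, hx, rfl⟩ | ⟨x, hx, rfl⟩)
    · have := HK_mul (HK_of (b := b) (K := K) (hd x hx)) (um_isU ht (-d x)).mem
      rwa [add_neg_cancel] at this
    · have := HK_mul (HK_inv (K := K) hb (Submonoid.subset_closure hx) (hd x hx)) (um_isU ht (d x)).mem
      rw [neg_add_cancel] at this
      change (c x)⁻¹ ∈ HK 𝒜 b K 0
      simp only [c, um_neg, mul_inv, inv_inv]
      exact this
end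


section
open DirectSum
variable {k B : Type*} [Field k] [CommRing B] [IsDomain B] [Algebra k B] {r : ℕ}
variable {𝒜 : (Fin r → ℤ) → Submodule k B} [GradedAlgebra 𝒜] {b : Set B}
variable {K : Type*} [Field K] [Algebra B K] [IsFractionRing B K] [Algebra k K] [IsScalarTower k B K]

lemma t_algInd (hb : GoodGen 𝒜 b) {t : Fin r → K} (ht : ∀ j, IsU 𝒜 b (Pi.single j 1) (t j)) :
    AlgebraicIndependent (HA 𝒜 b K) t := by
  classical
  rw [algebraicIndependent_iff]
  intro p hp
  let φ : (Fin r →₀ ℕ) ↪ (Fin r → ℤ) := ⟨fun m i => (m i : ℤ), by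
    intro m n h
    ext i
    have := congrFun h i
    simpa using this⟩
  let w : (Fin r →₀ ℕ) → K := fun m => ((MvPolynomial.coeff m p : HA 𝒜 b K) : K) * ∏ i, t i ^ m i
  have hφ : ∀ m, Function.extend φ w 0 (φ m) = w m := fun m => φ.injective.extend_apply w 0 m
  have hum : ∀ m, um t (φ m) = ∏ i, t i ^ m i := by
    intro m
    change um t (fun i => (m i : ℤ)) = _
    simp [um]
  have hsum : ∑ m ∈ p.support.map φ, Function.extend φ w 0 m = 0 := by
    rw [Finset.sum_map, Finset.sum_congr rfl (fun m _ => hφ m), ← hp, MvPolynomial.aeval_def,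
      MvPolynomial.eval₂_eq']
    rfl
  have h0 := HK_indep hb (p.support.map φ) (Function.extend φ w 0) (by
    intro m hm
    obtain ⟨m, _, rfl⟩ := Finset.mem_map.1 hm
    rw [hφ]
    have := HK_mul (MvPolynomial.coeff m p).2 (um_isU ht (φ m)).mem
    rw [zero_add, hum] at this
    exact this) hsum
  ext m
  by_contra hm
  have hms : m ∈ p.support := by
    rw [MvPolynomial.mem_support_iff]
    intro h
    rw [h] at hm
    simp at hm
  have h1 := h0 (φ m) (Finset.mem_map_of_mem _ hms)
  rw [hφ] at h1
  rcases mul_eq_zero.1 h1 with h | h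
  · apply hm
    rw [h]; simp
  · rw [← hum] at h
    exact (um_isU ht (φ m)).ne0 h

/-- normalization to degree zero -/
def tw {t : Fin r → K} (ht : ∀ j, IsU 𝒜 b (Pi.single j 1) (t j)) {α : B} {g : Fin r → ℤ}
    (hα : α ∈ 𝒜 g) : HA 𝒜 b K :=
  ⟨algebraMap B K α * um t (-g), by
    have := HK_mul (HK_of (b := b) (K := K) hα) (um_isU ht (-g)).mem
    rwa [add_neg_cancel] at this⟩

lemma tw_mul {t : Fin r → K} (ht : ∀ j, IsU 𝒜 b (Pi.single j 1) (t j)) {α β : B} {g h i : Fin r → ℤ}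
    (hα : α ∈ 𝒜 g) (hβ : β ∈ 𝒜 h) (hαβ : α * β ∈ 𝒜 i) (hi : i = g + h) :
    tw ht hαβ = tw ht hα * tw ht hβ := by
  subst hi
  apply Subtype.ext
  simp only [tw, MulMemClass.coe_mul]
  rw [neg_add, um_add (fun j => (ht j).ne0), map_mul]; ring

lemma tw_unit (hb : GoodGen 𝒜 b) {t : Fin r → K} (ht : ∀ j, IsU 𝒜 b (Pi.single j 1) (t j)) {s : B}
    (hs : s ∈ Submonoid.closure b) {g : Fin r → ℤ} (hg : s ∈ 𝒜 g) : IsUnit (tw ht hg) := by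
  have := HK_mul (HK_inv (K := K) hb hs hg) (um_isU ht (g)).mem
  rw [neg_add_cancel] at this
  have hs0 : algebraMap B K s ≠ 0 := by simpa using (hb.homS hs).1
  have hu := (um_isU ht g).ne0
  refine IsUnit.of_mul_eq_one ⟨_, this⟩ ?_
  apply Subtype.ext
  simp only [tw, MulMemClass.coe_mul, um_neg, OneMemClass.coe_one]
  field_simp

lemma tw_rel {t : Fin r → K} (ht : ∀ j, IsU 𝒜 b (Pi.single j 1) (t j)) {s α : B}
    {g : Fin r → ℤ} (hg : s ∈ 𝒜 g) (hα : α ∈ 𝒜 g) (x : HA 𝒜 b K)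
    (e : (x : K) * algebraMap B K s = algebraMap B K α) : x * tw ht hg = tw ht hα := by
  apply Subtype.ext
  simp only [tw, MulMemClass.coe_mul, ← e]
  ring

lemma deg_mul {α β : B} {g h i : Fin r → ℤ} (hα : α ∈ 𝒜 g) (hβ : β ∈ 𝒜 h) (hαβ : α * β ∈ 𝒜 i)
    (h0 : α * β ≠ 0) : i = g + h :=
  DirectSum.degree_eq_of_mem_mem 𝒜 hαβ (SetLike.GradedMul.mul_mem hα hβ) h0

lemma exists_prime_tw [UniqueFactorizationMonoid B] {t : Fin r → K}
    (ht : ∀ j, IsU 𝒜 b (Pi.single j 1) (t j)) (P : Ideal (HA 𝒜 b K)) [hP : P.IsPrime] (α : B) :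
    α ≠ 0 → ∀ h, ∀ hα : α ∈ 𝒜 h, tw ht hα ∈ P → ∃ q, Prime q ∧ ∃ g, ∃ hq : q ∈ 𝒜 g, tw ht hq ∈ P := by
  induction α using UniqueFactorizationMonoid.induction_on_prime with
  | h₁ => exact fun h => absurd rfl h
  | h₂ x hx =>
    intro _ h hα hm
    exfalso
    obtain ⟨y, hy⟩ := hx.exists_right_inv
    have h1 : x * y ∈ 𝒜 0 := by rw [hy]; exact SetLike.GradedOne.one_mem
    have h1' : y * x ∈ 𝒜 0 := by rwa [mul_comm]
    have hne : x * y ≠ 0 := by rw [hy]; exact one_ne_zero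
    obtain ⟨g, hg⟩ := homog_factor 𝒜 y x 0 h1' (by rwa [mul_comm])
    have h2 := tw_mul ht hα hg h1 (deg_mul hα hg h1 hne)
    have h3 : tw ht h1 = 1 := by
      apply Subtype.ext
      simp [tw, hy, um_zero]
    apply hP.ne_top
    rw [Ideal.eq_top_iff_one, ← h3, h2]
    exact P.mul_mem_right _ hm
  | h₃ a p ha hp ih =>
    intro h0 h hα hm
    obtain ⟨g, hg⟩ := homog_factor 𝒜 p a h hα h0
    obtain ⟨g', hg'⟩ := homog_factor 𝒜 a p h (by rwa [mul_comm]) (by rwa [mul_comm])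
    rw [tw_mul ht hg hg' hα (deg_mul hg hg' hα h0)] at hm
    rcases hP.mem_or_mem hm with h1 | h1
    · exact ⟨p, hp, g, hg, h1⟩
    · exact ih ha g' hg' h1

lemma tw_prime (hb : GoodGen 𝒜 b) {t : Fin r → K}
    (ht : ∀ j, IsU 𝒜 b (Pi.single j 1) (t j)) {q : B} (hq : Prime q) {g : Fin r → ℤ} (hg : q ∈ 𝒜 g)
    (hu : ¬ IsUnit (tw (b := b) (K := K) ht hg)) : Prime (tw (b := b) (K := K) ht hg) := by
  have hinj := IsFractionRing.injective B K
  have hA : ∀ x : HA 𝒜 b K, ∃ h, ∃ s ∈ Submonoid.closure b, s ∈ 𝒜 h ∧ ∃ α ∈ 𝒜 h,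
      (x : K) * algebraMap B K s = algebraMap B K α := by
    rintro ⟨x, h, s, hs, hsh, α, hα, e⟩
    rw [add_zero] at hα
    exact ⟨h, s, hs, hsh, α, hα, e⟩
  have hdvd : ∀ (x : HA 𝒜 b K) (h : Fin r → ℤ) (s α : B), s ∈ Submonoid.closure b → s ∈ 𝒜 h → α ∈ 𝒜 h →
      (x : K) * algebraMap B K s = algebraMap B K α → q ∣ α → tw (b := b) (K := K) ht hg ∣ x := by
    rintro x h s α hs hsh hα e ⟨c, rfl⟩
    by_cases h0 : q * c = 0
    · rw [h0, map_zero] at e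
      have hs0 : algebraMap B K s ≠ 0 := by simpa using (hb.homS hs).1
      have : x = 0 := Subtype.ext (by simpa [hs0] using e)
      rw [this]; exact dvd_zero _
    · obtain ⟨g', hg'⟩ := homog_factor 𝒜 c q h (by rwa [mul_comm]) (by rwa [mul_comm])
      have h1 := tw_rel ht hsh hα x e
      rw [tw_mul ht hg hg' hα (deg_mul hg hg' hα h0)] at h1
      rw [← (tw_unit hb ht hs hsh).dvd_mul_right, h1]
      exact dvd_mul_right _ _
  have hS : ∀ σ ∈ Submonoid.closure b, ¬ q ∣ σ := by
    rintro σ hσ ⟨c, rfl⟩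
    obtain ⟨h0, i, hi⟩ := hb.homS hσ
    obtain ⟨g', hg'⟩ := homog_factor 𝒜 c q i (by rwa [mul_comm]) (by rwa [mul_comm])
    have := tw_unit hb ht hσ hi
    rw [tw_mul ht hg hg' hi (deg_mul hg hg' hi h0)] at this
    exact hu (isUnit_of_mul_isUnit_left this)
  refine ⟨?_, hu, ?_⟩
  · intro h
    have := congrArg Subtype.val h
    simp only [tw, ZeroMemClass.coe_zero] at this
    rcases mul_eq_zero.1 this with h | h
    · exact hq.ne_zero (by simpa using h)
    · exact (um_isU ht (-g)).ne0 h
  · rintro x y ⟨w, hw⟩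
    obtain ⟨h, s, hs, hsh, α, hα, e⟩ := hA x
    obtain ⟨h', s', hs', hsh', β, hβ, e'⟩ := hA y
    obtain ⟨h'', s'', hs'', hsh'', γ, hγ, e''⟩ := hA w
    obtain ⟨i, σ, hσ, hσi, δ, hδ, e3⟩ := (um_isU ht (-g)).mem
    have hwK := congrArg Subtype.val hw
    simp only [tw, MulMemClass.coe_mul] at hwK
    have : α * β * s'' * σ = q * (γ * s * s' * δ) := by
      apply hinj
      simp only [map_mul, ← e, ← e', ← e'', ← e3]
      linear_combination hwK * (algebraMap B K s) * (algebraMap B K s') * (algebraMap B K s'') * (algebraMap B K σ)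
    have hd : q ∣ α * β * s'' * σ := ⟨_, this⟩
    rcases hq.dvd_or_dvd hd with hd | hd
    · rcases hq.dvd_or_dvd hd with hd | hd
      · rcases hq.dvd_or_dvd hd with hd | hd
        · exact Or.inl (hdvd x h s α hs hsh hα e hd)
        · exact Or.inr (hdvd y h' s' β hs' hsh' hβ e' hd)
      · exact absurd hd (hS _ hs'')
    · exact absurd hd (hS _ hσ)

lemma HA_princ [UniqueFactorizationMonoid B] (hb : GoodGen 𝒜 b) {t : Fin r → K}
    (ht : ∀ j, IsU 𝒜 b (Pi.single j 1) (t j))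
    (hmax : ∀ P : Ideal (HA 𝒜 b K), P.IsPrime → P ≠ ⊥ → P.IsMaximal)
    (P : Ideal (HA 𝒜 b K)) (hP : P.IsMaximal) : ∃ p, P = Ideal.span {p} := by
  by_cases hP0 : P = ⊥
  · exact ⟨0, by simp [hP0]⟩
  obtain ⟨a, haP, ha0⟩ := Submodule.exists_mem_ne_zero_of_ne_bot hP0
  obtain ⟨h, s, hs, hsh, α, hα, e⟩ := a.2
  rw [add_zero] at hα
  have hα0 : α ≠ 0 := by
    rintro rfl
    rw [map_zero] at e
    have hs0 : algebraMap B K s ≠ 0 := by simpa using (hb.homS hs).1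
    exact ha0 (Subtype.ext (by simpa [hs0] using e))
  have := hP.isPrime
  obtain ⟨q, hq, g, hg, hm⟩ := exists_prime_tw ht P α hα0 h hα (by
    rw [← tw_rel ht hsh hα a e]; exact P.mul_mem_right _ haP)
  have hpr := tw_prime hb ht hq hg (fun hu => hP.ne_top (Ideal.eq_top_of_isUnit_mem _ hm hu))
  refine ⟨tw ht hg, ?_⟩
  have h1 : (Ideal.span {tw ht hg} : Ideal (HA 𝒜 b K)).IsMaximal := by
    apply hmax
    · exact (Ideal.span_singleton_prime hpr.ne_zero).2 hpr
    · simpa using hpr.ne_zero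
  exact (h1.eq_of_le hP.ne_top ((Ideal.span_singleton_le_iff_mem _).2 hm)).symm
end


lemma noether_one {k A : Type*} [Field k] [CommRing A] [IsDomain A] [Algebra k A]
    [Algebra.FiniteType k A] (h1 : Algebra.trdeg k A = 1) (K : Type*) [Field K] [Algebra A K]
    [IsFractionRing A K] [Algebra k K] [IsScalarTower k A K] :
    ∃ x : A, Transcendental k (algebraMap A K x) ∧
    (∀ a : A, IsIntegral (Algebra.adjoin k {algebraMap A K x}) (algebraMap A K a)) ∧
    ∀ P : Ideal A, P.IsPrime → P ≠ ⊥ → P.IsMaximal := by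
  obtain ⟨s, g, hg, hint⟩ := exists_integral_inj_algHom_of_fg k A
  have hb := noether_basis g hg hint
  have hc := hb.lift_cardinalMk_eq_trdeg
  have hs : s = 1 := by
    rw [h1] at hc
    simpa using hc
  subst hs
  let x := g (MvPolynomial.X 0)
  refine ⟨x, ?_, ?_, ?_⟩
  · have := hb.1.transcendental 0
    exact (transcendental_algebraMap_iff (IsFractionRing.injective A K)).2 this
  · intro a
    obtain ⟨p, hp, hpa⟩ := hint a
    let θ : MvPolynomial (Fin 1) k →ₐ[k] Algebra.adjoin k {algebraMap A K x} :=
      MvPolynomial.aeval (fun _ => ⟨algebraMap A K x, Algebra.subset_adjoin rfl⟩)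
    have hθ : (algebraMap (Algebra.adjoin k {algebraMap A K x}) K).comp θ.toRingHom =
        (algebraMap A K).comp g.toRingHom := by
      have : (Subalgebra.val _).comp θ = (IsScalarTower.toAlgHom k A K).comp g := by
        ext i
        fin_cases i
        simp [θ, x]
      exact congrArg AlgHom.toRingHom this
    refine ⟨p.map θ.toRingHom, hp.map _, ?_⟩
    rw [Polynomial.eval₂_map, hθ, ← Polynomial.hom_eval₂]
    erw [hpa]
    simp
  · let := g.toRingHom.toAlgebra
    have : Algebra.IsIntegral (MvPolynomial (Fin 1) k) A := ⟨hint⟩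
    have h2 := krull_int (MvPolynomial (Fin 1) k) A hg
    rw [MvPolynomial.ringKrullDim_of_isNoetherianRing] at h2
    have h3 : Ring.KrullDimLE 1 A := by
      rw [Ring.krullDimLE_iff, h2]
      simp
    intro P hP hP0
    exact Ring.krullDimLE_one_iff_of_noZeroDivisors.1 h3 P hP0 hP

section
universe u v
open DirectSum
variable {k : Type u} {B : Type v} [Field k] [CommRing B] [IsDomain B] [Algebra k B] {r : ℕ}
variable {𝒜 : (Fin r → ℤ) → Submodule k B} [GradedAlgebra 𝒜] {b : Set B}
variable {K : Type v} [Field K] [Algebra B K] [IsFractionRing B K] [Algebra k K] [IsScalarTower k B K]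

lemma K_gen {t : Fin r → K} (ht : ∀ j, IsU 𝒜 b (Pi.single j 1) (t j)) (L : IntermediateField k K)
    (hA : ∀ a ∈ HA 𝒜 b K, a ∈ L) (hL : ∀ j, t j ∈ L) : L = ⊤ := by
  classical
  rw [eq_top_iff]
  intro z _
  have hu : ∀ g, um t g ∈ L := fun g => prod_mem fun j _ => zpow_mem (hL j) _
  have hB : ∀ x : B, algebraMap B K x ∈ L := by
    intro x
    rw [← DirectSum.sum_support_decompose 𝒜 x, map_sum]
    refine sum_mem fun g _ => ?_
    have h1 := hA _ (tw (b := b) (K := K) ht (SetLike.coe_mem (decompose 𝒜 x g))).2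
    have h2 := mul_mem h1 (hu g)
    have h0 := (um_isU ht g).ne0
    simp only [tw, um_neg] at h2
    rwa [mul_assoc, inv_mul_cancel₀ h0, mul_one] at h2
  obtain ⟨x, y, _, rfl⟩ := IsFractionRing.div_surjective B z
  exact div_mem (hB x) (hB y)

lemma K_alg {t : Fin r → K} (ht : ∀ j, IsU 𝒜 b (Pi.single j 1) (t j)) :
    Algebra.IsAlgebraic (Algebra.adjoin (HA 𝒜 b K) (Set.range t)) K := by
  let C := Algebra.adjoin (HA 𝒜 b K) (Set.range t)
  have hC : ∀ z ∈ C, IsAlgebraic C z := fun z hz => isAlgebraic_algebraMap (⟨z, hz⟩ : C)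
  let L : IntermediateField k K :=
    { carrier := {z | IsAlgebraic C z}
      mul_mem' := fun h1 h2 => IsAlgebraic.mul h1 h2
      add_mem' := fun h1 h2 => IsAlgebraic.add h1 h2
      algebraMap_mem' := fun c => hC _ (C.algebraMap_mem (algebraMap k (HA 𝒜 b K) c))
      inv_mem' := fun z hz => IsAlgebraic.inv hz }
  have hL : L = ⊤ := K_gen ht L (fun a ha => hC _ (C.algebraMap_mem ⟨a, ha⟩))
    (fun j => hC _ (Algebra.subset_adjoin ⟨j, rfl⟩))
  refine ⟨fun z => ?_⟩
  have : z ∈ L := by rw [hL]; trivial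
  exact this

lemma trdeg_K (d : ℕ) (hd : Algebra.trdeg k B = d) : Algebra.trdeg k K = d := by
  have : FaithfulSMul k B := (faithfulSMul_iff_algebraMap_injective k B).2 (algebraMap k B).injective
  have : FaithfulSMul B K := (faithfulSMul_iff_algebraMap_injective B K).2 (IsFractionRing.injective B K)
  have : Algebra.IsAlgebraic B K := IsLocalization.isAlgebraic (nonZeroDivisors B) (R := B) (S := K)
  have hz : Algebra.trdeg B K = 0 := by
    exact trdeg_eq_zero_iff.2 this
  rw [← trdeg_add_eq k B (A := K), hz, hd, add_zero]

lemma trdeg_HA (hb : GoodGen 𝒜 b) {t : Fin r → K} (ht : ∀ j, IsU 𝒜 b (Pi.single j 1) (t j))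
    (hd : Algebra.trdeg k K = ((r + 1 : ℕ) : Cardinal)) : Algebra.trdeg k (HA 𝒜 b K) = 1 := by
  have h1 := (t_algInd hb ht).isTranscendenceBasis_iff_isAlgebraic.2 (K_alg ht)
  have h2 := h1.lift_cardinalMk_eq_trdeg
  have h3 : Algebra.trdeg (HA 𝒜 b K) K = r := by
    simpa using h2.symm
  rw [← trdeg_add_eq k (HA 𝒜 b K) (A := K), h3] at hd
  push_cast at hd
  rw [add_comm (r : Cardinal) 1] at hd
  exact Cardinal.eq_of_add_eq_add_right hd Cardinal.natCast_lt_aleph0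

lemma K_rational [IsAlgClosed k] [UniqueFactorizationMonoid B] [Algebra.FiniteType k B]
    (𝒜 : (Fin r → ℤ) → Submodule k B) [GradedAlgebra 𝒜]
    (hdim : ringKrullDim B = ((r + 1 : ℕ) : WithBot ℕ∞))
    (heff : AddSubgroup.closure {g : Fin r → ℤ | 𝒜 g ≠ ⊥} = ⊤) :
    Nonempty (FractionRing (MvPolynomial (Fin (r + 1)) k) ≃ₐ[k] K) := by
  obtain ⟨b, hb⟩ := exists_goodGen 𝒜
  have hU : ∀ j : Fin r, ∃ z : K, IsU 𝒜 b (Pi.single j 1) z := fun j => exists_U hb heff _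
  choose t ht using hU
  have hd : Algebra.trdeg k K = ((r + 1 : ℕ) : Cardinal) := trdeg_K (B := B) _ (trdeg_eq_dim _ hdim)
  have hA1 := trdeg_HA hb ht hd
  have hfg := HA_fg hb ht
  obtain ⟨x, hx, hint, hmax⟩ := noether_one hA1 (FractionRing (HA 𝒜 b K))
  obtain ⟨f, hf⟩ := core x hx hint (HA_princ hb ht hmax)
  have hinj : Function.Injective (HA 𝒜 b K).val := Subtype.val_injective
  let φ : FractionRing (HA 𝒜 b K) →ₐ[k] K := IsFractionRing.liftAlgHom (g := (HA 𝒜 b K).val) hinj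
  have hφ : ∀ a : HA 𝒜 b K, φ (algebraMap _ _ a) = a := fun a =>
    IsFractionRing.lift_algebraMap (g := (HA 𝒜 b K).val.toRingHom) hinj a
  let y : Fin (r + 1) → K := Fin.cons (φ f) t
  have hy : IntermediateField.adjoin k (Set.range y) = ⊤ := by
    apply K_gen ht
    · intro a ha
      have h1 : algebraMap (HA 𝒜 b K) (FractionRing (HA 𝒜 b K)) ⟨a, ha⟩ ∈ IntermediateField.adjoin k {f} := by
        rw [hf]; trivial
      have h2 : IntermediateField.adjoin k {f} ≤ (IntermediateField.adjoin k (Set.range y)).comap φ := by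
        rw [IntermediateField.adjoin_le_iff]
        rintro _ rfl
        exact IntermediateField.subset_adjoin _ _ ⟨0, by simp [y]⟩
      have h3 := h2 h1
      have h4 : φ (algebraMap (HA 𝒜 b K) _ ⟨a, ha⟩) ∈ IntermediateField.adjoin k (Set.range y) := h3
      rwa [hφ] at h4
    · intro j
      exact IntermediateField.subset_adjoin _ _ ⟨j.succ, by simp [y]⟩
  have halg : Algebra.IsAlgebraic (Algebra.adjoin k (Set.range y)) K := by
    let C := Algebra.adjoin k (Set.range y)
    have hC : ∀ z ∈ C, IsAlgebraic C z := fun z hz => isAlgebraic_algebraMap (⟨z, hz⟩ : C)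
    let L : IntermediateField k K :=
      { carrier := {z | IsAlgebraic C z}
        mul_mem' := fun h1 h2 => IsAlgebraic.mul h1 h2
        add_mem' := fun h1 h2 => IsAlgebraic.add h1 h2
        algebraMap_mem' := fun c => hC _ (C.algebraMap_mem c)
        inv_mem' := fun z hz => IsAlgebraic.inv hz }
    have hL : IntermediateField.adjoin k (Set.range y) ≤ L := by
      rw [IntermediateField.adjoin_le_iff]
      exact fun z hz => hC _ (Algebra.subset_adjoin hz)
    refine ⟨fun z => ?_⟩
    have : z ∈ L := hL (by rw [hy]; trivial)
    exact this
  have hbasis : IsTranscendenceBasis k y :=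
    Algebra.IsAlgebraic.isTranscendenceBasis_of_lift_le_trdeg_of_finite k y (by rw [hd]; simp)
  exact ⟨hbasis.1.aevalEquivField.trans ((IntermediateField.equivOfEq hy).trans IntermediateField.topEquiv)⟩
end

open MvPolynomial in
/-- Over an algebraically closed field `k`, an affine UFD `B` of dimension `d ≥ 1`
with an effective `ℤ^{d-1}`-grading is rational over `k`. -/
theorem affine_graded_ufd_rational
    (k B : Type*) [Field k] [IsAlgClosed k] [CommRing B] [IsDomain B] [Algebra k B]
    [Algebra.FiniteType k B] [UniqueFactorizationMonoid B]
    (d : ℕ) (hd : 1 ≤ d) (hdim : ringKrullDim B = d)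
    (𝒜 : (Fin (d - 1) → ℤ) → Submodule k B) [GradedAlgebra 𝒜]
    (heff : AddSubgroup.closure {g : Fin (d - 1) → ℤ | 𝒜 g ≠ ⊥} = ⊤) :
    ∃ e : FractionRing B ≃+* FractionRing (MvPolynomial (Fin d) k),
      ∀ c : k, e (algebraMap B (FractionRing B) (algebraMap k B c)) =
        algebraMap (MvPolynomial (Fin d) k) (FractionRing (MvPolynomial (Fin d) k)) (C c) := by
  obtain ⟨r, rfl⟩ : ∃ r, d = r + 1 := ⟨d - 1, by omega⟩
  obtain ⟨e⟩ := K_rational (r := r) (K := FractionRing B) 𝒜 hdim heff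
  refine ⟨e.symm.toRingEquiv, fun c => ?_⟩
  rw [← IsScalarTower.algebraMap_apply k B (FractionRing B)]
  rw [← MvPolynomial.algebraMap_eq, ← IsScalarTower.algebraMap_apply k (MvPolynomial (Fin (r + 1)) k)]
  exact e.symm.commutes c
end

section
/- Let k be a field and let Δ be trinomial data over k. Then the group of units of k[Δ] equals k^*, i.e., (k[Δ])^* = k^*. -/
open MvPolynomial

/-- Trinomial data `Δ` over a field `k`: an integer `n ≥ 2` with a partition
`n = n_0 + ⋯ + n_r` (`r ≥ 1`, `n_i ≥ 1`), exponent vectors `β_i ∈ ℤ₊^{n_i}` with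
`gcd(d_i, d_j) = 1` for `i ≠ j` where `d_i = gcd(β_{i1}, …, β_{i n_i})`, and distinct
scalars `λ_2, …, λ_r ∈ k^*`. -/
structure TrinomialData (k : Type*) [Field k] where
  /-- the number `r` of parts minus one -/
  r : ℕ
  one_le_r : 1 ≤ r
  /-- the partition `n = n_0 + ⋯ + n_r` -/
  n : Fin (r + 1) → ℕ
  one_le_n : ∀ i, 1 ≤ n i
  two_le_total : 2 ≤ ∑ i, n i
  /-- the exponent vectors `β_i` -/
  β : (i : Fin (r + 1)) → Fin (n i) → ℕ
  β_pos : ∀ i j, 0 < β i j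
  gcd_coprime : ∀ i j, i ≠ j →
    Nat.Coprime (Finset.univ.gcd (β i)) (Finset.univ.gcd (β j))
  /-- the scalars `λ_i` (only the values for `2 ≤ i` are relevant) -/
  lam : Fin (r + 1) → k
  lam_ne_zero : ∀ i : Fin (r + 1), 2 ≤ (i : ℕ) → lam i ≠ 0
  lam_injOn : ∀ i j : Fin (r + 1), 2 ≤ (i : ℕ) → 2 ≤ (j : ℕ) → lam i = lam j → i = j

variable {k : Type*} [Field k]

/-- The variables `t_{ij}`, `0 ≤ i ≤ r`, `1 ≤ j ≤ n_i`. -/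
def TrinomialData.Vars (Δ : TrinomialData k) : Type :=
  Σ i : Fin (Δ.r + 1), Fin (Δ.n i)

/-- The monomial `T_i^{β_i} = t_{i1}^{β_{i1}} ⋯ t_{i n_i}^{β_{i n_i}}`. -/
noncomputable def TrinomialData.mon (Δ : TrinomialData k) (i : Fin (Δ.r + 1)) :
    MvPolynomial Δ.Vars k :=
  ∏ j : Fin (Δ.n i), (X (⟨i, j⟩ : Δ.Vars)) ^ Δ.β i j

/-- The ideal of trinomial relations `T_0^{β_0} + λ_i T_1^{β_1} + T_i^{β_i}`, `2 ≤ i ≤ r`. -/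
noncomputable def TrinomialData.relIdeal (Δ : TrinomialData k) :
    Ideal (MvPolynomial Δ.Vars k) :=
  Ideal.span {p | ∃ i : Fin (Δ.r + 1), 2 ≤ (i : ℕ) ∧
    p = Δ.mon 0 + C (Δ.lam i) * Δ.mon 1 + Δ.mon i}

/-- The ring `k[Δ]` associated to trinomial data `Δ`. -/
noncomputable abbrev TrinomialData.Ring (Δ : TrinomialData k) : Type _ :=
  MvPolynomial Δ.Vars k ⧸ Δ.relIdeal

/-- `Δ` is reduced if either `r = 1` and `β_{01} = β_{11} = 1`, or `r ≥ 2` and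
`|β_i| ≥ 2` for each `i`. -/
def TrinomialData.Reduced (Δ : TrinomialData k) : Prop :=
  (Δ.r = 1 ∧ Δ.β 0 ⟨0, Δ.one_le_n 0⟩ = 1 ∧ Δ.β 1 ⟨0, Δ.one_le_n 1⟩ = 1) ∨
  (2 ≤ Δ.r ∧ ∀ i, 2 ≤ ∑ j, Δ.β i j)

namespace TrinomialData

instance (Δ : TrinomialData k) : Fintype Δ.Vars :=
  inferInstanceAs (Fintype (Σ i : Fin (Δ.r + 1), Fin (Δ.n i)))

noncomputable instance (Δ : TrinomialData k) : DecidableEq Δ.Vars := Classical.decEq _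

/-- the variable -/
def v (Δ : TrinomialData k) (i : Fin (Δ.r + 1)) (j : Fin (Δ.n i)) : Δ.Vars := ⟨i, j⟩

lemma v_inj (Δ : TrinomialData k) (i : Fin (Δ.r + 1)) (j j' : Fin (Δ.n i))
    (h : Δ.v i j = Δ.v i j') : j = j' := by
  cases h
  rfl

lemma v_fst (Δ : TrinomialData k) (i i' : Fin (Δ.r + 1)) (j j')
    (h : Δ.v i j = Δ.v i' j') : i = i' := congrArg Sigma.fst h

lemma v_surj (Δ : TrinomialData k) (x : Δ.Vars) : ∃ i j, x = Δ.v i j := ⟨x.1, x.2, rfl⟩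

/-- exponent vector of `T_i` -/
noncomputable def b (Δ : TrinomialData k) (i : Fin (Δ.r + 1)) : Δ.Vars →₀ ℕ :=
  Finsupp.equivFunOnFinite.symm fun x => if x.1 = i then Δ.β x.1 x.2 else 0

lemma b_apply (Δ : TrinomialData k) (i : Fin (Δ.r + 1)) (x : Δ.Vars) :
    Δ.b i x = if x.1 = i then Δ.β x.1 x.2 else 0 := rfl

lemma b_v (Δ : TrinomialData k) (i i' : Fin (Δ.r + 1)) (j) :
    Δ.b i (Δ.v i' j) = if i' = i then Δ.β i' j else 0 := rfl

lemma b_eq_sum (Δ : TrinomialData k) (i : Fin (Δ.r + 1)) :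
    Δ.b i = ∑ j : Fin (Δ.n i), Finsupp.single (Δ.v i j) (Δ.β i j) := by
  ext x
  obtain ⟨i', j', rfl⟩ := Δ.v_surj x
  rw [b_v, Finsupp.finsetSum_apply]
  by_cases h : i' = i
  · subst h
    simp only [if_true]
    rw [Finset.sum_eq_single j']
    · simp
    · intro j _ hj
      rw [Finsupp.single_apply, if_neg]
      intro h
      exact hj (Δ.v_inj _ _ _ h)
    · simp
  · simp only [h, if_false]
    symm
    apply Finset.sum_eq_zero
    intro j _
    rw [Finsupp.single_apply, if_neg]
    intro h'
    exact h (Δ.v_fst _ _ _ _ h').symm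

lemma mon_eq (Δ : TrinomialData k) (i : Fin (Δ.r + 1)) : Δ.mon i = monomial (Δ.b i) 1 := by
  rw [b_eq_sum, monomial_sum_one]
  simp only [← X_pow_eq_monomial]
  rfl

lemma val_one (Δ : TrinomialData k) : ((1 : Fin (Δ.r + 1)) : ℕ) = 1 := by
  have := Δ.one_le_r
  rw [Fin.val_one']
  exact Nat.mod_eq_of_lt (by omega)

instance neZ (Δ : TrinomialData k) (i) : NeZero (Δ.n i) := ⟨by have := Δ.one_le_n i; omega⟩

noncomputable def cc (Δ : TrinomialData k) (i : Fin (Δ.r + 1)) (γ : Δ.Vars →₀ ℕ) : ℕ :=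
  if 2 ≤ (i : ℕ) then Finset.univ.inf' Finset.univ_nonempty
    (fun j : Fin (Δ.n i) => γ (Δ.v i j) / Δ.β i j) else 0

lemma cc_congr (Δ : TrinomialData k) (i : Fin (Δ.r + 1)) (γ γ' : Δ.Vars →₀ ℕ)
    (h : 2 ≤ (i : ℕ) → ∀ j, γ (Δ.v i j) = γ' (Δ.v i j)) :
    Δ.cc i γ = Δ.cc i γ' := by
  unfold cc
  split_ifs with h2
  · simp only [h h2]
  · rfl

lemma cc_add_ne (Δ : TrinomialData k) (i i' : Fin (Δ.r + 1)) (γ : Δ.Vars →₀ ℕ)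
    (h : 2 ≤ (i : ℕ) → i ≠ i') : Δ.cc i (γ + Δ.b i') = Δ.cc i γ := by
  apply cc_congr
  intro h2 j
  simp [b_v, h h2]

lemma cc_add_self (Δ : TrinomialData k) (i : Fin (Δ.r + 1)) (γ : Δ.Vars →₀ ℕ)
    (h : 2 ≤ (i : ℕ)) : Δ.cc i (γ + Δ.b i) = Δ.cc i γ + 1 := by
  unfold cc
  simp only [h, if_true, Finsupp.add_apply, b_v]
  have : ∀ j, (γ (Δ.v i j) + Δ.β i j) / Δ.β i j = γ (Δ.v i j) / Δ.β i j + 1 :=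
    fun j => Nat.add_div_right _ (Δ.β_pos i j)
  simp only [this]
  apply le_antisymm
  · obtain ⟨j, -, hj⟩ := Finset.exists_mem_eq_inf' (s := Finset.univ) Finset.univ_nonempty
      (fun j : Fin (Δ.n i) => γ (Δ.v i j) / Δ.β i j)
    rw [hj]
    exact Finset.inf'_le _ (Finset.mem_univ j)
  · rw [Finset.le_inf'_iff]
    intro j _
    exact Nat.add_le_add_right (Finset.inf'_le _ (Finset.mem_univ j)) 1

lemma cc_mul_le (Δ : TrinomialData k) (i : Fin (Δ.r + 1)) (γ : Δ.Vars →₀ ℕ) (j) :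
    Δ.cc i γ * Δ.β i j ≤ γ (Δ.v i j) := by
  unfold cc
  split_ifs with h
  · rw [← Nat.le_div_iff_mul_le (Δ.β_pos i j)]
    exact Finset.inf'_le (fun j : Fin (Δ.n i) => γ (Δ.v i j) / Δ.β i j) (Finset.mem_univ j)
  · simp

lemma cc_zero_exists (Δ : TrinomialData k) (i : Fin (Δ.r + 1)) (γ : Δ.Vars →₀ ℕ)
    (h : 2 ≤ (i : ℕ)) (h0 : Δ.cc i γ = 0) : ∃ j, γ (Δ.v i j) < Δ.β i j := by
  unfold cc at h0
  rw [if_pos h] at h0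
  obtain ⟨j, -, hj⟩ := Finset.exists_mem_eq_inf' (s := Finset.univ) Finset.univ_nonempty
      (fun j : Fin (Δ.n i) => γ (Δ.v i j) / Δ.β i j)
  refine ⟨j, ?_⟩
  rw [h0] at hj
  have := (Nat.div_eq_zero_iff).1 hj.symm
  have := Δ.β_pos i j
  omega

noncomputable def cs (Δ : TrinomialData k) (γ : Δ.Vars →₀ ℕ) : Δ.Vars →₀ ℕ :=
  ∑ i, Δ.cc i γ • Δ.b i

lemma cs_apply (Δ : TrinomialData k) (γ : Δ.Vars →₀ ℕ) (x : Δ.Vars) :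
    Δ.cs γ x = Δ.cc x.1 γ * Δ.β x.1 x.2 := by
  simp [cs, b_apply]

noncomputable def rest (Δ : TrinomialData k) (γ : Δ.Vars →₀ ℕ) : Δ.Vars →₀ ℕ := γ - Δ.cs γ

lemma rest_add (Δ : TrinomialData k) (γ : Δ.Vars →₀ ℕ) : Δ.rest γ + Δ.cs γ = γ := by
  apply tsub_add_cancel_of_le
  intro x
  rw [cs_apply]
  exact Δ.cc_mul_le x.1 γ x.2

lemma cc_rest (Δ : TrinomialData k) (γ : Δ.Vars →₀ ℕ) (i) : Δ.cc i (Δ.rest γ) = 0 := by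
  by_cases h : 2 ≤ (i : ℕ)
  swap
  · simp [cc, h]
  have key : ∀ j, Δ.rest γ (Δ.v i j) + Δ.cc i γ * Δ.β i j = γ (Δ.v i j) := by
    intro j
    conv_rhs => rw [← Δ.rest_add γ]
    rw [Finsupp.add_apply, cs_apply]
    rfl
  by_contra hne
  have h1 : Δ.cc i γ + 1 ≤ Δ.cc i γ := by
    conv_rhs => unfold cc
    rw [if_pos h, Finset.le_inf'_iff]
    intro j _
    rw [Nat.le_div_iff_mul_le (Δ.β_pos i j), ← key j]
    have := Δ.cc_mul_le i (Δ.rest γ) j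
    have h2 : 1 * Δ.β i j ≤ Δ.cc i (Δ.rest γ) * Δ.β i j :=
      Nat.mul_le_mul_right _ (Nat.one_le_iff_ne_zero.2 hne)
    rw [add_mul]
    omega
  omega

/-- the value of `T_i` for `i ≥ 2` -/
noncomputable def GG (Δ : TrinomialData k) (i : Fin (Δ.r + 1)) : MvPolynomial Δ.Vars k :=
  -(Δ.mon 0 + C (Δ.lam i) * Δ.mon 1)

noncomputable def Nm (Δ : TrinomialData k) (γ : Δ.Vars →₀ ℕ) : MvPolynomial Δ.Vars k :=
  monomial (Δ.rest γ) 1 * ∏ i, Δ.GG i ^ Δ.cc i γ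

lemma Nm_add_small (Δ : TrinomialData k) (γ : Δ.Vars →₀ ℕ) (i : Fin (Δ.r + 1))
    (h : ¬ 2 ≤ (i : ℕ)) : Δ.Nm (γ + Δ.b i) = Δ.mon i * Δ.Nm γ := by
  have hc : ∀ i', Δ.cc i' (γ + Δ.b i) = Δ.cc i' γ := fun i' =>
    Δ.cc_add_ne i' i γ (fun h' e => h (e ▸ h'))
  have hcs : Δ.cs (γ + Δ.b i) = Δ.cs γ := by simp [cs, hc]
  have hr : Δ.rest (γ + Δ.b i) = Δ.b i + Δ.rest γ := by
    have h1 := Δ.rest_add (γ + Δ.b i)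
    have h2 := Δ.rest_add γ
    rw [hcs] at h1
    apply add_right_cancel (b := Δ.cs γ)
    rw [h1, add_assoc, h2, add_comm]
  simp only [Nm, hc, hr, mon_eq, ← mul_assoc, monomial_mul, one_mul]

lemma Nm_add_big (Δ : TrinomialData k) (γ : Δ.Vars →₀ ℕ) (i : Fin (Δ.r + 1))
    (h : 2 ≤ (i : ℕ)) : Δ.Nm (γ + Δ.b i) = Δ.GG i * Δ.Nm γ := by
  have hc : ∀ i', Δ.cc i' (γ + Δ.b i) = Δ.cc i' γ + if i' = i then 1 else 0 := by
    intro i'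
    split_ifs with e
    · subst e; exact Δ.cc_add_self i' γ h
    · exact Δ.cc_add_ne i' i γ (fun _ => e)
  have hcs : Δ.cs (γ + Δ.b i) = Δ.cs γ + Δ.b i := by
    simp [cs, hc, add_smul, Finset.sum_add_distrib]
  have hr : Δ.rest (γ + Δ.b i) = Δ.rest γ := by
    have h1 := Δ.rest_add (γ + Δ.b i)
    have h2 := Δ.rest_add γ
    rw [hcs] at h1
    apply add_right_cancel (b := Δ.cs γ + Δ.b i)
    rw [h1, ← add_assoc, h2]
  have hp : ∏ i', Δ.GG i' ^ Δ.cc i' (γ + Δ.b i) = (∏ i', Δ.GG i' ^ Δ.cc i' γ) * Δ.GG i := by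
    simp only [hc, pow_add, Finset.prod_mul_distrib]
    congr 1
    simp [Finset.prod_ite_eq', pow_ite]
  rw [Nm, hr, hp, Nm]
  ring

noncomputable def N (Δ : TrinomialData k) : MvPolynomial Δ.Vars k →ₗ[k] MvPolynomial Δ.Vars k :=
  (basisMonomials Δ.Vars k).constr k Δ.Nm

lemma N_monomial (Δ : TrinomialData k) (γ : Δ.Vars →₀ ℕ) (c : k) :
    Δ.N (monomial γ c) = c • Δ.Nm γ := by
  have : Δ.N (monomial γ 1) = Δ.Nm γ := by
    have := (basisMonomials Δ.Vars k).constr_basis k Δ.Nm γ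
    simpa [N] using this
  rw [← this, ← map_smul, smul_monomial]
  simp

lemma N_mul_rel (Δ : TrinomialData k) (i : Fin (Δ.r + 1)) (h : 2 ≤ (i : ℕ))
    (p : MvPolynomial Δ.Vars k) :
    Δ.N (p * (Δ.mon 0 + C (Δ.lam i) * Δ.mon 1 + Δ.mon i)) = 0 := by
  induction p using MvPolynomial.induction_on' with
  | add p q hp hq => rw [add_mul, map_add, hp, hq, add_zero]
  | monomial γ a =>
    have h0 : Δ.N (monomial γ a * Δ.mon 0) = a • (Δ.mon 0 * Δ.Nm γ) := by
      rw [mon_eq, monomial_mul, N_monomial, Nm_add_small _ _ _ (by simp), mon_eq, mul_one]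
    have h1 : Δ.N (monomial γ a * (C (Δ.lam i) * Δ.mon 1)) =
        a • (C (Δ.lam i) * Δ.mon 1 * Δ.Nm γ) := by
      rw [mul_left_comm, C_mul', map_smul, mon_eq, monomial_mul, N_monomial,
        Nm_add_small _ _ _ (by rw [val_one]; omega), mon_eq, mul_one, mul_assoc, C_mul',
        smul_comm]
    have hi : Δ.N (monomial γ a * Δ.mon i) = a • (Δ.GG i * Δ.Nm γ) := by
      rw [mon_eq, monomial_mul, N_monomial, Nm_add_big _ _ _ h, mul_one]
    rw [mul_add, mul_add, map_add, map_add, h0, h1, hi, ← smul_add, ← smul_add, ← add_mul,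
      ← add_mul, GG, add_neg_cancel, zero_mul, smul_zero]

lemma N_of_mem (Δ : TrinomialData k) (p : MvPolynomial Δ.Vars k) (hp : p ∈ Δ.relIdeal) :
    Δ.N p = 0 := by
  unfold relIdeal at hp
  induction hp using Submodule.span_induction with
  | mem x hx =>
    obtain ⟨i, hi, rfl⟩ := hx
    have := Δ.N_mul_rel i hi 1
    rwa [one_mul] at this
  | zero => simp
  | add x y _ _ hx hy => rw [map_add, hx, hy, add_zero]
  | smul a x hx' hx =>
    refine Submodule.span_induction (p := fun x _ => ∀ a, Δ.N (a • x) = 0) ?_ ?_ ?_ ?_ hx' a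
    · rintro x ⟨i, hi, rfl⟩ a
      exact Δ.N_mul_rel i hi a
    · simp
    · intro x y _ _ hx hy a
      rw [smul_add, map_add, hx, hy, add_zero]
    · intro c x _ hx a
      rw [smul_smul]; exact hx _

lemma mk_GG (Δ : TrinomialData k) (i : Fin (Δ.r + 1)) (h : 2 ≤ (i : ℕ)) :
    Ideal.Quotient.mk Δ.relIdeal (Δ.GG i) = Ideal.Quotient.mk Δ.relIdeal (Δ.mon i) := by
  symm
  rw [Ideal.Quotient.eq]
  apply Ideal.subset_span
  refine ⟨i, h, ?_⟩
  rw [GG]; ring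

lemma monomial_eq (Δ : TrinomialData k) (γ : Δ.Vars →₀ ℕ) :
    (monomial γ 1 : MvPolynomial Δ.Vars k) =
      monomial (Δ.rest γ) 1 * ∏ i, Δ.mon i ^ Δ.cc i γ := by
  conv_lhs => rw [← Δ.rest_add γ]
  have : ∏ i, Δ.mon i ^ Δ.cc i γ = monomial (Δ.cs γ) 1 := by
    rw [cs, monomial_sum_one]
    simp [mon_eq, monomial_pow]
  rw [this, monomial_mul, one_mul]

lemma mk_Nm (Δ : TrinomialData k) (γ : Δ.Vars →₀ ℕ) :
    Ideal.Quotient.mk Δ.relIdeal (Δ.Nm γ) = Ideal.Quotient.mk Δ.relIdeal (monomial γ 1) := by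
  rw [monomial_eq, Nm, map_mul, map_mul, map_prod, map_prod]
  congr 1
  apply Finset.prod_congr rfl
  intro i _
  by_cases h : 2 ≤ (i : ℕ)
  · rw [map_pow, map_pow, mk_GG _ _ h]
  · simp [cc, h]

lemma mk_N (Δ : TrinomialData k) (p : MvPolynomial Δ.Vars k) :
    Ideal.Quotient.mk Δ.relIdeal (Δ.N p) = Ideal.Quotient.mk Δ.relIdeal p := by
  induction p using MvPolynomial.induction_on' with
  | add p q hp hq => rw [map_add, map_add, map_add, hp, hq]
  | monomial γ a =>
    rw [N_monomial, ← C_mul', map_mul, mk_Nm, ← map_mul, C_mul_monomial, mul_one]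

/-- normal polynomials -/
noncomputable def nrm (Δ : TrinomialData k) : Submodule k (MvPolynomial Δ.Vars k) :=
  restrictSupport k {γ | ∀ i, Δ.cc i γ = 0}

lemma mon_mul_nrm (Δ : TrinomialData k) (i : Fin (Δ.r + 1)) (h : ¬ 2 ≤ (i : ℕ))
    (p : MvPolynomial Δ.Vars k) (hp : p ∈ Δ.nrm) : Δ.mon i * p ∈ Δ.nrm := by
  have hp' := hp
  rw [nrm, restrictSupport_eq_span] at hp'
  induction hp' using Submodule.span_induction with
  | mem x hx =>
    obtain ⟨γ, hγ, rfl⟩ := hx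
    simp only [mon_eq, monomial_mul, nrm, monomial_mem_restrictSupport]
    left
    intro i'
    rw [add_comm, cc_add_ne]
    · exact hγ i'
    · intro h' e; exact h (e ▸ h')
  | zero => simp
  | add x y hx' hy' hx hy =>
    rw [← restrictSupport_eq_span] at hx' hy'
    rw [mul_add]; exact add_mem (hx hx') (hy hy')
  | smul a x hx' hx =>
    rw [← restrictSupport_eq_span] at hx'
    rw [mul_smul_comm]; exact Submodule.smul_mem _ _ (hx hx')

lemma GG_mul_nrm (Δ : TrinomialData k) (i : Fin (Δ.r + 1))
    (p : MvPolynomial Δ.Vars k) (hp : p ∈ Δ.nrm) : Δ.GG i * p ∈ Δ.nrm := by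
  rw [GG, neg_mul, add_mul, mul_assoc, C_mul']
  exact neg_mem (add_mem (Δ.mon_mul_nrm 0 (by simp) p hp) (Submodule.smul_mem _ _
    (Δ.mon_mul_nrm 1 (by rw [val_one]; omega) p hp)))

lemma Nm_nrm (Δ : TrinomialData k) (γ : Δ.Vars →₀ ℕ) : Δ.Nm γ ∈ Δ.nrm := by
  have hpow : ∀ i (n : ℕ) p, p ∈ Δ.nrm → Δ.GG i ^ n * p ∈ Δ.nrm := by
    intro i n p hp
    induction n with
    | zero => simpa using hp
    | succ n ih => rw [pow_succ', mul_assoc]; exact Δ.GG_mul_nrm i _ ih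
  have hprod : ∀ (s : Finset (Fin (Δ.r + 1))) p, p ∈ Δ.nrm →
      (∏ i ∈ s, Δ.GG i ^ Δ.cc i γ) * p ∈ Δ.nrm := by
    intro s p hp
    induction s using Finset.induction_on with
    | empty => simpa using hp
    | insert a s ha ih => rw [Finset.prod_insert ha, mul_assoc]; exact hpow _ _ _ ih
  rw [Nm, mul_comm]
  apply hprod
  rw [nrm, monomial_mem_restrictSupport]
  left
  exact Δ.cc_rest γ

lemma N_nrm (Δ : TrinomialData k) (p : MvPolynomial Δ.Vars k) : Δ.N p ∈ Δ.nrm := by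
  induction p using MvPolynomial.induction_on' with
  | add p q hp hq => rw [map_add]; exact add_mem hp hq
  | monomial γ a => rw [N_monomial]; exact Submodule.smul_mem _ _ (Δ.Nm_nrm γ)

lemma N_one (Δ : TrinomialData k) : Δ.N 1 = 1 := by
  have hc : ∀ i, Δ.cc i 0 = 0 := by
    intro i
    have := fun j => Δ.cc_mul_le i 0 j
    by_contra h
    have h1 := Nat.mul_le_mul (Nat.one_le_iff_ne_zero.2 h) (Δ.β_pos i 0)
    have h2 := this 0
    simp only [Finsupp.coe_zero, Pi.zero_apply] at h2
    omega
  have h : Δ.Nm 0 = 1 := by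
    simp [Nm, hc, rest]
  have := Δ.N_monomial 0 1
  rw [h] at this
  simpa using this

/-- the relation lattice -/
def Lat (Δ : TrinomialData k) : AddSubgroup (Δ.Vars → ℤ) where
  carrier := {f | ∃ c : Fin (Δ.r + 1) → ℤ, c 1 = 0 ∧ ∑ i, c i = 0 ∧
    ∀ i j, f (Δ.v i j) = c i * Δ.β i j}
  zero_mem' := ⟨0, by simp⟩
  add_mem' := by
    rintro f g ⟨c, h1, h2, h3⟩ ⟨c', h1', h2', h3'⟩
    refine ⟨c + c', by simp [h1, h1'], by simp [Finset.sum_add_distrib, h2, h2'], ?_⟩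
    intro i j
    simp [h3, h3', add_mul]
  neg_mem' := by
    rintro f ⟨c, h1, h2, h3⟩
    refine ⟨-c, by simp [h1], by simp [h2], ?_⟩
    intro i j
    simp [h3]

lemma Lat_prime (Δ : TrinomialData k) (p : ℕ) (hp : p.Prime) (f : Δ.Vars → ℤ)
    (h : p • f ∈ Δ.Lat) : f ∈ Δ.Lat := by
  obtain ⟨c, h1, h2, h3⟩ := h
  have hpi : Prime (p : ℤ) := Nat.prime_iff_prime_int.1 hp
  have hd : ∀ i, ¬ (p : ℤ) ∣ c i → p ∣ Finset.univ.gcd (Δ.β i) := by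
    intro i hi
    apply Finset.dvd_gcd
    intro j _
    have : (p : ℤ) ∣ c i * Δ.β i j := by
      rw [← h3]; simp
    have := (hpi.dvd_or_dvd this).resolve_left hi
    exact_mod_cast this
  have hc : ∀ i, (p : ℤ) ∣ c i := by
    intro i
    by_contra hi
    apply hi
    have hs : ∑ i' ∈ Finset.univ.erase i, c i' + c i = 0 := by
      rw [Finset.sum_erase_add _ _ (Finset.mem_univ i), h2]
    have : (p : ℤ) ∣ ∑ i' ∈ Finset.univ.erase i, c i' := by
      apply Finset.dvd_sum
      intro i' hi'
      by_contra hn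
      exact Nat.not_coprime_of_dvd_of_dvd hp.one_lt (hd i hi) (hd i' hn)
        (Δ.gcd_coprime i i' (Finset.ne_of_mem_erase hi').symm)
    rw [show c i = - ∑ i' ∈ Finset.univ.erase i, c i' by linarith]
    exact (dvd_neg).2 this
  choose e he using hc
  have hp0 : (p : ℤ) ≠ 0 := hpi.ne_zero
  refine ⟨e, ?_, ?_, ?_⟩
  · have := he 1
    rw [h1] at this
    exact (mul_eq_zero.1 this.symm).resolve_left hp0
  · simp only [he] at h2
    rw [← Finset.mul_sum] at h2
    exact (mul_eq_zero.1 h2).resolve_left hp0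
  · intro i j
    have := h3 i j
    rw [he i] at this
    apply mul_left_cancel₀ hp0
    rw [← mul_assoc, ← this]
    simp

lemma Lat_sat (Δ : TrinomialData k) (n : ℕ) : n ≠ 0 → ∀ (f : Δ.Vars → ℤ),
    n • f ∈ Δ.Lat → f ∈ Δ.Lat := by
  induction n using induction_on_primes with
  | zero => intro h; exact absurd rfl h
  | one => intro _ f h; simpa using h
  | prime_mul p a hp ih =>
    intro h f hf
    apply ih (right_ne_zero_of_mul h)
    apply Δ.Lat_prime p hp
    rwa [← mul_smul]

abbrev GQ (Δ : TrinomialData k) : Type := (Δ.Vars → ℤ) ⧸ Δ.Lat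

instance torsGQ (Δ : TrinomialData k) : IsAddTorsionFree Δ.GQ where
  nsmul_right_injective := by
    intro n hn x y hxy
    obtain ⟨x, rfl⟩ := QuotientAddGroup.mk_surjective x
    obtain ⟨y, rfl⟩ := QuotientAddGroup.mk_surjective y
    simp only [← QuotientAddGroup.mk_nsmul] at hxy
    rw [QuotientAddGroup.eq] at hxy ⊢
    apply Δ.Lat_sat n hn
    convert hxy using 1
    rw [smul_add, smul_neg]

instance fgGQ (Δ : TrinomialData k) : AddMonoid.FG Δ.GQ := by
  have : AddGroup.FG (Δ.Vars → ℤ) := by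
    rw [← Module.Finite.iff_addGroup_fg]; infer_instance
  rw [← AddGroup.fg_iff_addMonoid_fg]
  infer_instance

abbrev DD (Δ : TrinomialData k) : Type _ := AddMonoidAlgebra k Δ.GQ

instance domDD (Δ : TrinomialData k) : NoZeroDivisors Δ.DD := inferInstance

def gcl (Δ : TrinomialData k) : (Δ.Vars →₀ ℕ) →+ Δ.GQ where
  toFun γ := QuotientAddGroup.mk (fun x => (γ x : ℤ))
  map_zero' := by
    rw [QuotientAddGroup.eq_zero_iff]
    convert Δ.Lat.zero_mem using 1
    ext; simp
  map_add' γ γ' := by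
    rw [← QuotientAddGroup.mk_add]
    congr 1

lemma gcl_eq (Δ : TrinomialData k) (γ γ' : Δ.Vars →₀ ℕ) : Δ.gcl γ = Δ.gcl γ' ↔
    (fun x => (γ' x : ℤ) - γ x) ∈ Δ.Lat := by
  show (QuotientAddGroup.mk _ : Δ.GQ) = QuotientAddGroup.mk _ ↔ _
  rw [QuotientAddGroup.eq]
  have : (-(fun x => (γ x : ℤ)) + fun x => (γ' x : ℤ)) = (fun x => (γ' x : ℤ) - γ x) := by
    ext x; simp [neg_add_eq_sub]
  rw [this]

lemma gcl_b (Δ : TrinomialData k) (i : Fin (Δ.r + 1)) (h : 2 ≤ (i : ℕ)) :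
    Δ.gcl (Δ.b i) = Δ.gcl (Δ.b 0) := by
  rw [gcl_eq]
  have hi0 : i ≠ 0 := by rintro rfl; simp at h
  have hi1 : i ≠ 1 := by rintro rfl; rw [val_one] at h; omega
  have h10 : (1 : Fin (Δ.r + 1)) ≠ 0 := by
    intro h; have := congrArg Fin.val h; rw [val_one] at this; simp at this
  refine ⟨fun i' => (if i' = 0 then 1 else 0) - (if i' = i then 1 else 0), ?_, ?_, ?_⟩
  · simp [h10, hi1.symm]
  · simp [Finset.sum_sub_distrib]
  · intro i' j
    simp only [b_v, sub_mul]
    push_cast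
    simp

lemma gcl_inj (Δ : TrinomialData k) (γ γ' : Δ.Vars →₀ ℕ) (h : ∀ i, Δ.cc i γ = 0)
    (h' : ∀ i, Δ.cc i γ' = 0) (e : Δ.gcl γ = Δ.gcl γ') : γ = γ' := by
  rw [gcl_eq] at e
  obtain ⟨c, h1, h2, h3⟩ := e
  replace h3 : ∀ i j, (γ' (Δ.v i j) : ℤ) - γ (Δ.v i j) = c i * Δ.β i j := h3
  have hc : ∀ i : Fin (Δ.r + 1), 2 ≤ (i : ℕ) → c i = 0 := by
    intro i hi
    obtain ⟨j, hj⟩ := Δ.cc_zero_exists i γ hi (h i)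
    obtain ⟨j', hj'⟩ := Δ.cc_zero_exists i γ' hi (h' i)
    have e1 := h3 i j
    have e2 := h3 i j'
    have b1 := Δ.β_pos i j
    have b2 := Δ.β_pos i j'
    rcases lt_trichotomy (c i) 0 with hn | hz | hp
    · exfalso
      have : c i * Δ.β i j ≤ -1 * Δ.β i j :=
        mul_le_mul_of_nonneg_right (by omega) (by positivity)
      omega
    · exact hz
    · exfalso
      have : 1 * (Δ.β i j' : ℤ) ≤ c i * Δ.β i j' :=
        mul_le_mul_of_nonneg_right (by omega) (by positivity)
      omega
  have hc' : ∀ i, i ≠ 0 → c i = 0 := by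
    intro i hi
    by_cases h : 2 ≤ (i : ℕ)
    · exact hc i h
    · have : i = 1 := by
        apply Fin.ext
        rw [val_one]
        have : (i : ℕ) ≠ 0 := fun h => hi (Fin.ext h)
        omega
      rw [this, h1]
  have hc0 : c 0 = 0 := by
    rw [← h2]
    symm
    apply Finset.sum_eq_single
    · intro i _ hi; exact hc' i hi
    · simp
  ext x
  obtain ⟨i, j, rfl⟩ := Δ.v_surj x
  have := h3 i j
  have hci : c i = 0 := by
    by_cases h : i = 0
    · rw [h, hc0]
    · exact hc' i h
  rw [hci] at this
  omega

lemma exists_weight (Δ : TrinomialData k) : ∃ (w : Δ.Vars → ℕ) (W : ℕ), (∀ x, 0 < w x) ∧ 0 < W ∧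
    (∀ i, i ≠ 1 → Finsupp.weight w (Δ.b i) = 2 * W) ∧ Finsupp.weight w (Δ.b 1) = W := by
  set K : ℕ := ∏ x : Δ.Vars, Δ.n x.1 * Δ.β x.1 x.2 with hK
  have hpos : ∀ x : Δ.Vars, 0 < Δ.n x.1 * Δ.β x.1 x.2 := fun x =>
    Nat.mul_pos (Δ.one_le_n _) (Δ.β_pos _ _)
  have hKpos : 0 < K := Finset.prod_pos fun x _ => hpos x
  have hdvd : ∀ x : Δ.Vars, Δ.n x.1 * Δ.β x.1 x.2 ∣ K := fun x =>
    Finset.dvd_prod_of_mem (fun x : Δ.Vars => Δ.n x.1 * Δ.β x.1 x.2) (Finset.mem_univ x)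
  choose q hq using hdvd
  have hw : ∀ i, Finsupp.weight (fun x : Δ.Vars => (if x.1 = 1 then 1 else 2) * q x) (Δ.b i) =
      (if i = 1 then 1 else 2) * K := by
    intro i
    rw [b_eq_sum, map_sum]
    simp only [Finsupp.weight_single, smul_eq_mul]
    have hn := Δ.one_le_n i
    have : ∀ j, Δ.β i j * ((if (Δ.v i j).1 = 1 then 1 else 2) * q (Δ.v i j)) =
        (if i = 1 then 1 else 2) * (K / Δ.n i) := by
      intro j
      have h1 : K = Δ.n i * (Δ.β i j * q (Δ.v i j)) := by
        rw [← mul_assoc]; exact hq (Δ.v i j)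
      have h2 : K / Δ.n i = Δ.β i j * q (Δ.v i j) := by
        rw [h1]; exact Nat.mul_div_cancel_left _ hn
      rw [h2]
      change Δ.β i j * ((if i = 1 then 1 else 2) * q (Δ.v i j)) = _
      ring
    rw [Finset.sum_congr rfl (fun j _ => this j)]
    have h2 : Δ.n i * (K / Δ.n i) = K := by
      apply Nat.mul_div_cancel'
      exact (Dvd.intro _ rfl).trans (Dvd.intro _ (hq (Δ.v i 0)).symm)
    simp only [Finset.sum_const, Finset.card_univ, Fintype.card_fin, smul_eq_mul]
    rw [mul_left_comm, h2]
  refine ⟨_, K, ?_, hKpos, ?_, (hw 1).trans (by simp)⟩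
  · intro x
    have : q x ≠ 0 := by
      intro h
      have := hq x
      rw [h] at this
      omega
    positivity
  · intro i hi
    rw [hw]
    simp [hi]

noncomputable def EE (Δ : TrinomialData k) (ε : Δ.Vars → k) (γ : Δ.Vars →₀ ℕ) : k :=
  γ.prod fun x m => ε x ^ m

lemma EE_add (Δ : TrinomialData k) (ε : Δ.Vars → k) (γ γ' : Δ.Vars →₀ ℕ) :
    Δ.EE ε (γ + γ') = Δ.EE ε γ * Δ.EE ε γ' :=
  Finsupp.prod_add_index' (by simp) (by intros; rw [pow_add])

lemma EE_ne_zero (Δ : TrinomialData k) (ε : Δ.Vars → k) (hε : ∀ x, ε x ≠ 0)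
    (γ : Δ.Vars →₀ ℕ) : Δ.EE ε γ ≠ 0 :=
  Finset.prod_ne_zero_iff.2 fun x _ => pow_ne_zero _ (hε x)

lemma EE_b (Δ : TrinomialData k) (ε : Δ.Vars → k) (i : Fin (Δ.r + 1)) :
    Δ.EE ε (Δ.b i) = ∏ j, ε (Δ.v i j) ^ Δ.β i j := by
  have hs : ∀ s : Finset (Fin (Δ.n i)), Δ.EE ε (∑ j ∈ s, Finsupp.single (Δ.v i j) (Δ.β i j)) =
      ∏ j ∈ s, ε (Δ.v i j) ^ Δ.β i j := by
    intro s
    induction s using Finset.induction_on with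
    | empty => simp [EE]
    | insert a s ha ih =>
      rw [Finset.sum_insert ha, Finset.prod_insert ha, EE_add, ih]
      congr 1
      simp [EE]
  rw [b_eq_sum, hs]

lemma exists_sign_aux (Δ : TrinomialData k) (S : Set (Fin (Δ.r + 1)))
    (hS : ∀ i ∈ S, ∃ j, Odd (Δ.β i j)) : ∃ ε : Δ.Vars → k, (∀ x, ε x ≠ 0) ∧
      (∀ i ∈ S, Δ.EE ε (Δ.b i) = -1) ∧ (∀ i ∉ S, Δ.EE ε (Δ.b i) = 1) := by
  classical
  have : ∀ i, ∃ j, i ∈ S → Odd (Δ.β i j) := by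
    intro i
    by_cases h : i ∈ S
    · obtain ⟨j, hj⟩ := hS i h
      exact ⟨j, fun _ => hj⟩
    · exact ⟨0, fun h' => absurd h' h⟩
  choose J hJ using this
  refine ⟨fun x => if x.1 ∈ S ∧ x.2 = J x.1 then -1 else 1, ?_, ?_, ?_⟩
  · intro x
    dsimp only
    split_ifs <;> simp
  · intro i hi
    rw [EE_b]
    change ∏ j, (if i ∈ S ∧ j = J i then (-1 : k) else 1) ^ Δ.β i j = -1
    rw [Finset.prod_eq_single (J i)]
    · simp [hi, (hJ i hi).neg_one_pow]
    · intro j _ hj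
      simp [hj]
    · simp
  · intro i hi
    rw [EE_b]
    change ∏ j, (if i ∈ S ∧ j = J i then (-1 : k) else 1) ^ Δ.β i j = 1
    simp [hi]

lemma exists_sign (Δ : TrinomialData k) : ∃ ε : Δ.Vars → k, (∀ x, ε x ≠ 0) ∧
      (∀ i : Fin (Δ.r + 1), 2 ≤ (i : ℕ) → Δ.EE ε (Δ.b i) = - Δ.EE ε (Δ.b 0)) := by
  by_cases h : ∃ j, Odd (Δ.β 0 j)
  · obtain ⟨ε, h0, h1, h2⟩ := Δ.exists_sign_aux {0} (by rintro i rfl; exact h)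
    refine ⟨ε, h0, ?_⟩
    intro i hi
    rw [h1 0 rfl, h2 i, neg_neg]
    rintro rfl
    simp at hi
  · obtain ⟨ε, h0, h1, h2⟩ := Δ.exists_sign_aux {0}ᶜ (by
      intro i hi
      by_contra h'
      have key : ∀ i, (¬ ∃ j, Odd (Δ.β i j)) → 2 ∣ Finset.univ.gcd (Δ.β i) := by
        intro i hi
        apply Finset.dvd_gcd
        intro j _
        exact (Nat.not_odd_iff_even.1 (fun ho => hi ⟨j, ho⟩)).two_dvd
      exact Nat.not_coprime_of_dvd_of_dvd (by norm_num) (key i h') (key 0 h)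
        (Δ.gcd_coprime i 0 hi))
    refine ⟨ε, h0, ?_⟩
    intro i hi
    rw [h1 i, h2 0 (by simp)]
    rintro rfl
    simp at hi

/-- two polynomials of degree at most `d` with the same coefficient of degree `d` -/
def RR {D : Type*} [CommRing D] (d : ℕ) (p q : Polynomial D) : Prop :=
  p.natDegree ≤ d ∧ q.natDegree ≤ d ∧ p.coeff d = q.coeff d

lemma RR.mul {D : Type*} [CommRing D] {d e : ℕ} {p q p' q' : Polynomial D} (h : RR d p q)
    (h' : RR e p' q') : RR (d + e) (p * p') (q * q') := by
  obtain ⟨h1, h2, h3⟩ := h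
  obtain ⟨h1', h2', h3'⟩ := h'
  refine ⟨Polynomial.natDegree_mul_le_of_le h1 h1', Polynomial.natDegree_mul_le_of_le h2 h2', ?_⟩
  rw [Polynomial.coeff_mul_add_eq_of_natDegree_le h1 h1',
    Polynomial.coeff_mul_add_eq_of_natDegree_le h2 h2', h3, h3']

lemma RR.one {D : Type*} [CommRing D] : RR 0 (1 : Polynomial D) 1 := by
  simp [RR]

lemma RR.pow {D : Type*} [CommRing D] {d : ℕ} {p q : Polynomial D} (h : RR d p q) (n : ℕ) :
    RR (n * d) (p ^ n) (q ^ n) := by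
  induction n with
  | zero => simpa using RR.one
  | succ n ih => rw [pow_succ, pow_succ, add_mul, one_mul]; exact ih.mul h

lemma RR.prod {D ι : Type*} [CommRing D] {d : ι → ℕ} {p q : ι → Polynomial D} (s : Finset ι)
    (h : ∀ i ∈ s, RR (d i) (p i) (q i)) : RR (∑ i ∈ s, d i) (∏ i ∈ s, p i) (∏ i ∈ s, q i) := by
  classical
  induction s using Finset.induction_on with
  | empty => simpa using RR.one
  | insert a s ha ih =>
    rw [Finset.sum_insert ha, Finset.prod_insert ha, Finset.prod_insert ha]
    exact (h a (Finset.mem_insert_self a s)).mul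
      (ih fun i hi => h i (Finset.mem_insert_of_mem hi))

lemma RR.mono {D : Type*} [CommRing D] {d e : ℕ} {p q : Polynomial D} (h : RR d p q) (hde : d ≤ e) :
    RR e p q := by
  rcases hde.eq_or_lt with rfl | hlt
  · exact h
  · refine ⟨h.1.trans hde, h.2.1.trans hde, ?_⟩
    rw [Polynomial.coeff_eq_zero_of_natDegree_lt (h.1.trans_lt hlt),
      Polynomial.coeff_eq_zero_of_natDegree_lt (h.2.1.trans_lt hlt)]

lemma RR.add {D : Type*} [CommRing D] {d : ℕ} {p q p' q' : Polynomial D} (h : RR d p q)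
    (h' : RR d p' q') : RR d (p + p') (q + q') :=
  ⟨Polynomial.natDegree_add_le_of_degree_le h.1 h'.1,
    Polynomial.natDegree_add_le_of_degree_le h.2.1 h'.2.1, by
    rw [Polynomial.coeff_add, Polynomial.coeff_add, h.2.2, h'.2.2]⟩

lemma RR.sum {D ι : Type*} [CommRing D] {d : ℕ} {p q : ι → Polynomial D} (s : Finset ι)
    (h : ∀ i ∈ s, RR d (p i) (q i)) : RR d (∑ i ∈ s, p i) (∑ i ∈ s, q i) := by
  classical
  induction s using Finset.induction_on with
  | empty => simp [RR]
  | insert a s ha ih =>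
    rw [Finset.sum_insert ha, Finset.sum_insert ha]
    exact (h a (Finset.mem_insert_self a s)).add
      (ih fun i hi => h i (Finset.mem_insert_of_mem hi))

noncomputable def phi (Δ : TrinomialData k) (w : Δ.Vars → ℕ) (ε : Δ.Vars → k) :
    MvPolynomial Δ.Vars k →ₐ[k] Polynomial Δ.DD :=
  aeval fun x => Polynomial.monomial (w x)
    (AddMonoidAlgebra.single (Δ.gcl (Finsupp.single x 1)) (ε x))

lemma phi_monomial (Δ : TrinomialData k) (w : Δ.Vars → ℕ) (ε : Δ.Vars → k) (γ : Δ.Vars →₀ ℕ) :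
    Δ.phi w ε (monomial γ 1) = Polynomial.monomial (Finsupp.weight w γ)
      (AddMonoidAlgebra.single (Δ.gcl γ) (Δ.EE ε γ)) := by
  have hadd : ∀ γ γ' : Δ.Vars →₀ ℕ,
    Δ.phi w ε (monomial γ 1) = Polynomial.monomial (Finsupp.weight w γ)
      (AddMonoidAlgebra.single (Δ.gcl γ) (Δ.EE ε γ)) →
    Δ.phi w ε (monomial γ' 1) = Polynomial.monomial (Finsupp.weight w γ')
      (AddMonoidAlgebra.single (Δ.gcl γ') (Δ.EE ε γ')) →
    Δ.phi w ε (monomial (γ + γ') 1) = Polynomial.monomial (Finsupp.weight w (γ + γ'))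
      (AddMonoidAlgebra.single (Δ.gcl (γ + γ')) (Δ.EE ε (γ + γ'))) := by
    intro γ γ' h h'
    have : (monomial (γ + γ') 1 : MvPolynomial Δ.Vars k) = monomial γ 1 * monomial γ' 1 := by
      rw [monomial_mul, one_mul]
    rw [this, map_mul, h, h', Polynomial.monomial_mul_monomial,
      AddMonoidAlgebra.single_mul_single, EE_add, map_add, map_add]
  have hzero : Δ.phi w ε (monomial 0 1) = Polynomial.monomial (Finsupp.weight w (0 : Δ.Vars →₀ ℕ))
      (AddMonoidAlgebra.single (Δ.gcl 0) (Δ.EE ε 0)) := by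
    rw [map_zero, map_zero]
    simp [EE]
    rfl
  induction γ using Finsupp.induction_linear with
  | zero => exact hzero
  | add γ γ' h h' => exact hadd γ γ' h h'
  | single x m =>
    induction m with
    | zero => simpa using hzero
    | succ m ih =>
      rw [Finsupp.single_add]
      apply hadd _ _ ih
      have : (monomial (Finsupp.single x 1) 1 : MvPolynomial Δ.Vars k) = X x := rfl
      rw [this, phi, aeval_X, Finsupp.weight_single]
      simp [EE]

lemma RR_GG (Δ : TrinomialData k) (w : Δ.Vars → ℕ) (ε : Δ.Vars → k) (W : ℕ) (hW : 0 < W)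
    (hw : ∀ i, i ≠ 1 → Finsupp.weight w (Δ.b i) = 2 * W) (hw1 : Finsupp.weight w (Δ.b 1) = W)
    (hε : ∀ i : Fin (Δ.r + 1), 2 ≤ (i : ℕ) → Δ.EE ε (Δ.b i) = - Δ.EE ε (Δ.b 0))
    (i : Fin (Δ.r + 1)) (hi : 2 ≤ (i : ℕ)) :
    RR (Finsupp.weight w (Δ.b i)) (Δ.phi w ε (Δ.mon i)) (Δ.phi w ε (Δ.GG i)) := by
  have hi1 : i ≠ 1 := by rintro rfl; rw [val_one] at hi; omega
  have h01 : (0 : Fin (Δ.r + 1)) ≠ 1 := by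
    intro h; have := congrArg Fin.val h; rw [val_one] at this; simp at this
  have hG : Δ.phi w ε (Δ.GG i) = -(Polynomial.monomial (2 * W)
      (AddMonoidAlgebra.single (Δ.gcl (Δ.b 0)) (Δ.EE ε (Δ.b 0))) + Δ.lam i • Polynomial.monomial W
      (AddMonoidAlgebra.single (Δ.gcl (Δ.b 1)) (Δ.EE ε (Δ.b 1)))) := by
    rw [GG, C_mul', map_neg, map_add, map_smul, mon_eq, mon_eq, phi_monomial, phi_monomial,
      hw 0 h01, hw1]
  rw [hG, mon_eq, phi_monomial, hw i hi1, hε i hi, gcl_b _ _ hi]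
  refine ⟨Polynomial.natDegree_monomial_le _, ?_, ?_⟩
  · rw [Polynomial.natDegree_neg]
    apply Polynomial.natDegree_add_le_of_degree_le
    · exact Polynomial.natDegree_monomial_le _
    · refine (Polynomial.natDegree_smul_le _ _).trans
        ((Polynomial.natDegree_monomial_le _).trans (by omega))
  · rw [Polynomial.coeff_neg, Polynomial.coeff_add, Polynomial.coeff_smul,
      Polynomial.coeff_monomial, Polynomial.coeff_monomial, Polynomial.coeff_monomial,
      if_pos rfl, if_pos rfl, if_neg (by omega), smul_zero, add_zero]
    exact AddMonoidAlgebra.single_neg _ _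

lemma RR_Nm (Δ : TrinomialData k) (w : Δ.Vars → ℕ) (ε : Δ.Vars → k) (W : ℕ) (hW : 0 < W)
    (hw : ∀ i, i ≠ 1 → Finsupp.weight w (Δ.b i) = 2 * W) (hw1 : Finsupp.weight w (Δ.b 1) = W)
    (hε : ∀ i : Fin (Δ.r + 1), 2 ≤ (i : ℕ) → Δ.EE ε (Δ.b i) = - Δ.EE ε (Δ.b 0))
    (γ : Δ.Vars →₀ ℕ) :
    RR (Finsupp.weight w γ) (Δ.phi w ε (monomial γ 1)) (Δ.phi w ε (Δ.Nm γ)) := by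
  have hwt : Finsupp.weight w γ = Finsupp.weight w (Δ.rest γ) +
      ∑ i, Δ.cc i γ * Finsupp.weight w (Δ.b i) := by
    conv_lhs => rw [← Δ.rest_add γ, map_add, cs, map_sum]
    simp only [map_nsmul, smul_eq_mul]
  rw [hwt, monomial_eq, Nm, map_mul, map_mul, map_prod, map_prod]
  apply RR.mul
  · rw [phi_monomial]
    exact ⟨Polynomial.natDegree_monomial_le _, Polynomial.natDegree_monomial_le _, rfl⟩
  · apply RR.prod
    intro i _
    rw [map_pow, map_pow]
    by_cases h : 2 ≤ (i : ℕ)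
    · exact (Δ.RR_GG w ε W hW hw hw1 hε i h).pow _
    · have : Δ.cc i γ = 0 := by simp [cc, h]
      rw [this]
      simpa using RR.one

lemma RR_N (Δ : TrinomialData k) (w : Δ.Vars → ℕ) (ε : Δ.Vars → k) (W : ℕ) (hW : 0 < W)
    (hw : ∀ i, i ≠ 1 → Finsupp.weight w (Δ.b i) = 2 * W) (hw1 : Finsupp.weight w (Δ.b 1) = W)
    (hε : ∀ i : Fin (Δ.r + 1), 2 ≤ (i : ℕ) → Δ.EE ε (Δ.b i) = - Δ.EE ε (Δ.b 0))
    (d : ℕ) (f : MvPolynomial Δ.Vars k) (hf : ∀ γ ∈ f.support, Finsupp.weight w γ ≤ d) :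
    RR d (Δ.phi w ε f) (Δ.phi w ε (Δ.N f)) := by
  rw [f.as_sum, map_sum, map_sum, map_sum]
  apply RR.sum
  intro γ hγ
  have h := (Δ.RR_Nm w ε W hW hw hw1 hε γ).mono (hf γ hγ)
  have e1 : Δ.phi w ε (monomial γ (coeff γ f)) = coeff γ f • Δ.phi w ε (monomial γ 1) := by
    rw [← map_smul, smul_monomial, smul_eq_mul, mul_one]
  rw [N_monomial, map_smul, e1]
  refine ⟨(Polynomial.natDegree_smul_le _ _).trans h.1,
    (Polynomial.natDegree_smul_le _ _).trans h.2.1, ?_⟩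
  rw [Polynomial.coeff_smul, Polynomial.coeff_smul, h.2.2]

lemma coeff_phi_ne_zero (Δ : TrinomialData k) (w : Δ.Vars → ℕ) (ε : Δ.Vars → k)
    (hε : ∀ x, ε x ≠ 0) (U : MvPolynomial Δ.Vars k) (hU : U ∈ Δ.nrm) (γ₀ : Δ.Vars →₀ ℕ)
    (h0 : γ₀ ∈ U.support) : (Δ.phi w ε U).coeff (Finsupp.weight w γ₀) ≠ 0 := by
  classical
  rw [nrm, mem_restrictSupport_iff] at hU
  have e1 : ∀ γ, Δ.phi w ε (monomial γ (coeff γ U)) = coeff γ U • Δ.phi w ε (monomial γ 1) := by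
    intro γ
    rw [← map_smul, smul_monomial, smul_eq_mul, mul_one]
  intro hz
  rw [U.as_sum, map_sum, Polynomial.finsetSum_coeff, ← Finset.add_sum_erase _ _ h0] at hz
  have hz' := congrArg (fun f : Δ.DD => f.coeff (Δ.gcl γ₀)) hz
  simp only [e1, phi_monomial, Polynomial.coeff_smul, Polynomial.coeff_monomial] at hz'
  rw [AddMonoidAlgebra.coeff_add, AddMonoidAlgebra.coeff_sum, Finsupp.add_apply,
    Finsupp.finsetSum_apply, Finset.sum_eq_zero] at hz'
  · simp at hz'
    exact hz'.elim (mem_support_iff.1 h0) (Δ.EE_ne_zero ε hε γ₀)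
  · intro γ hγ
    split_ifs with hwt
    · have hne : Δ.gcl γ ≠ Δ.gcl γ₀ := fun h => Finset.ne_of_mem_erase hγ
        (Δ.gcl_inj γ γ₀ (hU (Finset.mem_of_mem_erase hγ)) (hU h0) h)
      simp [hne]
    · simp

end TrinomialData

/-- For trinomial data `Δ` over a field `k`, `(k[Δ])^* = k^*`: every unit of
`k[Δ]` is the image of a nonzero scalar (and conversely every nonzero scalar is a unit). -/
theorem trinomialData_units (Δ : TrinomialData k) :
    ∀ u : (Δ.Ring)ˣ, ∃ c : k, c ≠ 0 ∧ (u : Δ.Ring) = algebraMap k Δ.Ring c := by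
  intro u
  obtain ⟨w, W, hwpos, hW, hw, hw1⟩ := Δ.exists_weight
  obtain ⟨ε, hε0, hε⟩ := Δ.exists_sign
  obtain ⟨U', hU'⟩ := Ideal.Quotient.mk_surjective (u : Δ.Ring)
  obtain ⟨V', hV'⟩ := Ideal.Quotient.mk_surjective ((u⁻¹ : (Δ.Ring)ˣ) : Δ.Ring)
  obtain ⟨U, hUd⟩ : ∃ U, U = Δ.N U' := ⟨_, rfl⟩
  obtain ⟨V, hVd⟩ : ∃ V, V = Δ.N V' := ⟨_, rfl⟩
  have hUn : U ∈ Δ.nrm := hUd ▸ Δ.N_nrm U'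
  have hVn : V ∈ Δ.nrm := hVd ▸ Δ.N_nrm V'
  have hU : Ideal.Quotient.mk Δ.relIdeal U = u := by rw [hUd, Δ.mk_N, hU']
  have hV : Ideal.Quotient.mk Δ.relIdeal V = ((u⁻¹ : (Δ.Ring)ˣ) : Δ.Ring) := by
    rw [hVd, Δ.mk_N, hV']
  have hUV : Δ.N (U * V) = 1 := by
    have hmem : U * V - 1 ∈ Δ.relIdeal := by
      rw [← Ideal.Quotient.eq, map_mul, hU, hV, map_one, Units.mul_inv]
    have := Δ.N_of_mem _ hmem
    rw [map_sub, Δ.N_one, sub_eq_zero] at this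
    exact this
  have hU0 : U ≠ 0 := by rintro h; rw [h, zero_mul, map_zero] at hUV; exact zero_ne_one hUV
  have hV0 : V ≠ 0 := by rintro h; rw [h, mul_zero, map_zero] at hUV; exact zero_ne_one hUV
  obtain ⟨γ, hγ, hγm⟩ := Finset.exists_max_image U.support (Finsupp.weight w)
    (support_nonempty.2 hU0)
  obtain ⟨δ, hδ, hδm⟩ := Finset.exists_max_image V.support (Finsupp.weight w)
    (support_nonempty.2 hV0)
  have hUR := Δ.RR_N w ε W hW hw hw1 hε _ U hγm
  have hVR := Δ.RR_N w ε W hW hw hw1 hε _ V hδm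
  have hR := Δ.RR_N w ε W hW hw hw1 hε (Finsupp.weight w γ + Finsupp.weight w δ) (U * V) (by
    classical
    intro η hη
    obtain ⟨a, ha, b, hb, rfl⟩ := Finset.mem_add.1 (support_mul U V hη)
    rw [map_add]
    exact add_le_add (hγm a ha) (hδm b hb))
  have hc := hR.2.2
  rw [hUV, map_one, map_mul, Polynomial.coeff_mul_add_eq_of_natDegree_le hUR.1 hVR.1] at hc
  have hne : (Δ.phi w ε U).coeff (Finsupp.weight w γ) * (Δ.phi w ε V).coeff (Finsupp.weight w δ)
      ≠ 0 := mul_ne_zero (Δ.coeff_phi_ne_zero w ε hε0 U hUn γ hγ)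
        (Δ.coeff_phi_ne_zero w ε hε0 V hVn δ hδ)
  rw [hc, Polynomial.coeff_one] at hne
  have hz : Finsupp.weight w γ + Finsupp.weight w δ = 0 := by
    by_contra h
    exact hne (if_neg h)
  have hγ0 : Finsupp.weight w γ = 0 := by omega
  have hsupp : ∀ η ∈ U.support, η = 0 := by
    intro η hη
    have h1 : Finsupp.weight w η = 0 := by
      have := hγm η hη
      omega
    by_contra hn
    obtain ⟨x, hx⟩ := Finsupp.ne_iff.1 hn
    have := Finsupp.le_weight w (s := x) (hwpos x).ne' η
    rw [h1] at this
    simp at hx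
    omega
  have hUC : U = C (coeff 0 U) := by
    ext η
    rw [coeff_C]
    split_ifs with h
    · rw [← h]
    · by_contra hne'
      exact h (hsupp η (mem_support_iff.2 hne')).symm
  refine ⟨coeff 0 U, ?_, ?_⟩
  · intro h
    rw [h, C_0] at hUC
    exact hU0 hUC
  · rw [← hU]
    conv_lhs => rw [hUC]
    rfl
end

section
/- Let k be a field and let B = k[Δ] for reduced trinomial data Δ using a partition of the integer n ≥ 2. Let m ⊂ B be the maximal ideal generated by the images of all the variables t_{ij} (the Δ-origin). Then dim_k(m/m²) = n; consequently, the minimum number of generators of B as a k-algebra is n. -/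
open MvPolynomial

variable {k : Type*} [Field k]

namespace TrinAux

noncomputable instance (Δ : TrinomialData k) : Fintype Δ.Vars :=
  inferInstanceAs (Fintype (Σ i : Fin (Δ.r + 1), Fin (Δ.n i)))

noncomputable instance (Δ : TrinomialData k) : DecidableEq Δ.Vars := Classical.decEq _

theorem card_vars (Δ : TrinomialData k) : Fintype.card Δ.Vars = ∑ i, Δ.n i := by
  have : Fintype.card Δ.Vars = Fintype.card (Σ i : Fin (Δ.r + 1), Fin (Δ.n i)) := rfl
  rw [this]; simp

abbrev T (Δ : TrinomialData k) := TrivSqZeroExt k (Δ.Vars → k)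

noncomputable def phi0 (Δ : TrinomialData k) : MvPolynomial Δ.Vars k →ₐ[k] T Δ :=
  aeval (fun v => TrivSqZeroExt.inr (Pi.single v 1))

theorem inr_mul_zero (Δ : TrinomialData k) (x y : T Δ) (hx : x.fst = 0) (hy : y.fst = 0) :
    x * y = 0 := by
  ext <;> simp [hx, hy]

theorem prod_pow_zero {ι A : Type*} [CommRing A] (y : ι → A) (hy : ∀ i j, y i * y j = 0)
    (e : ι → ℕ) (i₀ : ι) (s : Finset ι) (h : 2 ≤ ∑ j ∈ s, e j) : ∏ j ∈ s, y j ^ e j = 0 := by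
  classical
  have key : ∀ s : Finset ι, ∃ p : ℕ → ι, ∏ j ∈ s, y j ^ e j
        = ∏ l ∈ Finset.range (∑ j ∈ s, e j), y (p l) := by
    intro s
    induction s using Finset.induction_on with
    | empty => exact ⟨fun _ => i₀, by simp⟩
    | insert a s ha ih =>
      obtain ⟨p, hp⟩ := ih
      refine ⟨fun l => if l < e a then a else p (l - e a), ?_⟩
      rw [Finset.prod_insert ha, Finset.sum_insert ha, Finset.prod_range_add, hp]
      congr 1
      · rw [Finset.prod_congr rfl (g := fun _ => y a)]
        · simp
        · intro l hl
          simp [Finset.mem_range.1 hl]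
      · simp
  obtain ⟨p, hp⟩ := key s
  obtain ⟨m, hm⟩ := Nat.exists_eq_add_of_le' h
  rw [hp, hm, Finset.prod_range_succ, Finset.prod_range_succ, mul_assoc, hy, mul_zero]

theorem phi0_mon (Δ : TrinomialData k) (i : Fin (Δ.r + 1)) (h : 2 ≤ ∑ j, Δ.β i j) :
    phi0 Δ (Δ.mon i) = 0 := by
  let w : Fin (Δ.n i) → Δ.Vars := fun j => ⟨i, j⟩
  have h1 : Δ.mon i = ∏ j, (X (w j)) ^ Δ.β i j := rfl
  rw [h1, map_prod]
  simp only [map_pow]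
  refine prod_pow_zero (fun j => phi0 Δ (X (w j))) ?_ _ ⟨0, Δ.one_le_n i⟩ _ h
  intro j l
  exact inr_mul_zero Δ _ _ (by simp [phi0]) (by simp [phi0])

noncomputable def phi (Δ : TrinomialData k) (hred : Δ.Reduced) : Δ.Ring →ₐ[k] T Δ :=
  Ideal.Quotient.liftₐ Δ.relIdeal (phi0 Δ) (by
    intro a ha
    have : Δ.relIdeal ≤ RingHom.ker (phi0 Δ) := by
      refine Ideal.span_le.2 ?_
      rintro p ⟨i, hi, rfl⟩
      rcases hred with h | h
      · have := i.2; omega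
      · simp [RingHom.mem_ker, phi0_mon Δ _ (h.2 _)]
    exact this ha)

noncomputable abbrev x (Δ : TrinomialData k) (v : Δ.Vars) : Δ.Ring := Ideal.Quotient.mk Δ.relIdeal (X v)

theorem phi_x (Δ : TrinomialData k) (hred : Δ.Reduced) (v : Δ.Vars) :
    phi Δ hred (x Δ v) = TrivSqZeroExt.inr (Pi.single v 1) := by
  have : phi Δ hred (x Δ v) = phi0 Δ (X v) := rfl
  rw [this]; simp [phi0]

theorem adjoin_x (Δ : TrinomialData k) : Algebra.adjoin k (Set.range (x Δ)) = ⊤ := by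
  have : Set.range (x Δ) = (Ideal.Quotient.mkₐ k Δ.relIdeal) '' (Set.range X) := by
    rw [← Set.range_comp]; rfl
  rw [this, ← AlgHom.map_adjoin, MvPolynomial.adjoin_range_X, Algebra.map_top,
    AlgHom.range_eq_top]
  exact Ideal.Quotient.mkₐ_surjective _ _

theorem x_inj (Δ : TrinomialData k) (hred : Δ.Reduced) : Function.Injective (x Δ) := by
  intro v w h
  have h2 := congrArg (phi Δ hred) h
  rw [phi_x, phi_x] at h2
  have h3 := congrFun (TrivSqZeroExt.inr_injective h2) v
  by_contra hne
  simp [Pi.single_apply, hne] at h3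

/-- elements whose linear part lies in `W` -/
def sub (Δ : TrinomialData k) (W : Submodule k (Δ.Vars → k)) : Subalgebra k (T Δ) where
  carrier := {y | y.snd ∈ W}
  mul_mem' := by
    intro a b ha hb
    simp only [Set.mem_ofPred_eq, TrivSqZeroExt.snd_mul] at *
    exact W.add_mem (W.smul_mem _ hb) (by simpa using W.smul_mem _ ha)
  add_mem' := by
    intro a b ha hb
    exact W.add_mem ha hb
  algebraMap_mem' := by
    intro r
    simp [TrivSqZeroExt.algebraMap_eq_inl]

theorem lower (Δ : TrinomialData k) (hred : Δ.Reduced) (s : Finset Δ.Ring)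
    (hs : Algebra.adjoin k (s : Set Δ.Ring) = ⊤) : ∑ i, Δ.n i ≤ s.card := by
  classical
  let f : Δ.Ring → (Δ.Vars → k) := fun y => (phi Δ hred y).snd
  have h1 : ∀ y, f y ∈ Submodule.span k ((s.image f : Finset _) : Set (Δ.Vars → k)) := by
    intro y
    have : Algebra.adjoin k (s : Set Δ.Ring) ≤
        (sub Δ (Submodule.span k ((s.image f : Finset _) : Set _))).comap (phi Δ hred) := by
      refine Algebra.adjoin_le ?_
      intro z hz
      exact Submodule.subset_span (Finset.mem_coe.2 (Finset.mem_image_of_mem f hz))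
    rw [hs] at this
    exact this (Algebra.mem_top (x := y))
  have h2 : Submodule.span k ((s.image f : Finset _) : Set (Δ.Vars → k)) = ⊤ := by
    rw [eq_top_iff, ← (Pi.basisFun k Δ.Vars).span_eq, Submodule.span_le]
    rintro _ ⟨v, rfl⟩
    have := h1 (x Δ v)
    simpa [f, phi_x] using this
  have h3 := finrank_span_finset_le_card (R := k) (s.image f)
  rw [Set.finrank, h2, finrank_top, Module.finrank_fintype_fun_eq_card, card_vars] at h3
  exact h3.trans Finset.card_image_le

noncomputable abbrev m (Δ : TrinomialData k) : Ideal Δ.Ring :=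
  Ideal.span (Set.range fun v : Δ.Vars => Ideal.Quotient.mk Δ.relIdeal (X v))

theorem x_mem (Δ : TrinomialData k) (v : Δ.Vars) : x Δ v ∈ m Δ :=
  Ideal.subset_span ⟨v, rfl⟩

theorem fst_m (Δ : TrinomialData k) (hred : Δ.Reduced) (y : Δ.Ring) (hy : y ∈ m Δ) :
    (phi Δ hred y).fst = 0 := by
  have : m Δ ≤ RingHom.ker ((TrivSqZeroExt.fstHom k k (Δ.Vars → k)).comp (phi Δ hred)) := by
    refine Ideal.span_le.2 ?_
    rintro _ ⟨v, rfl⟩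
    have := phi_x Δ hred v
    simp only [SetLike.mem_coe, RingHom.mem_ker, AlgHom.comp_apply]
    rw [this]; simp
  exact this hy

theorem phi_sq (Δ : TrinomialData k) (hred : Δ.Reduced) (y : Δ.Ring) (hy : y ∈ m Δ ^ 2) :
    phi Δ hred y = 0 := by
  have : m Δ ^ 2 ≤ RingHom.ker (phi Δ hred) := by
    rw [pow_two, Ideal.mul_le]
    intro a ha b hb
    rw [RingHom.mem_ker, map_mul]
    exact inr_mul_zero Δ _ _ (fst_m Δ hred a ha) (fst_m Δ hred b hb)
  exact this hy

theorem sub_mem_m (Δ : TrinomialData k) (b : Δ.Ring) :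
    ∃ c : k, b - algebraMap k Δ.Ring c ∈ m Δ := by
  have hb : b ∈ Algebra.adjoin k (Set.range (x Δ)) := by rw [adjoin_x]; trivial
  induction hb using Algebra.adjoin_induction with
  | mem y hy =>
    obtain ⟨v, rfl⟩ := hy
    exact ⟨0, by simpa using x_mem Δ v⟩
  | algebraMap r => exact ⟨r, by simp⟩
  | add y z _ _ h1 h2 =>
    obtain ⟨c, hc⟩ := h1
    obtain ⟨d, hd⟩ := h2
    refine ⟨c + d, ?_⟩
    have := (m Δ).add_mem hc hd
    rw [map_add]
    convert this using 1
    ring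
  | mul y z _ _ h1 h2 =>
    obtain ⟨c, hc⟩ := h1
    obtain ⟨d, hd⟩ := h2
    refine ⟨c * d, ?_⟩
    have := (m Δ).add_mem ((m Δ).mul_mem_left z hc) ((m Δ).mul_mem_left (algebraMap k _ c) hd)
    rw [map_mul]
    convert this using 1
    ring

noncomputable def c (Δ : TrinomialData k) (v : Δ.Vars) : (m Δ).Cotangent :=
  (m Δ).toCotangent ⟨x Δ v, x_mem Δ v⟩

theorem c_indep (Δ : TrinomialData k) (hred : Δ.Reduced) : LinearIndependent k (c Δ) := by
  rw [Fintype.linearIndependent_iff]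
  intro g hg v
  have h1 : (m Δ).toCotangent (∑ v, algebraMap k Δ.Ring (g v) • (⟨x Δ v, x_mem Δ v⟩ : m Δ)) = 0 := by
    rw [map_sum, ← hg]
    refine Finset.sum_congr rfl fun v _ => ?_
    rw [map_smul]
    exact algebraMap_smul Δ.Ring (g v) (c Δ v)
  rw [Ideal.toCotangent_eq_zero] at h1
  have h2 := phi_sq Δ hred _ h1
  have h3 := congrFun (congrArg TrivSqZeroExt.snd h2) v
  simpa [phi_x, Finset.sum_apply, TrivSqZeroExt.snd_sum, TrivSqZeroExt.algebraMap_eq_inl, Pi.single_apply] using h3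

theorem c_span (Δ : TrinomialData k) : ⊤ ≤ Submodule.span k (Set.range (c Δ)) := by
  intro y _
  obtain ⟨⟨z, hz⟩, rfl⟩ := (m Δ).toCotangent_surjective y
  have hz' := hz
  induction hz' using Submodule.span_induction with
  | mem z h =>
    obtain ⟨v, rfl⟩ := h
    exact Submodule.subset_span ⟨v, rfl⟩
  | zero =>
    have : (⟨0, hz⟩ : m Δ) = 0 := rfl
    rw [this, map_zero]; exact Submodule.zero_mem _
  | add a b ha hb h1 h2 =>
    have : (⟨a + b, hz⟩ : m Δ) = ⟨a, ha⟩ + ⟨b, hb⟩ := rfl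
    rw [this, map_add]
    exact Submodule.add_mem _ (h1 ha trivial) (h2 hb trivial)
  | smul b a ha h1 =>
    obtain ⟨d, hd⟩ := sub_mem_m Δ b
    have : (m Δ).toCotangent ⟨b • a, hz⟩ = d • (m Δ).toCotangent ⟨a, ha⟩ := by
      rw [← algebraMap_smul Δ.Ring d, ← map_smul, Ideal.toCotangent_eq]
      have h : (b - algebraMap k Δ.Ring d) * a ∈ m Δ ^ 2 := by
        rw [pow_two]; exact Ideal.mul_mem_mul hd ha
      convert h using 1
      rw [sub_mul]; rfl
    rw [this]
    exact Submodule.smul_mem _ _ (h1 ha trivial)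

end TrinAux

/-- For reduced trinomial data `Δ` with partition of `n ≥ 2`, the tangent space
of `Spec k[Δ]` at the `Δ`-origin has dimension `n`, i.e. `dim_k 𝔪/𝔪² = n` where `𝔪` is the
ideal generated by the images of all the variables `t_{ij}`; consequently the minimum number of
generators of `k[Δ]` as a `k`-algebra is `n`. -/
theorem trinomialData_tangent_dim (Δ : TrinomialData k) (hred : Δ.Reduced) :
    Module.finrank k
        (Ideal.span (Set.range fun v : Δ.Vars =>
          Ideal.Quotient.mk Δ.relIdeal (X v)) : Ideal Δ.Ring).Cotangent = ∑ i, Δ.n i ∧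
      (∃ s : Finset Δ.Ring, s.card = ∑ i, Δ.n i ∧
        Algebra.adjoin k (s : Set Δ.Ring) = ⊤) ∧
      ∀ s : Finset Δ.Ring, Algebra.adjoin k (s : Set Δ.Ring) = ⊤ →
        ∑ i, Δ.n i ≤ s.card := by
  classical
  refine ⟨?_, ⟨Finset.univ.image (TrinAux.x Δ), ?_, ?_⟩, TrinAux.lower Δ hred⟩
  · rw [← TrinAux.card_vars]
    exact Module.finrank_eq_card_basis
      (Module.Basis.mk (TrinAux.c_indep Δ hred) (TrinAux.c_span Δ))
  · rw [Finset.card_image_of_injective _ (TrinAux.x_inj Δ hred), Finset.card_univ,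
      TrinAux.card_vars]
  · simpa using TrinAux.adjoin_x Δ
end
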